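/- arXiv:math/9712238 — 5 statements merged into one kernel-verified Lean document; each statement's English description precedes it below -/
import Mathlib

section
/- For every prime power q, every integer n ≥ 1 and every integer k with 1 ≤ k ≤ n, the number of unipotent elements of U(n,q) whose fixed space has dimension k equals (|U(n,q)|/|U(k,q)|) · [∏_{r=k}^{n−1} (1 − (−q)^{−r})] / ( q^{n−k} · ∏_{r=1}^{n−k} (1 − (−q)^{−r}) ), as an identity of rational numbers. -/
/-!
The map `x ↦ x ^ q` is an involution of `F`, so `A ∈ U(n,q)` reads `A * Aᴴ = 1`.  The count rests on
three ideas.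

*Cayley transform* (`cayley_key`, `cayley_card`).  Choose `α ≠ 0` with `star α = 1 - α` and `δ ≠ 0`
with `star δ = -δ`; this works in every characteristic.  For `A = 1 + ν` unipotent, define `Y` by
`1 - α Y = (1 + α ν)⁻¹`.  Then `Y` is a polynomial in `ν` with the same kernel, and `A` is unitary
exactly when `δ Y` is Hermitian.  Hence the number sought is `nilCount n k`, the number of nilpotent
Hermitian `n × n` matrices of nullity `k`.

*Pairs of forms* (`pairs_eq`).  Let `pairs n k` count the pairs `(H, P)` of Hermitian matrices with
`H` nonsingular, `P` of nullity `k` and `P * H` nilpotent.  All nonsingular Hermitian forms over a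
finite field are congruent to the standard one, so `pairs n k = hc n * nilCount n k`, where `hc n`
is the number of nonsingular Hermitian matrices.

*A recursion* (`pairs_rec`).  Counting the forms `P` of nullity `k` together with a basis of the
kernel of `P` (`double_count`) replaces `P` by `fromBlocks b 0 0 0` with `b` nonsingular of size
`r = n - k`.  Then `P * H` is nilpotent exactly when `H₁₁ * b` is, where `H₁₁` is the upper left
block of `H`.  So `pairs (r + k) k` is a sum over `j` of `pairs r j` times the number of nonsingular
Hermitian extensions by `k` rows and columns of an `r × r` Hermitian matrix of nullity `j`.  By
Schur complements this number depends only on `r`, `j` and `k`, and is explicit in terms of `hc`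
(`nExt_eq`).  Dropping the nilpotency condition gives a recursion for `hc` (`hc_rec`).

The closed forms `hc_closed` and `pairs_closed` follow by induction.  In terms of
`poch x m = ∏_{i=1}^m (1 - x^i)` with `x = -1/q`, the induction step for the pairs is the
`q`-Vandermonde convolution (`vandermonde`).
-/

open Matrix

/-- The order of the finite unitary group `U(m,q)` as a rational number:
`q^(m(m-1)/2) ∏_{j=1}^m (q^j - (-1)^j)`. -/
def uOrderQ (q m : ℕ) : ℚ :=
  (q : ℚ) ^ (m * (m - 1) / 2) * ∏ j ∈ Finset.range m, ((q : ℚ) ^ (j + 1) - (-1 : ℚ) ^ (j + 1))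

namespace HermCount

set_option linter.unusedSectionVars false
set_option linter.style.haveILetI false

/-! ### Nullity, nonsingularity and congruence -/

section A
variable {F : Type} [Field F]
variable {ι ι' κ ρ : Type} [Fintype ι] [Fintype ι'] [Fintype κ] [Fintype ρ]
  [DecidableEq ι] [DecidableEq ι'] [DecidableEq κ] [DecidableEq ρ]

/-- The nullity of a square matrix. -/
noncomputable def nul (A : Matrix ι ι F) : ℕ := Module.finrank F (LinearMap.ker A.mulVecLin)

/-- Nonsingularity of a square matrix, phrased as triviality of the kernel. -/
def NS (A : Matrix ι ι F) : Prop := ∀ v, A *ᵥ v = 0 → v = 0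

lemma nul_eq_zero (A : Matrix ι ι F) : nul A = 0 ↔ NS A := by
  unfold nul NS
  rw [Submodule.finrank_eq_zero, LinearMap.ker_eq_bot']
  rfl

lemma NS_iff_isUnit (A : Matrix ι ι F) : NS A ↔ IsUnit A := by
  rw [← Matrix.mulVec_injective_iff_isUnit]
  exact (injective_iff_map_eq_zero A.mulVecLin).symm

lemma NS_inv {A : Matrix ι ι F} (h : NS A) : A * A⁻¹ = 1 ∧ A⁻¹ * A = 1 := by
  rw [NS_iff_isUnit, Matrix.isUnit_iff_isUnit_det] at h
  exact ⟨Matrix.mul_nonsing_inv _ h, Matrix.nonsing_inv_mul _ h⟩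

lemma nil_comm {A : Matrix ι ι' F} {B : Matrix ι' ι F} (h : IsNilpotent (A * B)) :
    IsNilpotent (B * A) := by
  obtain ⟨n, hn⟩ := h
  refine ⟨n + 1, ?_⟩
  have : ∀ m, (B * A) ^ (m + 1) = B * (A * B) ^ m * A := by
    intro m
    induction m with
    | zero => simp
    | succ m ih => rw [pow_succ, ih, pow_succ]; simp only [Matrix.mul_assoc]
  rw [this, hn]; simp

lemma nil_comm_iff {A : Matrix ι ι' F} {B : Matrix ι' ι F} :
    IsNilpotent (A * B) ↔ IsNilpotent (B * A) := ⟨nil_comm, nil_comm⟩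

variable [StarRing F]

lemma congr_star {C : Matrix ι ι' F} {b : Matrix ι ι F} (h : bᴴ = b) :
    (Cᴴ * b * C)ᴴ = Cᴴ * b * C := by
  simp [Matrix.mul_assoc, h]

lemma congr_congr {C : Matrix ι ι' F} {D : Matrix ι' ι F} (hCD : C * D = 1) (b : Matrix ι ι F) :
    Dᴴ * (Cᴴ * b * C) * D = b := by
  have h2 : Dᴴ * Cᴴ = 1 := by rw [← conjTranspose_mul, hCD, conjTranspose_one]
  calc _ = (Dᴴ * Cᴴ) * b * (C * D) := by simp only [Matrix.mul_assoc]
    _ = b := by rw [h2, hCD]; simp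

lemma nul_congr {C : Matrix ι ι' F} {D : Matrix ι' ι F} (hCD : C * D = 1) (hDC : D * C = 1)
    (b : Matrix ι ι F) : nul (Cᴴ * b * C) = nul b := by
  unfold nul
  have e : (LinearMap.ker (Cᴴ * b * C).mulVecLin) =
      (LinearMap.ker b.mulVecLin).comap (Matrix.toLin'OfInv hDC hCD).symm.symm.toLinearMap := by
    ext v
    simp only [LinearMap.mem_ker, Submodule.mem_comap, mulVecLin_apply]
    have : (Matrix.toLin'OfInv hDC hCD).symm.symm.toLinearMap v = C *ᵥ v := rfl
    rw [this]
    constructor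
    · intro h
      have h2 : Dᴴ *ᵥ ((Cᴴ * b * C) *ᵥ v) = 0 := by rw [h]; simp
      have h3 : Dᴴ * Cᴴ = 1 := by rw [← conjTranspose_mul, hCD, conjTranspose_one]
      rw [mulVec_mulVec, ← Matrix.mul_assoc, ← Matrix.mul_assoc, h3, Matrix.one_mul] at h2
      rw [mulVec_mulVec, h2]
    · intro h
      rw [Matrix.mul_assoc, ← mulVec_mulVec, ← mulVec_mulVec, h]; simp
  rw [e, ← Submodule.map_equiv_eq_comap_symm]
  exact LinearEquiv.finrank_map_eq _ _

lemma NS_congr {C : Matrix ι ι' F} {D : Matrix ι' ι F} (hCD : C * D = 1) (hDC : D * C = 1)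
    (b : Matrix ι ι F) : NS (Cᴴ * b * C) ↔ NS b := by
  rw [← nul_eq_zero, ← nul_eq_zero, nul_congr hCD hDC]

/-- Simultaneous base change of a form `b` and a form `H` on the dual space leaves the nilpotency of
the endomorphism `b * H` unchanged. -/
lemma nil_congr {C : Matrix ι ι' F} {D : Matrix ι' ι F} (hCD : C * D = 1)
    (b H : Matrix ι ι F) :
    IsNilpotent ((Cᴴ * b * C) * (D * H * Dᴴ)) ↔ IsNilpotent (b * H) := by
  have h2 : Dᴴ * Cᴴ = 1 := by rw [← conjTranspose_mul, hCD, conjTranspose_one]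
  have : (Cᴴ * b * C) * (D * H * Dᴴ) = Cᴴ * (b * H * Dᴴ) := by
    calc _ = Cᴴ * b * (C * D) * H * Dᴴ := by simp only [Matrix.mul_assoc]
      _ = _ := by rw [hCD]; simp only [Matrix.mul_assoc, Matrix.one_mul]
  rw [this, nil_comm_iff, Matrix.mul_assoc, h2, Matrix.mul_one]

/-- A linearly independent family of columns completes to an invertible matrix. -/
lemma exists_completion (s : κ → ι → F) (hs : LinearIndependent F s)
    (hc : Fintype.card ι = Fintype.card ρ + Fintype.card κ) :
    ∃ (C : Matrix ι (ρ ⊕ κ) F) (D : Matrix (ρ ⊕ κ) ι F), C * D = 1 ∧ D * C = 1 ∧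
      ∀ i a, C a (Sum.inr i) = s i a := by
  let B := Module.Basis.sumExtend hs
  haveI : Fintype (Module.Basis.sumExtendIndex hs) :=
    @Fintype.sumRight κ _ (FiniteDimensional.fintypeBasisIndex B)
  have hcard : Fintype.card (Module.Basis.sumExtendIndex hs) = Fintype.card ρ := by
    have := Module.finrank_eq_card_basis B
    rw [Module.finrank_fintype_fun_eq_card, Fintype.card_sum] at this
    omega
  let B' : Module.Basis (ρ ⊕ κ) F (ι → F) :=
    B.reindex ((Equiv.sumComm _ _).trans
      (Equiv.sumCongr (Fintype.equivOfCardEq hcard) (Equiv.refl κ)))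
  refine ⟨(Pi.basisFun F ι).toMatrix B', B'.toMatrix (Pi.basisFun F ι),
    Module.Basis.toMatrix_mul_toMatrix_flip _ _, Module.Basis.toMatrix_mul_toMatrix_flip _ _, ?_⟩
  intro i a
  have : B' (Sum.inr i) = s i := by
    simp [B', B, Module.Basis.sumExtend]
    rfl
  simp [Module.Basis.toMatrix_apply, this]

end A

/-! ### Forms of given nullity and bases of their kernels -/

section B
variable {F : Type} [Field F]
variable {ι ι' κ ρ : Type} [Fintype ι] [Fintype ι'] [Fintype κ] [Fintype ρ]
  [DecidableEq ι] [DecidableEq ι'] [DecidableEq κ] [DecidableEq ρ]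

lemma nul_diag (b : Matrix ρ ρ F) :
    nul (fromBlocks b 0 0 (0 : Matrix κ κ F)) = nul b + Fintype.card κ := by
  unfold nul
  have key : ∀ v : ρ ⊕ κ → F, fromBlocks b 0 0 (0 : Matrix κ κ F) *ᵥ v = 0 ↔
      b *ᵥ (v ∘ Sum.inl) = 0 := by
    intro v
    rw [fromBlocks_mulVec, ← Sum.elim_zero_zero, Sum.elim_eq_iff]
    simp
  let e : LinearMap.ker (fromBlocks b 0 0 (0 : Matrix κ κ F)).mulVecLin ≃ₗ[F]
      LinearMap.ker b.mulVecLin × (κ → F) :=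
    { toFun := fun v => (⟨v.1 ∘ Sum.inl, (key v.1).1 v.2⟩, v.1 ∘ Sum.inr)
      invFun := fun p => ⟨Sum.elim p.1.1 p.2, (key _).2 (by
        rw [Sum.elim_comp_inl]; exact p.1.2)⟩
      map_add' := fun _ _ => rfl
      map_smul' := fun _ _ => rfl
      left_inv := fun v => by ext x; cases x <;> rfl
      right_inv := fun p => rfl }
  rw [e.finrank_eq, Module.finrank_prod, Module.finrank_fintype_fun_eq_card]

/-- The number of linearly independent `k`-tuples in an `a`-dimensional space over a field
with `Q` elements.  For `k ≤ a` no factor truncates; for `k > a` the factor `i = a` is zero, as it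
should be. -/
def inj (Q a k : ℕ) : ℕ := ∏ i : Fin k, (Q ^ a - Q ^ i.val)

lemma card_indep_ker [Fintype F] (b : Matrix ι ι F) (k : ℕ) (hk : k ≤ nul b) :
    Nat.card {s : Fin k → ι → F // LinearIndependent F s ∧ ∀ i, b *ᵥ s i = 0} =
      inj (Fintype.card F) (nul b) k := by
  unfold inj nul
  rw [← card_linearIndependent (K := F) (V := LinearMap.ker b.mulVecLin) hk]
  refine Nat.card_congr ⟨fun s => ⟨fun i => ⟨s.1 i, s.2.2 i⟩, ?_⟩,
    fun s => ⟨fun i => (s.1 i).1, ?_, fun i => (s.1 i).2⟩, fun s => rfl, fun s => rfl⟩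
  · exact LinearIndependent.of_comp (LinearMap.ker b.mulVecLin).subtype s.2.1
  · exact s.2.map' (LinearMap.ker b.mulVecLin).subtype (Submodule.ker_subtype _)

lemma card_indep [Fintype F] (a k : ℕ) :
    Nat.card {s : Fin k → Fin a → F // LinearIndependent F s} =
      inj (Fintype.card F) a k := by
  by_cases hk : k ≤ a
  · unfold inj
    have := card_linearIndependent (K := F) (V := Fin a → F) (k := k) (by simpa using hk)
    simpa using this
  · push Not at hk
    have h1 : inj (Fintype.card F) a k = 0 := by
      unfold inj
      exact Finset.prod_eq_zero (Finset.mem_univ (⟨a, hk⟩ : Fin k)) (by simp)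
    rw [h1, Nat.card_eq_zero]
    left
    constructor
    rintro ⟨s, hs⟩
    have := hs.fintype_card_le_finrank
    simp at this
    omega

variable [StarRing F]

/-- A Hermitian form of nullity `|κ|` becomes block diagonal with a nonsingular block and a zero
block in a basis that ends with a basis of its kernel. -/
lemma diag_form {P : Matrix ι ι F} (hP : Pᴴ = P) (hn : nul P = Fintype.card κ)
    {s : κ → ι → F} (hs : ∀ i, P *ᵥ s i = 0)
    {C : Matrix ι (ρ ⊕ κ) F} {D : Matrix (ρ ⊕ κ) ι F} (hCD : C * D = 1) (hDC : D * C = 1)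
    (hC : ∀ i a, C a (Sum.inr i) = s i a) :
    fromBlocks (Cᴴ * P * C).toBlocks₁₁ 0 0 0 = Cᴴ * P * C ∧
    ((Cᴴ * P * C).toBlocks₁₁)ᴴ = (Cᴴ * P * C).toBlocks₁₁ ∧ NS (Cᴴ * P * C).toBlocks₁₁ := by
  have hH := congr_star (C := C) hP
  have hcol : ∀ x i, (Cᴴ * P * C) x (Sum.inr i) = 0 := by
    intro x i
    have h1 : (P * C) = fun a y => (P *ᵥ fun a => C a y) a := rfl
    rw [Matrix.mul_assoc, Matrix.mul_apply]
    refine Finset.sum_eq_zero fun a _ => ?_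
    rw [h1]
    have : (fun a => C a (Sum.inr i)) = s i := funext (hC i)
    simp only [this, hs]
    simp
  have hrow : ∀ x i, (Cᴴ * P * C) (Sum.inr i) x = 0 := by
    intro x i
    rw [← hH, conjTranspose_apply, hcol, star_zero]
  have h1 : fromBlocks (Cᴴ * P * C).toBlocks₁₁ 0 0 0 = Cᴴ * P * C := by
    ext x y
    cases x <;> cases y <;> simp [hcol, hrow, toBlocks₁₁]
  refine ⟨h1, ?_, ?_⟩
  · ext x y
    have := congrFun (congrFun hH (Sum.inl x)) (Sum.inl y)
    simpa [toBlocks₁₁] using this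
  · rw [← nul_eq_zero]
    have := nul_congr hCD hDC P
    rw [← h1, nul_diag, hn] at this
    omega

lemma diag_ker {C : Matrix ι (ρ ⊕ κ) F} {D : Matrix (ρ ⊕ κ) ι F} (hDC : D * C = 1)
    {s : κ → ι → F} (hC : ∀ i a, C a (Sum.inr i) = s i a) (b0 : Matrix ρ ρ F) (i : κ) :
    (Dᴴ * fromBlocks b0 0 0 (0 : Matrix κ κ F) * D) *ᵥ s i = 0 := by
  have h1 : s i = C *ᵥ Pi.single (Sum.inr i) 1 := by
    ext a
    simp [hC]
  rw [h1, mulVec_mulVec, Matrix.mul_assoc, hDC, Matrix.mul_one, ← mulVec_mulVec]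
  have : fromBlocks b0 0 0 (0 : Matrix κ κ F) *ᵥ Pi.single (Sum.inr i) 1 = 0 := by
    ext x
    cases x <;> simp
  rw [this, mulVec_zero]

open Classical in
/-- Double counting of pairs (Hermitian form of nullity `k`, basis of its kernel): a
congruence-invariant weight summed over Hermitian forms of nullity `k` reduces to a sum over
nonsingular Hermitian forms in `r` variables. -/
lemma double_count [Fintype F] (r k : ℕ) (hι : Fintype.card ι = r + k) (w : Matrix ι ι F → ℕ)
    (w' : Matrix (Fin r ⊕ Fin k) (Fin r ⊕ Fin k) F → ℕ)
    (hw : ∀ (C : Matrix ι (Fin r ⊕ Fin k) F) (D : Matrix (Fin r ⊕ Fin k) ι F),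
      C * D = 1 → D * C = 1 → ∀ b, w' (Cᴴ * b * C) = w b) :
    inj (Fintype.card F) k k * ∑ b : Matrix ι ι F with (bᴴ = b ∧ nul b = k), w b =
    inj (Fintype.card F) (r + k) k *
      ∑ b : Matrix (Fin r) (Fin r) F with (bᴴ = b ∧ NS b), w' (fromBlocks b 0 0 0) := by
  have hS : Nat.card {s : Fin k → ι → F // LinearIndependent F s} =
      inj (Fintype.card F) (r + k) k := by
    have h0 : nul (0 : Matrix ι ι F) = r + k := by
      unfold nul
      have : (0 : Matrix ι ι F).mulVecLin = 0 := by ext; simp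
      rw [this, LinearMap.ker_zero, finrank_top, Module.finrank_fintype_fun_eq_card, hι]
    rw [← h0, ← card_indep_ker _ _ (by omega)]
    exact Nat.card_congr (Equiv.subtypeEquivRight (by simp))
  have hL : inj (Fintype.card F) k k * ∑ b : Matrix ι ι F with (bᴴ = b ∧ nul b = k), w b =
      ∑ b : Matrix ι ι F with (bᴴ = b ∧ nul b = k),
        ∑ s : Fin k → ι → F with (LinearIndependent F s ∧ ∀ i, b *ᵥ s i = 0), w b := by
    rw [Finset.mul_sum]
    refine Finset.sum_congr rfl fun b hb => ?_
    obtain ⟨-, -, hb⟩ := Finset.mem_filter.1 hb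
    rw [Finset.sum_const, smul_eq_mul]
    congr 1
    have := card_indep_ker b k hb.ge
    rw [hb] at this
    rw [← this, Nat.card_eq_fintype_card, Fintype.card_subtype]
  rw [hL, Finset.sum_comm' (t' := Finset.univ.filter fun s => LinearIndependent F s)
    (s' := fun s => Finset.univ.filter fun b => (bᴴ = b ∧ nul b = k) ∧ ∀ i, b *ᵥ s i = 0)
    (by intro b s; simp; tauto)]
  rw [← hS, Nat.card_eq_fintype_card, Fintype.card_subtype, ← smul_eq_mul, ← Finset.sum_const]
  refine Finset.sum_congr rfl fun s hs => ?_
  obtain ⟨-, hs⟩ := Finset.mem_filter.1 hs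
  obtain ⟨C, D, hCD, hDC, hC⟩ := exists_completion (ρ := Fin r) s hs (by simpa using hι)
  refine Finset.sum_bij' (fun b _ => (Cᴴ * b * C).toBlocks₁₁)
    (fun b0 _ => Dᴴ * fromBlocks b0 0 0 (0 : Matrix (Fin k) (Fin k) F) * D) ?_ ?_ ?_ ?_ ?_
  · intro b hb
    obtain ⟨-, ⟨h1, h2⟩, h3⟩ := Finset.mem_filter.1 hb
    have := diag_form h1 (by simpa using h2) h3 hCD hDC hC
    simp only [Finset.mem_filter, Finset.mem_univ, true_and]
    exact this.2
  · intro b0 hb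
    obtain ⟨-, h1, h2⟩ := Finset.mem_filter.1 hb
    simp only [Finset.mem_filter, Finset.mem_univ, true_and]
    refine ⟨⟨congr_star (by simp [fromBlocks_conjTranspose, h1]), ?_⟩, diag_ker hDC hC b0⟩
    rw [nul_congr hDC hCD, nul_diag, (nul_eq_zero _).2 h2]
    simp
  · intro b hb
    obtain ⟨-, ⟨h1, h2⟩, h3⟩ := Finset.mem_filter.1 hb
    have := diag_form h1 (by simpa using h2) h3 hCD hDC hC
    rw [this.1, congr_congr hCD]
  · intro b0 hb
    rw [congr_congr hDC, toBlocks_fromBlocks₁₁]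
  · intro b hb
    obtain ⟨-, ⟨h1, h2⟩, h3⟩ := Finset.mem_filter.1 hb
    have := diag_form h1 (by simpa using h2) h3 hCD hDC hC
    rw [this.1, hw C D hCD hDC]

end B

/-! ### Extending a Hermitian form: Schur complements -/

section C
variable {F : Type} [Field F]
variable {ι ι' κ ρ : Type} [Fintype ι] [Fintype ι'] [Fintype κ] [Fintype ρ]
  [DecidableEq ι] [DecidableEq ι'] [DecidableEq κ] [DecidableEq ρ]

lemma NS_fromBlocks (A : Matrix ρ ρ F) (B : Matrix ρ κ F) (C : Matrix κ ρ F) (D : Matrix κ κ F) :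
    NS (fromBlocks A B C D) ↔
      ∀ x y, A *ᵥ x + B *ᵥ y = 0 → C *ᵥ x + D *ᵥ y = 0 → x = 0 ∧ y = 0 := by
  constructor
  · intro h x y h1 h2
    have := h (Sum.elim x y) (by
      rw [fromBlocks_mulVec, ← Sum.elim_zero_zero, Sum.elim_eq_iff]
      simpa using ⟨h1, h2⟩)
    rwa [← Sum.elim_zero_zero, Sum.elim_eq_iff] at this
  · intro h v hv
    rw [fromBlocks_mulVec, ← Sum.elim_zero_zero, Sum.elim_eq_iff] at hv
    obtain ⟨h1, h2⟩ := h _ _ hv.1 hv.2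
    rw [← Sum.elim_comp_inl_inr v, h1, h2, Sum.elim_zero_zero]

lemma card_mat [Fintype F] :
    Fintype.card (Matrix ρ κ F) = Fintype.card F ^ (Fintype.card ρ * Fintype.card κ) := by
  have : Fintype.card (Matrix ρ κ F) = Fintype.card (ρ → κ → F) := rfl
  rw [this]
  simp [← pow_mul, mul_comm]

variable [StarRing F]

open Classical in
/-- The number of nonsingular Hermitian extensions of `P` by `k` rows and columns. -/
noncomputable def nExt [Fintype F] (P : Matrix ι ι F) (k : ℕ) : ℕ :=
  (Finset.univ.filter fun X : Matrix ι (Fin k) F × Matrix (Fin k) (Fin k) F =>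
    X.2ᴴ = X.2 ∧ NS (fromBlocks P X.1 X.1ᴴ X.2)).card

open Classical in
/-- The number of nonsingular Hermitian `k × k` matrices. -/
noncomputable def hc (F : Type) [Field F] [StarRing F] [Fintype F] (k : ℕ) : ℕ :=
  (Finset.univ.filter fun X : Matrix (Fin k) (Fin k) F => Xᴴ = X ∧ NS X).card

lemma nExt_congr [Fintype F] {C : Matrix ι ι' F} {D : Matrix ι' ι F} (hCD : C * D = 1)
    (hDC : D * C = 1) (P : Matrix ι ι F) (k : ℕ) : nExt (Cᴴ * P * C) k = nExt P k := by
  classical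
  have h1 : Cᴴ * Dᴴ = 1 := by rw [← conjTranspose_mul, hDC, conjTranspose_one]
  have h2 : Dᴴ * Cᴴ = 1 := by rw [← conjTranspose_mul, hCD, conjTranspose_one]
  have key : ∀ (R : Matrix ι (Fin k) F) S, NS (fromBlocks (Cᴴ * P * C) (Cᴴ * R) (Cᴴ * R)ᴴ S) ↔
      NS (fromBlocks P R Rᴴ S) := by
    intro R S
    rw [← NS_congr (C := fromBlocks C 0 0 (1 : Matrix (Fin k) (Fin k) F))
      (D := fromBlocks D 0 0 (1 : Matrix (Fin k) (Fin k) F))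
      (by simp [fromBlocks_multiply, hCD]) (by simp [fromBlocks_multiply, hDC])]
    simp [fromBlocks_multiply, fromBlocks_conjTranspose]
  unfold nExt
  refine Finset.card_nbij' (fun X => (Dᴴ * X.1, X.2)) (fun X => (Cᴴ * X.1, X.2)) ?_ ?_ ?_ ?_
  · rintro ⟨R, S⟩ h
    simp only [Finset.coe_filter, Finset.mem_univ, true_and, Set.mem_ofPred_eq] at h ⊢
    rw [← key, ← Matrix.mul_assoc, h1, Matrix.one_mul]
    exact h
  · rintro ⟨R, S⟩ h
    simp only [Finset.coe_filter, Finset.mem_univ, true_and, Set.mem_ofPred_eq] at h ⊢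
    rwa [key]
  · rintro ⟨R, S⟩ h
    simp [← Matrix.mul_assoc, h1]
  · rintro ⟨R, S⟩ h
    simp [← Matrix.mul_assoc, h2]

/-- Schur complement reduction: a nonsingular block of `P` contributes a free factor. -/
lemma nExt_diag [Fintype F] {P : Matrix ρ ρ F} (hP : Pᴴ = P) (hn : NS P) (k : ℕ) :
    nExt (fromBlocks P 0 0 (0 : Matrix κ κ F)) k =
      Fintype.card F ^ (Fintype.card ρ * k) * nExt (0 : Matrix κ κ F) k := by
  classical
  obtain ⟨i1, i2⟩ := NS_inv hn
  have hPi : (P⁻¹)ᴴ = P⁻¹ := by rw [conjTranspose_nonsing_inv, hP]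
  have key : ∀ (R1 : Matrix ρ (Fin k) F) (R2 : Matrix κ (Fin k) F) S,
      NS (fromBlocks (fromBlocks P 0 0 (0 : Matrix κ κ F)) (fromRows R1 R2) (fromRows R1 R2)ᴴ S) ↔
      NS (fromBlocks (0 : Matrix κ κ F) R2 R2ᴴ (S - R1ᴴ * P⁻¹ * R1)) := by
    intro R1 R2 S
    rw [NS_fromBlocks, NS_fromBlocks]
    constructor
    · intro h y z h1 h2
      have := h (Sum.elim (-(P⁻¹ *ᵥ (R1 *ᵥ z))) y) z ?_ ?_
      · obtain ⟨ha, hb⟩ := this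
        rw [← Sum.elim_zero_zero, Sum.elim_eq_iff] at ha
        exact ⟨ha.2, hb⟩
      · rw [fromBlocks_mulVec, fromRows_mulVec, ← Sum.elim_add_add, ← Sum.elim_zero_zero,
          Sum.elim_eq_iff]
        simp only [zero_mulVec, zero_add] at h1
        simp [h1, mulVec_neg, ← Matrix.mul_assoc, i1]
      · rw [conjTranspose_fromRows_eq_fromCols_conjTranspose, fromCols_mulVec]
        rw [← h2, sub_mulVec]
        simp only [Sum.elim_comp_inl, Sum.elim_comp_inr, mulVec_neg, mulVec_mulVec]
        rw [← Matrix.mul_assoc]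
        abel
    · intro h v z h1 h2
      obtain ⟨x, y, rfl⟩ : ∃ x y, v = Sum.elim x y := ⟨_, _, (Sum.elim_comp_inl_inr v).symm⟩
      rw [fromBlocks_mulVec, fromRows_mulVec, ← Sum.elim_add_add, ← Sum.elim_zero_zero,
          Sum.elim_eq_iff] at h1
      simp only [Sum.elim_comp_inl, Sum.elim_comp_inr, zero_mulVec, zero_add, add_zero] at h1
      rw [conjTranspose_fromRows_eq_fromCols_conjTranspose, fromCols_mulVec] at h2
      simp only [Sum.elim_comp_inl, Sum.elim_comp_inr] at h2
      have hx : x = -(P⁻¹ *ᵥ (R1 *ᵥ z)) := by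
        have := congrArg (P⁻¹ *ᵥ ·) h1.1
        simp only [mulVec_add, mulVec_zero, mulVec_mulVec _ P⁻¹ P, i2, one_mulVec] at this
        exact eq_neg_of_add_eq_zero_left this
      obtain ⟨hy, hz⟩ := h y z (by simpa using h1.2) (by
        rw [← h2, sub_mulVec, hx]
        simp only [mulVec_neg, mulVec_mulVec]
        rw [← Matrix.mul_assoc]
        abel)
      subst hz
      refine ⟨?_, rfl⟩
      rw [hx, hy]
      simp
  have hh : ∀ R1 : Matrix ρ (Fin k) F, (R1ᴴ * P⁻¹ * R1)ᴴ = R1ᴴ * P⁻¹ * R1 := fun R1 =>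
    congr_star hPi
  have hcard : Fintype.card F ^ (Fintype.card ρ * k) =
      (Finset.univ : Finset (Matrix ρ (Fin k) F)).card := by
    rw [Finset.card_univ, card_mat, Fintype.card_fin]
  unfold nExt
  rw [hcard, ← Finset.card_product]
  refine Finset.card_nbij'
    (fun X => (X.1.toRows₁, (X.1.toRows₂, X.2 - X.1.toRows₁ᴴ * P⁻¹ * X.1.toRows₁)))
    (fun X => (fromRows X.1 X.2.1, X.2.2 + X.1ᴴ * P⁻¹ * X.1)) ?_ ?_ ?_ ?_
  · rintro ⟨R, S⟩ h
    simp only [Finset.coe_filter, Finset.mem_univ, true_and, Set.mem_ofPred_eq, Finset.coe_product,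
      Set.mem_prod, Finset.coe_univ, Set.mem_univ] at h ⊢
    rw [← key, fromRows_toRows, conjTranspose_sub, hh, h.1]
    exact ⟨rfl, h.2⟩
  · rintro ⟨R1, R2, S⟩ h
    simp only [Finset.coe_filter, Finset.mem_univ, true_and, Set.mem_ofPred_eq, Finset.coe_product,
      Set.mem_prod, Finset.coe_univ, Set.mem_univ] at h ⊢
    rw [key, conjTranspose_add, hh, h.1, add_sub_cancel_right]
    exact ⟨rfl, h.2⟩
  · rintro ⟨R, S⟩ h
    simp [fromRows_toRows]
  · rintro ⟨R1, R2, S⟩ h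
    simp

open Classical in
/-- There are `q ^ (m ^ 2)` Hermitian `m × m` matrices: every matrix is uniquely `A + β B` with `A` and
`B` Hermitian, where `β` is not fixed by the involution. -/
lemma card_herm [Fintype F] {q : ℕ} (hF : Fintype.card F = q ^ 2) (hβ : ∃ β : F, star β ≠ β)
    (m : ℕ) :
    (Finset.univ.filter fun A : Matrix (Fin m) (Fin m) F => Aᴴ = A).card = q ^ (m ^ 2) := by
  obtain ⟨β, hβ⟩ := hβ
  have hd : β - star β ≠ 0 := sub_ne_zero.2 hβ.symm
  have h : (Finset.univ.filter fun A : Matrix (Fin m) (Fin m) F => Aᴴ = A).card ^ 2 =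
      (q ^ (m ^ 2)) ^ 2 := by
    rw [sq, ← Finset.card_product]
    have : (q ^ (m ^ 2)) ^ 2 = (Finset.univ : Finset (Matrix (Fin m) (Fin m) F)).card := by
      rw [Finset.card_univ, card_mat, hF]
      simp only [← pow_mul, Fintype.card_fin]
      congr 1; ring
    rw [this]
    refine Finset.card_nbij' (fun X => X.1 + β • X.2)
      (fun M => (M - β • ((β - star β)⁻¹ • (M - Mᴴ)), (β - star β)⁻¹ • (M - Mᴴ))) ?_ ?_ ?_ ?_
    · simp
    · intro M _
      have hB : ((β - star β)⁻¹ • (M - Mᴴ))ᴴ = (β - star β)⁻¹ • (M - Mᴴ) := by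
        rw [conjTranspose_smul, conjTranspose_sub, conjTranspose_conjTranspose, star_inv₀, star_sub,
          star_star, ← neg_sub β, ← neg_sub M, inv_neg, neg_smul_neg]
      simp only [Finset.coe_product, Finset.coe_filter, Finset.mem_univ, true_and, Set.mem_prod,
        Set.mem_ofPred_eq]
      refine ⟨?_, hB⟩
      rw [conjTranspose_sub, conjTranspose_smul β, hB]
      have : M - Mᴴ = (β - star β) • ((β - star β)⁻¹ • (M - Mᴴ)) := by
        rw [smul_smul, mul_inv_cancel₀ hd, one_smul]
      rw [sub_smul] at this
      generalize (β - star β)⁻¹ • (M - Mᴴ) = B at this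
      have e : Mᴴ = M - (β • B - star β • B) := by rw [← this]; abel
      rw [e]; abel
    · rintro ⟨A, B⟩ h
      simp only [Finset.coe_product, Finset.coe_filter, Finset.mem_univ, true_and, Set.mem_prod,
        Set.mem_ofPred_eq] at h
      have : (β - star β)⁻¹ • (A + β • B - (A + β • B)ᴴ) = B := by
        rw [conjTranspose_add, conjTranspose_smul, h.1, h.2, add_sub_add_left_eq_sub, ← sub_smul,
          smul_smul, inv_mul_cancel₀ hd, one_smul]
      simp only [this]
      simp
    · intro M _
      simp
  exact (Nat.pow_left_injective (n := 2) (by norm_num)) h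

end C

/-! ### The number of nonsingular Hermitian extensions -/

section D
variable {F : Type} [Field F] [StarRing F]
variable {ι : Type} [Fintype ι] [DecidableEq ι]

/-- A matrix bordered by the last `j` unit vectors and a zero corner is nonsingular exactly when its
complementary block `A` is. -/
lemma NS_border {m j : ℕ} (A : Matrix (Fin m) (Fin m) F) (B : Matrix (Fin m) (Fin j) F)
    (B' : Matrix (Fin j) (Fin m) F) (D : Matrix (Fin j) (Fin j) F) :
    NS (fromBlocks (0 : Matrix (Fin j) (Fin j) F) (fromCols (0 : Matrix (Fin j) (Fin m) F) (1 : Matrix (Fin j) (Fin j) F))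
      (fromRows (0 : Matrix (Fin m) (Fin j) F) (1 : Matrix (Fin j) (Fin j) F)) (fromBlocks A B B' D)) ↔ NS A := by
  rw [NS_fromBlocks]
  constructor
  · intro h y hy
    have := h (-(B' *ᵥ y)) (Sum.elim y 0) (by simp [fromCols_mulVec]) (by
      rw [fromRows_mulVec, fromBlocks_mulVec, ← Sum.elim_add_add, ← Sum.elim_zero_zero,
        Sum.elim_eq_iff]
      simp [hy])
    have h2 := this.2
    rw [← Sum.elim_zero_zero, Sum.elim_eq_iff] at h2
    exact h2.1
  · intro h x v h1 h2
    obtain ⟨y, z, rfl⟩ : ∃ y z, v = Sum.elim y z := ⟨_, _, (Sum.elim_comp_inl_inr v).symm⟩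
    rw [fromRows_mulVec, fromBlocks_mulVec, ← Sum.elim_add_add, ← Sum.elim_zero_zero,
        Sum.elim_eq_iff] at h2
    simp [fromCols_mulVec] at h1 h2
    subst h1
    obtain ⟨h2, h3⟩ := h2
    have hy := h y (by simpa using h2)
    subst hy
    simpa using h3

open Classical in
/-- The Hermitian `S` that make `[0, Mᴴ; M, S]` nonsingular, for `M` with independent columns: in
coordinates where the columns of `M` are the last `j` unit vectors, the condition is that the upper
left block of `S` is nonsingular, and the other blocks are arbitrary. -/
lemma nExt_fiber [Fintype F] {q : ℕ} (hF : Fintype.card F = q ^ 2) (hβ : ∃ β : F, star β ≠ β)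
    (j k : ℕ) (s : Fin j → Fin k → F) (hs : LinearIndependent F s) :
    (Finset.univ.filter fun S : Matrix (Fin k) (Fin k) F => Sᴴ = S ∧
      NS (fromBlocks (0 : Matrix (Fin j) (Fin j) F)
        (Matrix.of fun (a : Fin k) (i : Fin j) => s i a)ᴴ
        (Matrix.of fun (a : Fin k) (i : Fin j) => s i a) S)).card =
      hc F (k - j) * (Fintype.card F ^ ((k - j) * j) * q ^ (j ^ 2)) := by
  have hjk : j ≤ k := by simpa using hs.fintype_card_le_finrank
  obtain ⟨C, D, hCD, hDC, hC⟩ := exists_completion (ρ := Fin (k - j)) s hs (by simp; omega)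
  set M : Matrix (Fin k) (Fin j) F := Matrix.of fun (a : Fin k) (i : Fin j) => s i a with hM
  have hMC : M = C * fromRows (0 : Matrix (Fin (k - j)) (Fin j) F) (1 : Matrix (Fin j) (Fin j) F) := by
    ext a i
    simp [hM, Matrix.mul_apply, Matrix.one_apply, hC]
  have h1 : Cᴴ * Dᴴ = 1 := by rw [← conjTranspose_mul, hDC, conjTranspose_one]
  have h2 : Dᴴ * Cᴴ = 1 := by rw [← conjTranspose_mul, hCD, conjTranspose_one]
  have key : ∀ T : Matrix (Fin (k - j) ⊕ Fin j) (Fin (k - j) ⊕ Fin j) F,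
      NS (fromBlocks (0 : Matrix (Fin j) (Fin j) F) Mᴴ M (C * T * Cᴴ)) ↔ NS T.toBlocks₁₁ := by
    intro T
    have e := NS_congr (C := fromBlocks (1 : Matrix (Fin j) (Fin j) F) 0 0 Cᴴ)
      (D := fromBlocks (1 : Matrix (Fin j) (Fin j) F) 0 0 Dᴴ)
      (by simp [fromBlocks_multiply, h1]) (by simp [fromBlocks_multiply, h2])
      (fromBlocks (0 : Matrix (Fin j) (Fin j) F) (fromCols (0 : Matrix (Fin j) (Fin (k - j)) F) (1 : Matrix (Fin j) (Fin j) F))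
      (fromRows (0 : Matrix (Fin (k - j)) (Fin j) F) (1 : Matrix (Fin j) (Fin j) F)) T)
    conv at e => rhs; rw [← fromBlocks_toBlocks T]
    rw [NS_border] at e
    rw [← e]
    have : Mᴴ = fromCols (0 : Matrix (Fin j) (Fin (k - j)) F) (1 : Matrix (Fin j) (Fin j) F) * Cᴴ := by
      rw [hMC, conjTranspose_mul, conjTranspose_fromRows_eq_fromCols_conjTranspose]
      simp
    rw [this, hMC]
    simp [fromBlocks_multiply, fromBlocks_conjTranspose]
  have hB : Fintype.card F ^ ((k - j) * j) =
      (Finset.univ : Finset (Matrix (Fin (k - j)) (Fin j) F)).card := by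
    rw [Finset.card_univ, card_mat, Fintype.card_fin, Fintype.card_fin]
  rw [hB, ← card_herm hF hβ j]
  unfold hc
  rw [← Finset.card_product, ← Finset.card_product]
  have hDSD : ∀ S : Matrix (Fin k) (Fin k) F, C * (D * S * Dᴴ) * Cᴴ = S := by
    intro S
    calc _ = (C * D) * S * (Dᴴ * Cᴴ) := by simp only [Matrix.mul_assoc]
      _ = S := by rw [hCD, h2]; simp
  have hCTC : ∀ T : Matrix (Fin (k - j) ⊕ Fin j) (Fin (k - j) ⊕ Fin j) F, D * (C * T * Cᴴ) * Dᴴ = T := by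
    intro S
    calc _ = (D * C) * S * (Cᴴ * Dᴴ) := by simp only [Matrix.mul_assoc]
      _ = S := by rw [hDC, h1]; simp
  refine Finset.card_nbij'
    (fun S => ((D * S * Dᴴ).toBlocks₁₁, ((D * S * Dᴴ).toBlocks₁₂, (D * S * Dᴴ).toBlocks₂₂)))
    (fun X => C * fromBlocks X.1 X.2.1 X.2.1ᴴ X.2.2 * Cᴴ) ?_ ?_ ?_ ?_
  · intro S h
    simp only [Finset.coe_filter, Finset.mem_univ, true_and, Set.mem_ofPred_eq, Finset.coe_product,
      Set.mem_prod, Finset.coe_univ, Set.mem_univ] at h ⊢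
    have hh : (D * S * Dᴴ)ᴴ = D * S * Dᴴ := by
      simp [Matrix.mul_assoc, h.1]
    rw [← fromBlocks_toBlocks (D * S * Dᴴ), fromBlocks_conjTranspose, fromBlocks_inj] at hh
    refine ⟨⟨hh.1, ?_⟩, hh.2.2.2⟩
    rw [← key, hDSD]
    exact h.2
  · rintro ⟨A, B, E⟩ h
    simp only [Finset.coe_filter, Finset.mem_univ, true_and, Set.mem_ofPred_eq, Finset.coe_product,
      Set.mem_prod, Finset.coe_univ, Set.mem_univ] at h ⊢
    rw [key, toBlocks_fromBlocks₁₁]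
    refine ⟨?_, h.1.2⟩
    simp [Matrix.mul_assoc, fromBlocks_conjTranspose, h.1.1, h.2]
  · intro S h
    simp only [Finset.coe_filter, Finset.mem_univ, true_and, Set.mem_ofPred_eq] at h
    have hh : (D * S * Dᴴ)ᴴ = D * S * Dᴴ := by
      simp [Matrix.mul_assoc, h.1]
    rw [← fromBlocks_toBlocks (D * S * Dᴴ), fromBlocks_conjTranspose, fromBlocks_inj] at hh
    dsimp only
    rw [hh.2.2.1, fromBlocks_toBlocks, hDSD]
  · rintro ⟨A, B, E⟩ h
    simp only [hCTC, toBlocks_fromBlocks₁₁, toBlocks_fromBlocks₁₂, toBlocks_fromBlocks₂₂]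

/-- In a nonsingular extension of the zero form the border has independent columns, and the corner is
counted by `nExt_fiber`. -/
lemma nExt_zero [Fintype F] {q : ℕ} (hF : Fintype.card F = q ^ 2) (hβ : ∃ β : F, star β ≠ β)
    (j k : ℕ) : nExt (0 : Matrix (Fin j) (Fin j) F) k =
      inj (Fintype.card F) k j *
        (hc F (k - j) * (Fintype.card F ^ ((k - j) * j) * q ^ (j ^ 2))) := by
  classical
  have h1 : nExt (0 : Matrix (Fin j) (Fin j) F) k =
      ((Finset.univ.filter fun s : Fin j → Fin k → F => LinearIndependent F s).sigma fun s =>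
      (Finset.univ.filter fun S : Matrix (Fin k) (Fin k) F => Sᴴ = S ∧
      NS (fromBlocks (0 : Matrix (Fin j) (Fin j) F)
        (Matrix.of fun (a : Fin k) (i : Fin j) => s i a)ᴴ
        (Matrix.of fun (a : Fin k) (i : Fin j) => s i a) S))).card := by
    unfold nExt
    refine Finset.card_nbij' (fun X => ⟨fun i a => star (X.1 i a), X.2⟩)
      (fun Y => ((Matrix.of fun (a : Fin k) (i : Fin j) => Y.1 i a)ᴴ, Y.2)) ?_ ?_ ?_ ?_
    · rintro ⟨R, S⟩ h
      simp only [Finset.coe_filter, Finset.mem_univ, true_and, Set.mem_ofPred_eq,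
        Finset.mem_coe, Finset.mem_sigma, Finset.mem_filter] at h ⊢
      have e : (Matrix.of fun (a : Fin k) (i : Fin j) => star (R i a)) = Rᴴ := rfl
      rw [e, conjTranspose_conjTranspose]
      refine ⟨?_, h⟩
      rw [Fintype.linearIndependent_iff]
      intro g hg
      have h3 := (NS_fromBlocks _ _ _ _).1 h.2 g 0 (by simp) (by
        rw [mulVec_zero, add_zero, ← hg]
        ext a
        simp [mulVec, dotProduct, mul_comm])
      exact fun i => congrFun h3.1 i
    · rintro ⟨s, S⟩ h
      simp only [Finset.coe_filter, Finset.mem_univ, true_and, Set.mem_ofPred_eq,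
        Finset.mem_coe, Finset.mem_sigma, Finset.mem_filter] at h ⊢
      rw [conjTranspose_conjTranspose]
      exact h.2
    · rintro ⟨R, S⟩ h
      simp only [Prod.mk.injEq, and_true]
      ext a i
      simp
    · rintro ⟨s, S⟩ h
      simp
  rw [h1, Finset.card_sigma, Finset.sum_congr rfl fun s hs =>
    nExt_fiber hF hβ j k s (Finset.mem_filter.1 hs).2, Finset.sum_const, smul_eq_mul,
    ← card_indep, Nat.card_eq_fintype_card, Fintype.card_subtype]

/-- The number of nonsingular Hermitian extensions of a Hermitian matrix depends only on its size
and nullity. -/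
lemma nExt_eq [Fintype F] {q : ℕ} (hF : Fintype.card F = q ^ 2) (hβ : ∃ β : F, star β ≠ β)
    {P : Matrix ι ι F} (hP : Pᴴ = P) {j r : ℕ} (hn : nul P = j) (hr : Fintype.card ι = r + j)
    (k : ℕ) : nExt P k = Fintype.card F ^ (r * k) * (inj (Fintype.card F) k j *
        (hc F (k - j) * (Fintype.card F ^ ((k - j) * j) * q ^ (j ^ 2)))) := by
  let bs := Module.finBasisOfFinrankEq F (LinearMap.ker P.mulVecLin) hn
  let s : Fin j → ι → F := fun i => (bs i).1
  have hs : LinearIndependent F s :=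
    bs.linearIndependent.map' (LinearMap.ker P.mulVecLin).subtype (Submodule.ker_subtype _)
  obtain ⟨C, D, hCD, hDC, hC⟩ := exists_completion (ρ := Fin r) s hs (by simpa using hr)
  obtain ⟨h1, h2, h3⟩ := diag_form hP (by simpa using hn) (fun i => (bs i).2) hCD hDC hC
  rw [← nExt_congr hCD hDC, ← h1, nExt_diag h2 h3, nExt_zero hF hβ, Fintype.card_fin]

end D

/-! ### Recursions for forms and for pairs of forms -/

section E
variable {F : Type} [Field F] [StarRing F]
variable {ι : Type} [Fintype ι] [DecidableEq ι]

/-- The number of nonsingular Hermitian extensions by `k` rows and columns of a Hermitian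
`r × r` matrix of nullity `j`, over a field with `q ^ 2` elements. -/
noncomputable def extNum (F : Type) [Field F] [StarRing F] [Fintype F] (q r j k : ℕ) : ℕ :=
  (q ^ 2) ^ ((r - j) * k) * (inj (q ^ 2) k j *
        (hc F (k - j) * ((q ^ 2) ^ ((k - j) * j) * q ^ (j ^ 2))))

lemma nul_le (P : Matrix ι ι F) : nul P ≤ Fintype.card ι := by
  unfold nul
  exact (Submodule.finrank_le _).trans (by simp)

open Classical in
/-- Nonsingular Hermitian matrices with a condition on the upper left block, sorted by the nullity of
that block. -/
lemma ext_sum [Fintype F] {q : ℕ} (hF : Fintype.card F = q ^ 2) (hβ : ∃ β : F, star β ≠ β)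
    (r k : ℕ) (Φ : Matrix (Fin r) (Fin r) F → Prop) :
    (Finset.univ.filter fun H : Matrix (Fin r ⊕ Fin k) (Fin r ⊕ Fin k) F =>
      (Hᴴ = H ∧ NS H) ∧ Φ H.toBlocks₁₁).card =
    ∑ j ∈ Finset.range (r + 1),
      (Finset.univ.filter fun P : Matrix (Fin r) (Fin r) F =>
        (Pᴴ = P ∧ nul P = j) ∧ Φ P).card * extNum F q r j k := by
  have h1 : (Finset.univ.filter fun H : Matrix (Fin r ⊕ Fin k) (Fin r ⊕ Fin k) F =>
      (Hᴴ = H ∧ NS H) ∧ Φ H.toBlocks₁₁).card =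
      ((Finset.univ.filter fun P : Matrix (Fin r) (Fin r) F => Pᴴ = P ∧ Φ P).sigma fun P =>
      Finset.univ.filter fun X : Matrix (Fin r) (Fin k) F × Matrix (Fin k) (Fin k) F =>
    X.2ᴴ = X.2 ∧ NS (fromBlocks P X.1 X.1ᴴ X.2)).card := by
    have hblock : ∀ H : Matrix (Fin r ⊕ Fin k) (Fin r ⊕ Fin k) F, Hᴴ = H →
        H.toBlocks₁₁ᴴ = H.toBlocks₁₁ ∧ H.toBlocks₂₂ᴴ = H.toBlocks₂₂ ∧
        fromBlocks H.toBlocks₁₁ H.toBlocks₁₂ H.toBlocks₁₂ᴴ H.toBlocks₂₂ = H := by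
      intro H h
      have hh := h
      rw [← fromBlocks_toBlocks H, fromBlocks_conjTranspose, fromBlocks_inj] at hh
      exact ⟨hh.1, hh.2.2.2, by rw [hh.2.2.1, fromBlocks_toBlocks]⟩
    refine Finset.card_nbij' (fun H => ⟨H.toBlocks₁₁, (H.toBlocks₁₂, H.toBlocks₂₂)⟩)
      (fun Y => fromBlocks Y.1 Y.2.1 Y.2.1ᴴ Y.2.2) ?_ ?_ ?_ ?_
    · intro H h
      simp only [Finset.coe_filter, Finset.mem_univ, true_and, Set.mem_ofPred_eq,
        Finset.mem_coe, Finset.mem_sigma, Finset.mem_filter] at h ⊢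
      obtain ⟨ha, hb, hc⟩ := hblock H h.1.1
      rw [hc]
      exact ⟨⟨ha, h.2⟩, hb, h.1.2⟩
    · rintro ⟨P, R, S⟩ h
      simp only [Finset.coe_filter, Finset.mem_univ, true_and, Set.mem_ofPred_eq,
        Finset.mem_coe, Finset.mem_sigma, Finset.mem_filter, toBlocks_fromBlocks₁₁] at h ⊢
      refine ⟨⟨?_, h.2.2⟩, h.1.2⟩
      rw [fromBlocks_conjTranspose, conjTranspose_conjTranspose, h.1.1, h.2.1]
    · intro H h
      simp only [Finset.coe_filter, Finset.mem_univ, true_and, Set.mem_ofPred_eq] at h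
      exact (hblock H h.1.1).2.2
    · rintro ⟨P, R, S⟩ h
      simp
  rw [h1, Finset.card_sigma]
  rw [← Finset.sum_fiberwise_of_maps_to (t := Finset.range (r + 1)) (g := fun P => nul P)
    (by intro P _; have := nul_le P; simp at this; simp; omega)]
  refine Finset.sum_congr rfl fun j hj => ?_
  rw [Finset.filter_filter]
  have : (Finset.univ.filter fun P : Matrix (Fin r) (Fin r) F => (Pᴴ = P ∧ nul P = j) ∧ Φ P) =
    Finset.univ.filter fun P : Matrix (Fin r) (Fin r) F => (Pᴴ = P ∧ Φ P) ∧ nul P = j := by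
    ext P; simp; tauto
  rw [this, ← smul_eq_mul, ← Finset.sum_const]
  refine Finset.sum_congr rfl fun P hP => ?_
  obtain ⟨-, ⟨ha, -⟩, hb⟩ := Finset.mem_filter.1 hP
  have hj' : j ≤ r := by simpa [Nat.lt_succ_iff] using hj
  have := nExt_eq hF hβ ha hb (r := r - j) (by simp; omega) k
  unfold extNum
  rw [hF] at this
  rw [← this]
  rfl

open Classical in
/-- The number of Hermitian `r × r` matrices of nullity `j`. -/
noncomputable def cnt (F : Type) [Field F] [StarRing F] [Fintype F] (r j : ℕ) : ℕ :=
  (Finset.univ.filter fun P : Matrix (Fin r) (Fin r) F => Pᴴ = P ∧ nul P = j).card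

lemma cnt_zero [Fintype F] (r : ℕ) : cnt F r 0 = hc F r := by
  unfold cnt hc
  congr 1
  ext P
  simp only [Finset.mem_filter, nul_eq_zero]

/-- A form of nullity `k` is a nonsingular form modulo its kernel. -/
lemma cnt_rec [Fintype F] {q : ℕ} (hF : Fintype.card F = q ^ 2) (r k : ℕ) :
    inj (q ^ 2) k k * cnt F (r + k) k = inj (q ^ 2) (r + k) k * hc F r := by
  classical
  have := double_count (F := F) (ι := Fin (r + k)) r k (by simp) (fun _ => 1) (fun _ => 1)
    (by simp)
  rw [hF] at this
  simpa [cnt, hc] using this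

/-- Nonsingular forms sorted by the nullity `j` of the upper left `r × r` block. -/
lemma hc_rec [Fintype F] {q : ℕ} (hF : Fintype.card F = q ^ 2) (hβ : ∃ β : F, star β ≠ β)
    (r k : ℕ) :
    hc F (r + k) = ∑ j ∈ Finset.range (r + 1), cnt F r j * extNum F q r j k := by
  classical
  have := ext_sum hF hβ r k (fun _ => True)
  simp only [and_true] at this
  unfold cnt
  rw [← this]
  unfold hc
  refine Finset.card_nbij' (fun H => H.submatrix finSumFinEquiv finSumFinEquiv)
    (fun H => H.submatrix finSumFinEquiv.symm finSumFinEquiv.symm) ?_ ?_ ?_ ?_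
  · intro H h
    simp only [Finset.coe_filter, Finset.mem_univ, true_and, Set.mem_ofPred_eq] at h ⊢
    refine ⟨by rw [conjTranspose_submatrix, h.1], ?_⟩
    rw [NS_iff_isUnit, isUnit_submatrix_equiv, ← NS_iff_isUnit]
    exact h.2
  · intro H h
    simp only [Finset.coe_filter, Finset.mem_univ, true_and, Set.mem_ofPred_eq] at h ⊢
    refine ⟨by rw [conjTranspose_submatrix, h.1], ?_⟩
    rw [NS_iff_isUnit, isUnit_submatrix_equiv, ← NS_iff_isUnit]
    exact h.2
  · intro H h
    simp
  · intro H h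
    simp

open Classical in
/-- The number of pairs `(H, P)` of Hermitian `n × n` matrices with `H` nonsingular, `P` of
nullity `k`, and `P * H` nilpotent. -/
noncomputable def pairs (F : Type) [Field F] [StarRing F] [Fintype F] (n k : ℕ) : ℕ :=
  ∑ H : Matrix (Fin n) (Fin n) F with (Hᴴ = H ∧ NS H),
    (Finset.univ.filter fun P : Matrix (Fin n) (Fin n) F =>
      (Pᴴ = P ∧ nul P = k) ∧ IsNilpotent (P * H)).card

/-- With the form `b` extended by zero, only the upper left block of `H` matters for nilpotency. -/
lemma nil_block {r k : ℕ} (b : Matrix (Fin r) (Fin r) F)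
    (H : Matrix (Fin r ⊕ Fin k) (Fin r ⊕ Fin k) F) :
    IsNilpotent (fromBlocks b 0 0 (0 : Matrix (Fin k) (Fin k) F) * H) ↔
      IsNilpotent (H.toBlocks₁₁ * b) := by
  have h1 : fromBlocks b 0 0 (0 : Matrix (Fin k) (Fin k) F) =
      fromRows b (0 : Matrix (Fin k) (Fin r) F) *
        fromCols (1 : Matrix (Fin r) (Fin r) F) (0 : Matrix (Fin r) (Fin k) F) := by
    rw [fromRows_mul_fromCols]; simp
  rw [h1, Matrix.mul_assoc, nil_comm_iff, ← fromBlocks_toBlocks H, fromCols_mul_fromBlocks,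
    fromCols_mul_fromRows]
  simp

/-- The recursion for the number of pairs: a form of nullity `k` is moved to block diagonal shape,
and then only the upper left block of the nonsingular form matters for nilpotency. -/
lemma pairs_rec [Fintype F] {q : ℕ} (hF : Fintype.card F = q ^ 2) (hβ : ∃ β : F, star β ≠ β)
    (r k : ℕ) :
    inj (q ^ 2) k k * pairs F (r + k) k = inj (q ^ 2) (r + k) k *
      ∑ j ∈ Finset.range (r + 1), pairs F r j * extNum F q r j k := by
  classical
  have h1 : pairs F (r + k) k = ∑ b : Matrix (Fin (r + k)) (Fin (r + k)) F with
      (bᴴ = b ∧ nul b = k), (Finset.univ.filter fun H : Matrix (Fin (r + k)) (Fin (r + k)) F =>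
      (Hᴴ = H ∧ NS H) ∧ IsNilpotent (b * H)).card := by
    unfold pairs
    simp only [Finset.card_eq_sum_ones]
    refine Finset.sum_comm' ?_
    intro H b
    simp
    tauto
  rw [h1, ← hF, double_count (ι := Fin (r + k)) r k (by simp) _
    (fun b => (Finset.univ.filter fun H : Matrix (Fin r ⊕ Fin k) (Fin r ⊕ Fin k) F =>
      (Hᴴ = H ∧ NS H) ∧ IsNilpotent (b * H)).card)]
  · congr 1
    simp only [nil_block]
    rw [Finset.sum_congr rfl fun b _ => ext_sum hF hβ r k (fun P => IsNilpotent (P * b))]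
    rw [Finset.sum_comm]
    refine Finset.sum_congr rfl fun j _ => ?_
    rw [← Finset.sum_mul]
    rfl
  · intro C D hCD hDC b
    have g1 : Cᴴ * Dᴴ = 1 := by rw [← conjTranspose_mul, hDC, conjTranspose_one]
    have g2 : Dᴴ * Cᴴ = 1 := by rw [← conjTranspose_mul, hCD, conjTranspose_one]
    have hDSD : ∀ S : Matrix (Fin (r + k)) (Fin (r + k)) F, C * (D * S * Dᴴ) * Cᴴ = S := by
      intro S
      calc _ = (C * D) * S * (Dᴴ * Cᴴ) := by simp only [Matrix.mul_assoc]
        _ = S := by rw [hCD, g2]; simp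
    have hCTC : ∀ T : Matrix (Fin r ⊕ Fin k) (Fin r ⊕ Fin k) F, D * (C * T * Cᴴ) * Dᴴ = T := by
      intro S
      calc _ = (D * C) * S * (Cᴴ * Dᴴ) := by simp only [Matrix.mul_assoc]
        _ = S := by rw [hDC, g1]; simp
    have hNS : ∀ S : Matrix (Fin (r + k)) (Fin (r + k)) F, NS (D * S * Dᴴ) ↔ NS S := by
      intro S
      have := NS_congr (C := Dᴴ) (D := Cᴴ) g2 g1 S
      rwa [conjTranspose_conjTranspose] at this
    have hst : ∀ S : Matrix (Fin (r + k)) (Fin (r + k)) F, Sᴴ = S →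
        (D * S * Dᴴ)ᴴ = D * S * Dᴴ := by
      intro S hS
      simp [Matrix.mul_assoc, hS]
    refine Finset.card_nbij' (fun H => C * H * Cᴴ) (fun H => D * H * Dᴴ) ?_ ?_ ?_ ?_
    · intro H h
      simp only [Finset.coe_filter, Finset.mem_univ, true_and, Set.mem_ofPred_eq] at h ⊢
      rw [← hNS, hCTC, ← nil_congr hCD b, hCTC]
      refine ⟨⟨?_, h.1.2⟩, h.2⟩
      simp [Matrix.mul_assoc, h.1.1]
    · intro H h
      simp only [Finset.coe_filter, Finset.mem_univ, true_and, Set.mem_ofPred_eq] at h ⊢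
      rw [hNS, nil_congr hCD b]
      exact ⟨⟨hst H h.1.1, h.1.2⟩, h.2⟩
    · intro H h
      exact hCTC H
    · intro H h
      exact hDSD H

end E

/-! ### The finite `q`-binomial and `q`-Vandermonde identities -/

section F
open Polynomial

/-- The `x`-Pochhammer product `∏_{i=1}^m (1 - x^i)`. -/
def poch (x : ℚ) (m : ℕ) : ℚ := ∏ i ∈ Finset.range m, (1 - x ^ (i + 1))

lemma poch_succ (x : ℚ) (m : ℕ) : poch x (m + 1) = poch x m * (1 - x ^ (m + 1)) :=
  Finset.prod_range_succ _ _

lemma poch_zero (x : ℚ) : poch x 0 = 1 := Finset.prod_range_zero _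

/-- The polynomial `∏_{i<m} (1 + x^i T)`, the generating function of Gaussian binomials. -/
noncomputable def gauss (x : ℚ) (m : ℕ) : ℚ[X] := ∏ i ∈ Finset.range m, (1 + C (x ^ i) * X)

lemma gauss_succ (x : ℚ) (m : ℕ) : gauss x (m + 1) = gauss x m * (1 + C (x ^ m) * X) :=
  Finset.prod_range_succ _ _

/-- Splitting the product after `m` factors; comparing coefficients gives the `q`-Vandermonde identity. -/
lemma gauss_add (x : ℚ) (m n : ℕ) :
    gauss x (m + n) = (gauss x n).comp (C (x ^ m) * X) * gauss x m := by
  rw [mul_comm]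
  unfold gauss
  rw [Finset.prod_range_add, prod_comp]
  congr 1
  refine Finset.prod_congr rfl fun i _ => ?_
  simp only [add_comp, one_comp, mul_comp, C_comp, X_comp, pow_add, C_mul]
  ring

lemma gauss_coeff_succ (x : ℚ) (m i : ℕ) :
    (gauss x (m + 1)).coeff (i + 1) = (gauss x m).coeff (i + 1) + x ^ m * (gauss x m).coeff i := by
  rw [gauss_succ, mul_add, mul_one, coeff_add, mul_comm (C _) X, ← mul_assoc, coeff_mul_C,
    coeff_mul_X, mul_comm]

lemma gauss_coeff_zero (x : ℚ) (m : ℕ) : (gauss x m).coeff 0 = 1 := by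
  induction m with
  | zero => simp [gauss]
  | succ m ih => rw [gauss_succ, mul_coeff_zero, ih]; simp

lemma gauss_coeff_gt (x : ℚ) {m i : ℕ} (h : m < i) : (gauss x m).coeff i = 0 := by
  induction m generalizing i with
  | zero => simp [gauss, coeff_one]; omega
  | succ m ih =>
    obtain ⟨i, rfl⟩ : ∃ i', i = i' + 1 := ⟨i - 1, by omega⟩
    rw [gauss_coeff_succ, ih (by omega), ih (by omega)]; simp

/-- The `q`-binomial theorem. -/
lemma gauss_coeff {x : ℚ} (hx : ∀ m, poch x m ≠ 0) (i l : ℕ) :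
    (gauss x (i + l)).coeff i = x ^ (i.choose 2) * poch x (i + l) / (poch x i * poch x l) := by
  obtain ⟨m, hm⟩ : ∃ m, m = i + l := ⟨_, rfl⟩
  induction m generalizing i l with
  | zero =>
    obtain ⟨rfl, rfl⟩ : i = 0 ∧ l = 0 := by omega
    simp [gauss, poch]
  | succ m ih =>
    rcases i with - | i
    · rw [gauss_coeff_zero, zero_add, poch_zero, one_mul]
      simp [hx]
    · rw [← hm, gauss_coeff_succ]
      rcases l with - | l
      · have e : m = i + 0 := by omega
        have := ih i 0 e
        rw [← e] at this
        rw [gauss_coeff_gt x (by omega), this]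
        obtain rfl : m = i := by omega
        rw [Nat.choose_succ_succ' m 1, Nat.choose_one_right, pow_add, poch_zero]
        have := hx m
        have := hx (m + 1)
        field_simp
        ring
      · have h1 := ih (i + 1) l (by omega)
        have h2 := ih i (l + 1) (by omega)
        rw [show i + 1 + l = m by omega] at h1
        rw [show i + (l + 1) = m by omega] at h2
        rw [h1, h2, Nat.choose_succ_succ' i 1, Nat.choose_one_right, pow_add, poch_succ x m,
          show m + 1 = (i + 1) + (l + 1) by omega]
        have e : x ^ m = x ^ i * x ^ (l + 1) := by rw [← pow_add]; congr 1; omega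
        rw [e, pow_add]
        have a1 := hx i
        have a2 := hx l
        have a3 := hx (i + 1)
        have a4 := hx (l + 1)
        rw [poch_succ] at a3 a4
        have b3 := right_ne_zero_of_mul a3
        have b4 := right_ne_zero_of_mul a4
        rw [poch_succ x i, poch_succ x l]
        field_simp
        ring

/-- The `q`-Vandermonde convolution in the form needed for the count of nilpotent forms. -/
lemma vandermonde {x : ℚ} (hx0 : x ≠ 0) (hx : ∀ m, poch x m ≠ 0) (r k : ℕ) (w : ℕ → ℚ)
    (h0 : w 0 = 0) (hk : ∀ j, k + 1 < j → w j = 0)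
    (hw : ∀ i l t, i + l = r → i + t = k → w (i + 1) =
      x ^ (i * (i + 1)) * poch x (k + 1) * poch x r /
        (poch x i * poch x (i + 1) * poch x l * poch x t)) :
    ∑ j ∈ Finset.range (r + 2), w j = poch x (r + 1 + k) / (poch x (r + 1) * poch x k) := by
  have h1 := gauss_coeff hx (r + 1) k
  rw [show r + 1 + k = r + (k + 1) by omega, gauss_add, coeff_mul,
    Finset.Nat.sum_antidiagonal_eq_sum_range_succ (fun i j =>
      ((gauss x (k + 1)).comp (C (x ^ r) * X)).coeff i * (gauss x r).coeff j)] at h1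
  have hne : x ^ ((r + 1).choose 2) ≠ 0 := pow_ne_zero _ hx0
  rw [mul_div_assoc] at h1
  rw [show r + 1 + k = r + (k + 1) by omega]
  refine mul_left_cancel₀ hne ?_
  rw [← h1, Finset.mul_sum]
  refine Finset.sum_congr rfl fun j hj => ?_
  rw [comp_C_mul_X_coeff]
  rcases j with - | i
  · rw [h0, gauss_coeff_gt x (show r < r + 1 - 0 by omega)]; simp
  by_cases hik : k + 1 < i + 1
  · rw [hk _ hik, gauss_coeff_gt x hik]; simp
  obtain ⟨t, rfl⟩ : ∃ t, k = i + t := ⟨k - i, by omega⟩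
  have hj' := Finset.mem_range.1 hj
  obtain ⟨l, rfl⟩ : ∃ l, r = i + l := ⟨r - i, by omega⟩
  have g1 := gauss_coeff hx (i + 1) t
  have g2 := gauss_coeff hx l i
  rw [show i + 1 + t = i + t + 1 by omega] at g1
  rw [show l + i = i + l by omega] at g2
  rw [hw i l t rfl rfl, g1, show i + l + 1 - (i + 1) = l by omega, g2]
  have e : x ^ ((i + l + 1).choose 2) * x ^ (i * (i + 1)) =
      x ^ ((i + 1).choose 2) * (x ^ (i + l)) ^ (i + 1) * x ^ (l.choose 2) := by
    rw [← pow_mul, ← pow_add, ← pow_add, ← pow_add]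
    congr 1
    have : (((i + l + 1).choose 2 + i * (i + 1) : ℕ) : ℚ) =
        ((i + 1).choose 2 + (i + l) * (i + 1) + l.choose 2 : ℕ) := by
      push_cast [Nat.cast_choose_two]
      ring
    exact_mod_cast this
  have a1 := hx i
  have a2 := hx l
  have a3 := hx (i + 1)
  have a4 := hx t
  field_simp
  linear_combination (poch x (i + t + 1) * poch x (i + l)) * e

end F

/-! ### Closed forms -/

section G
variable {F : Type} [Field F] [StarRing F]

/-- The product `∏_{i=1}^m (q^(2 * i) - 1)`. -/
def ordR (q m : ℕ) : ℚ := ∏ i ∈ Finset.range m, ((q : ℚ) ^ (2 * (i + 1)) - 1)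

lemma ordR_succ (q m : ℕ) : ordR q (m + 1) = ordR q m * ((q : ℚ) ^ (2 * (m + 1)) - 1) :=
  Finset.prod_range_succ _ _

lemma ordR_zero (q : ℕ) : ordR q 0 = 1 := Finset.prod_range_zero _

lemma ordR_ne {q : ℕ} (hq : 2 ≤ q) (m : ℕ) : ordR q m ≠ 0 := by
  refine Finset.prod_ne_zero_iff.2 fun i _ => ?_
  have : (1 : ℚ) < (q : ℚ) ^ (2 * (i + 1)) :=
    one_lt_pow₀ (by exact_mod_cast hq) (by omega)
  linarith [this]

/-- The parameter `-1/q`. -/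
def xq (q : ℕ) : ℚ := -1 / q

/-- The factors of the unitary group order in terms of `xq q`. -/
lemma xq_pow {q : ℕ} (hq : 2 ≤ q) (m : ℕ) :
    (q : ℚ) ^ m * (1 - xq q ^ m) = (q : ℚ) ^ m - (-1) ^ m := by
  have : (q : ℚ) ≠ 0 := by positivity
  unfold xq
  rw [div_pow]
  field_simp

lemma xq_ne {q : ℕ} (hq : 2 ≤ q) : xq q ≠ 0 := by
  have : (q : ℚ) ≠ 0 := by positivity
  unfold xq
  simpa using this

lemma poch_ne {q : ℕ} (hq : 2 ≤ q) (m : ℕ) : poch (xq q) m ≠ 0 := by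
  refine Finset.prod_ne_zero_iff.2 fun i _ h => ?_
  have := xq_pow hq (i + 1)
  rw [h, mul_zero] at this
  have h1 : (1 : ℚ) < (q : ℚ) ^ (i + 1) := one_lt_pow₀ (by exact_mod_cast hq) (by omega)
  rcases neg_one_pow_eq_or ℚ (i + 1) with h | h <;> rw [h] at this <;> linarith

lemma inj_succ (Q a k : ℕ) : inj Q (a + 1) (k + 1) = (Q ^ (a + 1) - 1) * (Q ^ k * inj Q a k) := by
  unfold inj
  rw [Fin.prod_univ_succ]
  congr 1
  simp only [Fin.val_succ, pow_succ', ← Nat.mul_sub, Finset.prod_mul_distrib]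
  simp

/-- `inj` as a quotient of products `ordR`, with the denominator cleared. -/
lemma inj_cast {q : ℕ} (hq : 2 ≤ q) (r k : ℕ) :
    (inj (q ^ 2) (r + k) k : ℚ) * ordR q r = (q : ℚ) ^ (k * (k - 1)) * ordR q (r + k) := by
  induction k with
  | zero => simp [inj]
  | succ k ih =>
    rw [← add_assoc, inj_succ, ordR_succ]
    have : 1 ≤ (q ^ 2) ^ (r + k + 1) := Nat.one_le_pow _ _ (by positivity)
    push_cast [Nat.cast_sub this]
    have e : (q : ℚ) ^ ((k + 1) * k) = (q : ℚ) ^ (k * (k - 1)) * (q ^ 2) ^ k := by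
      rw [← pow_mul, ← pow_add]
      congr 1
      rcases k with - | k
      · rfl
      · simp; ring
    rw [e, pow_mul]
    linear_combination ((q : ℚ) ^ 2) ^ k * (((q : ℚ) ^ 2) ^ (r + k + 1) - 1) * ih

lemma inj_self_ne {q : ℕ} (hq : 2 ≤ q) (k : ℕ) : (inj (q ^ 2) k k : ℚ) ≠ 0 := by
  have := inj_cast hq 0 k
  rw [zero_add, ordR_zero, mul_one] at this
  rw [this]
  have : (q : ℚ) ≠ 0 := by positivity
  exact mul_ne_zero (by positivity) (ordR_ne hq k)

lemma hc_zero [Fintype F] : hc F 0 = 1 := by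
  classical
  unfold hc
  rw [Finset.filter_true_of_mem]
  · rw [Finset.card_univ]
    exact Fintype.card_eq_one_iff.2 ⟨0, fun _ => Subsingleton.elim _ _⟩
  · intro A _
    exact ⟨Subsingleton.elim _ _, fun v _ => Subsingleton.elim _ _⟩

lemma hc_one [Fintype F] {q : ℕ} (hF : Fintype.card F = q ^ 2) (hβ : ∃ β : F, star β ≠ β) :
    hc F 1 + 1 = q := by
  classical
  have h := card_herm hF hβ 1
  rw [one_pow, pow_one] at h
  rw [← Finset.card_filter_add_card_filter_not (p := fun A => NS A),
    Finset.filter_filter, Finset.filter_filter] at h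
  rw [← h]
  unfold hc
  congr 1
  symm
  rw [Finset.card_eq_one]
  refine ⟨0, ?_⟩
  ext A
  simp only [Finset.mem_filter, Finset.mem_univ, true_and, Finset.mem_singleton]
  constructor
  · rintro ⟨-, h⟩
    by_contra hA
    refine h fun v hv => ?_
    have h0 : A 0 0 ≠ 0 := by
      intro h0
      apply hA
      ext i j
      rw [Subsingleton.elim i 0, Subsingleton.elim j 0, h0]; rfl
    have := congrFun hv 0
    simp [mulVec, dotProduct, h0] at this
    ext i
    rw [Subsingleton.elim i 0, this]; rfl
  · rintro rfl
    refine ⟨conjTranspose_zero, fun h => ?_⟩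
    have := congrFun (h 1 (zero_mulVec _)) 0
    simp at this

lemma extNum_eq_zero [Fintype F] {q r j k : ℕ} (h : k < j) : extNum F q r j k = 0 := by
  unfold extNum
  have : inj (q ^ 2) k j = 0 := Finset.prod_eq_zero (Finset.mem_univ ⟨k, h⟩) (by simp)
  rw [this]; simp

/-- The two-step recursion for the number of nonsingular Hermitian matrices. -/
lemma hc_step [Fintype F] {q : ℕ} (hF : Fintype.card F = q ^ 2) (hβ : ∃ β : F, star β ≠ β)
    (hq : 2 ≤ q) (m : ℕ) : (hc F (m + 2) : ℚ) = (q : ℚ) ^ (2 * (m + 1)) * (q - 1) * hc F (m + 1) +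
      (q : ℚ) ^ (2 * m + 1) * ((q : ℚ) ^ (2 * (m + 1)) - 1) * hc F m := by
  have h := hc_rec hF hβ (m + 1) 1
  rw [show m + 1 + 1 = m + 2 by rfl, Finset.sum_range_succ', Finset.sum_range_succ',
    Finset.sum_eq_zero (fun j _ => by rw [extNum_eq_zero (by omega), mul_zero]), cnt_zero] at h
  have h1 := cnt_rec (F := F) hF m 1
  have hq1 : (hc F 1 : ℚ) = q - 1 := by
    have := hc_one hF hβ
    rw [← this]; push_cast; ring
  rw [h]
  have i1 : ∀ a, (inj (q ^ 2) a 1 : ℚ) = (q : ℚ) ^ (2 * a) - 1 := by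
    intro a
    have : 1 ≤ (q ^ 2) ^ a := Nat.one_le_pow _ _ (by positivity)
    simp [inj, Nat.cast_sub this, pow_mul]
  have h1' : (inj (q ^ 2) 1 1 : ℚ) * cnt F (m + 1) 1 = inj (q ^ 2) (m + 1) 1 * hc F m := by
    exact_mod_cast h1
  rw [i1] at h1'
  simp only [extNum, Nat.cast_add, Nat.cast_mul, Nat.cast_pow]
  rw [i1] at h1' ⊢
  simp [hc_zero, hq1, inj]
  rw [mul_one] at h1'
  simp only [← pow_mul]
  linear_combination (q : ℚ) ^ (2 * m) * q * h1'

lemma hc_succ [Fintype F] {q : ℕ} (hF : Fintype.card F = q ^ 2) (hβ : ∃ β : F, star β ≠ β)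
    (hq : 2 ≤ q) (m : ℕ) : (hc F (m + 1) : ℚ) =
      (q : ℚ) ^ m * ((q : ℚ) ^ (m + 1) - (-1) ^ m) * hc F m := by
  induction m with
  | zero =>
    rw [hc_zero]
    have := hc_one hF hβ
    rw [← this]; push_cast; ring
  | succ m ih =>
    rw [hc_step hF hβ hq, ih]
    have : ((-1 : ℚ) ^ m) ^ 2 = 1 := by rw [← pow_mul]; simp
    linear_combination ((q : ℚ) ^ m * q ^ (m + 1) * hc F m) * this

/-- Closed form of the number of nonsingular Hermitian matrices. -/
lemma hc_closed [Fintype F] {q : ℕ} (hF : Fintype.card F = q ^ 2) (hβ : ∃ β : F, star β ≠ β)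
    (hq : 2 ≤ q) (m : ℕ) : (hc F m : ℚ) * ((q : ℚ) ^ m * poch (xq q) m) = ordR q m := by
  induction m with
  | zero => simp [hc_zero, poch_zero, ordR_zero]
  | succ m ih =>
    rw [hc_succ hF hβ hq, poch_succ, ordR_succ, ← ih]
    have h1 := xq_pow hq (m + 1)
    have : ((-1 : ℚ) ^ m) ^ 2 = 1 := by rw [← pow_mul]; simp
    linear_combination ((q : ℚ) ^ m * ((q : ℚ) ^ (m + 1) - (-1) ^ m) * hc F m * poch (xq q) m) * h1 -
      ((q : ℚ) ^ m * hc F m * poch (xq q) m) * this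

/-- Closed form of `extNum`, in terms of `l = r - j` and `t = k - j`. -/
lemma ext_closed [Fintype F] {q : ℕ} (hF : Fintype.card F = q ^ 2) (hβ : ∃ β : F, star β ≠ β)
    (hq : 2 ≤ q) (j l t : ℕ) : (extNum F q (j + l) j (j + t) : ℚ) * (q ^ t * poch (xq q) t) =
      (q : ℚ) ^ (2 * l * (j + t) + j * (j - 1) + 2 * t * j + j ^ 2) * ordR q (j + t) := by
  have h1 := hc_closed hF hβ hq t
  have h2 := inj_cast hq t j
  have h3 := ordR_ne hq t
  unfold extNum
  rw [add_comm t j] at h2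
  rw [show j + l - j = l by omega, show j + t - j = t by omega]
  push_cast
  have h4 : (inj (q ^ 2) (j + t) j : ℚ) * (hc F t * (q ^ t * poch (xq q) t)) =
    (q : ℚ) ^ (j * (j - 1)) * ordR q (j + t) := by rw [h1, h2]
  rw [pow_add, pow_add, pow_add, mul_assoc 2 l, mul_assoc 2 t, pow_mul _ 2, pow_mul _ 2]
  linear_combination (((q : ℚ) ^ 2) ^ (l * (j + t)) * ((q : ℚ) ^ 2) ^ (t * j) * q ^ (j ^ 2)) * h4

lemma pairs_zero_zero [Fintype F] : pairs F 0 0 = 1 := by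
  classical
  unfold pairs
  rw [Finset.filter_true_of_mem]
  · rw [Fintype.sum_subsingleton _ 0, Finset.filter_true_of_mem]
    · rw [Finset.card_univ]
      exact Fintype.card_eq_one_iff.2 ⟨0, fun _ => Subsingleton.elim _ _⟩
    · intro A _
      refine ⟨⟨Subsingleton.elim _ _, ?_⟩, ⟨1, Subsingleton.elim _ _⟩⟩
      rw [nul_eq_zero]
      exact fun v _ => Subsingleton.elim _ _
  · intro A _
    exact ⟨Subsingleton.elim _ _, fun v _ => Subsingleton.elim _ _⟩

/-- A product of two nonsingular matrices of positive size is never nilpotent. -/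
lemma pairs_succ_zero [Fintype F] (r : ℕ) : pairs F (r + 1) 0 = 0 := by
  classical
  unfold pairs
  refine Finset.sum_eq_zero fun H hH => ?_
  rw [Finset.card_eq_zero, Finset.filter_eq_empty_iff]
  rintro P - ⟨⟨-, h1⟩, h2⟩
  have hH' := (Finset.mem_filter.1 hH).2.2
  rw [nul_eq_zero, NS_iff_isUnit] at h1
  rw [NS_iff_isUnit] at hH'
  exact h2.not_isUnit (h1.mul hH')

/-- Closed form of the number of pairs. -/
lemma pairs_closed [Fintype F] {q : ℕ} (hF : Fintype.card F = q ^ 2) (hβ : ∃ β : F, star β ≠ β)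
    (hq : 2 ≤ q) (r k : ℕ) : (pairs F (r + (k + 1)) (k + 1) : ℚ) *
      (q ^ (2 * r + (k + 1)) * (poch (xq q) r * poch (xq q) k * poch (xq q) (k + 1))) =
      ordR q (r + (k + 1)) * q ^ (r ^ 2 + 2 * r * (k + 1)) * poch (xq q) (r + k) := by
  induction r using Nat.strong_induction_on generalizing k with
  | _ r ih =>
  have hrec : (inj (q ^ 2) (k + 1) (k + 1) : ℚ) * pairs F (r + (k + 1)) (k + 1) =
      inj (q ^ 2) (r + (k + 1)) (k + 1) *
      ∑ j ∈ Finset.range (r + 1), (pairs F r j : ℚ) * extNum F q r j (k + 1) := by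
    exact_mod_cast pairs_rec hF hβ r (k + 1)
  have hi := inj_self_ne hq (k + 1)
  rcases r with - | r
  · have e := ext_closed hF hβ hq 0 0 (k + 1)
    simp only [zero_add] at e hrec
    have h3 := mul_left_cancel₀ hi hrec
    rw [Finset.sum_range_one, pairs_zero_zero, Nat.cast_one, one_mul] at h3
    simp only [zero_add, h3, poch_zero]
    simp at e
    simp
    linear_combination poch (xq q) k * e
  · have hq0 : (q : ℚ) ≠ 0 := by positivity
    -- `c` normalizes the summands to those of the `q`-Vandermonde convolution
    set c : ℚ := ordR q (r + 1) * ordR q (k + 1) * q ^ ((r + 1) ^ 2 + 2 * (r + 1) * (k + 1)) /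
      (q ^ (2 * (r + 1) + (k + 1)) * poch (xq q) (k + 1)) with hc'
    have hc0 : c ≠ 0 := by
      have := poch_ne hq (k + 1)
      have := ordR_ne hq (k + 1)
      have := ordR_ne hq (r + 1)
      positivity
    have hV := vandermonde (xq_ne hq) (poch_ne hq) r k
      (fun j => (pairs F (r + 1) j : ℚ) * extNum F q (r + 1) j (k + 1) / c)
      (by simp [pairs_succ_zero]) (fun j hj => by simp [extNum_eq_zero hj]) ?_
    -- the sum in the recursion is evaluated by the convolution identity
    · rw [← Finset.sum_div, div_eq_iff hc0] at hV
      rw [hV] at hrec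
      have e1 := inj_cast hq 0 (k + 1)
      have e2 := inj_cast hq (r + 1) (k + 1)
      rw [zero_add, ordR_zero, mul_one] at e1
      have n1 := ordR_ne hq (r + 1)
      have n2 := ordR_ne hq (k + 1)
      have n3 := poch_ne hq (k + 1)
      have n4 := poch_ne hq (r + 1)
      have n5 := poch_ne hq k
      rw [← eq_div_iff n1] at e2
      rw [e2, e1, mul_assoc] at hrec
      rw [mul_div_assoc, mul_assoc] at hrec
      have h3 := mul_left_cancel₀ (pow_ne_zero _ hq0) hrec
      rw [mul_comm (ordR q (k + 1)), ← eq_div_iff n2] at h3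
      rw [h3, hc']
      field_simp
    -- the summand with nullity `i + 1`, from the induction hypothesis for size `i + 1 + l`
    · rintro i l t rfl rfl
      have e := ext_closed hF hβ hq (i + 1) l t
      have p := ih l (by omega) i
      rw [show i + t + 1 = i + 1 + t by omega] at *
      rw [show i + l + 1 = i + 1 + l by omega] at *
      rw [show l + (i + 1) = i + 1 + l by omega, add_comm l i] at p
      have m1 := poch_ne hq i
      have m2 := poch_ne hq (i + 1)
      have m3 := poch_ne hq l
      have m4 := poch_ne hq t
      have m5 := poch_ne hq (i + 1 + t)
      have n1 := ordR_ne hq (i + 1 + l)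
      have n2 := ordR_ne hq (i + 1 + t)
      rw [← eq_div_iff (by positivity)] at e p
      have hx : xq q ^ (i * (i + 1)) = 1 / (q : ℚ) ^ (i * (i + 1)) := by
        unfold xq
        rw [div_pow, (Nat.even_mul_succ_self i).neg_one_pow]
      rw [hx, e, p, hc']
      field_simp
      rw [Nat.add_sub_cancel]
      have eq1 : (q : ℚ) ^ (l ^ 2 + 2 * l * (i + 1)) *
          (q : ℚ) ^ (2 * l * (i + 1 + t) + (i + 1) * i + 2 * t * (i + 1) + (i + 1) ^ 2) *
          (q : ℚ) ^ (2 * (i + 1 + l) + (i + 1 + t)) * (q : ℚ) ^ (i * (i + 1)) =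
          (q : ℚ) ^ (2 * l + (i + 1)) * (q : ℚ) ^ t *
          (q : ℚ) ^ ((i + 1 + l) ^ 2 + 2 * (i + 1 + l) * (i + 1 + t)) := by
        simp only [← pow_add]
        congr 1
        ring
      linear_combination poch (xq q) (i + l) * eq1

end G

/-! ### Congruence of nonsingular Hermitian forms -/

section H
variable {F : Type} [Field F] [StarRing F]
variable {ι : Type} [Fintype ι] [DecidableEq ι]

/-- Parameters of the Cayley transform: `α` of trace one and `δ` skew for the involution. -/
lemma exists_trace_one (hβ : ∃ β : F, star β ≠ β) :
    ∃ α δ : F, α ≠ 0 ∧ δ ≠ 0 ∧ star δ = -δ ∧ star α = 1 - α := by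
  obtain ⟨β, hβ⟩ := hβ
  have hd : β - star β ≠ 0 := sub_ne_zero.2 hβ.symm
  have hs : star (β - star β) = -(β - star β) := by simp
  refine ⟨β / (β - star β), β - star β, div_ne_zero ?_ hd, hd, hs, ?_⟩
  · rintro rfl
    simp at hβ
  · rw [star_div₀, hs]
    field_simp
    ring

/-- A nonzero Hermitian form represents `1` when every fixed scalar is a norm, as over a finite
field. -/
lemma herm_normalize (hβ : ∃ β : F, star β ≠ β)
    (hnorm : ∀ c : F, c ≠ 0 → star c = c → ∃ a, a * star a = c)
    {M : Matrix ι ι F} (hM : Mᴴ = M) (h0 : M ≠ 0) :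
    ∃ W : Matrix ι (Fin 1) F, Wᴴ * M * W = 1 := by
  obtain ⟨α, -, -, -, -, hα⟩ := exists_trace_one hβ
  have h1 : ∃ w : ι → F, star w ⬝ᵥ M *ᵥ w ≠ 0 := by
    by_contra! h
    apply h0
    ext i j
    by_contra hij
    have hij' : M i j ≠ 0 := hij
    have hji : M j i = star (M i j) := by
      conv_lhs => rw [← hM]
      rfl
    have e1 := h (Pi.single i 1)
    have e2 := h (Pi.single j 1)
    -- the coefficient is chosen so that the cross terms have sum `α + star α = 1`
    have e3 := h (star (α / M i j) • Pi.single i 1 + Pi.single j 1)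
    have hs : ∀ l : ι, star (Pi.single l (1 : F)) = (Pi.single l (1 : F) : ι → F) := by
      intro l; rw [← Pi.single_star, star_one]
    simp only [star_add, star_smul, hs, mulVec_add, mulVec_smul, add_dotProduct, dotProduct_add,
      smul_dotProduct, dotProduct_smul, star_star, smul_eq_mul, single_one_dotProduct] at e1 e2 e3
    simp only [mulVec_single_one] at e1 e2 e3
    simp only [Matrix.col_apply] at e1 e2 e3
    rw [e1, e2, hji, star_div₀, hα] at e3
    have : star (M i j) ≠ 0 := by simpa using hij'
    field_simp at e3
    refine mul_ne_zero this hij' ?_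
    linear_combination e3
  obtain ⟨w, hw⟩ := h1
  have hc : star (star w ⬝ᵥ M *ᵥ w) = star w ⬝ᵥ M *ᵥ w := by
    rw [← star_dotProduct_star, star_star, star_mulVec, hM, dotProduct_mulVec, dotProduct_comm]
  obtain ⟨a, ha⟩ := hnorm _ hw hc
  have ha0 : a ≠ 0 := by rintro rfl; simp at ha; exact hw ha.symm
  refine ⟨replicateCol (Fin 1) (a⁻¹ • w), ?_⟩
  ext i j
  rw [Subsingleton.elim i 0, Subsingleton.elim j 0, Matrix.mul_assoc]
  have : ((replicateCol (Fin 1) (a⁻¹ • w))ᴴ * (M * replicateCol (Fin 1) (a⁻¹ • w))) 0 0 =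
      star (a⁻¹ • w) ⬝ᵥ M *ᵥ (a⁻¹ • w) := rfl
  rw [this, star_smul, mulVec_smul, smul_dotProduct, dotProduct_smul, ← ha]
  have : star a ≠ 0 := by simpa using ha0
  simp
  field_simp

/-- A nonsingular Hermitian form has an orthonormal family of any size up to the dimension. -/
lemma exists_frame (hβ : ∃ β : F, star β ≠ β)
    (hnorm : ∀ c : F, c ≠ 0 → star c = c → ∃ a, a * star a = c) {n : ℕ}
    {b : Matrix (Fin n) (Fin n) F} (hb : bᴴ = b) (hns : NS b) (m : ℕ) (hm : m ≤ n) :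
    ∃ V : Matrix (Fin n) (Fin m) F, Vᴴ * b * V = 1 := by
  induction m with
  | zero => exact ⟨0, Subsingleton.elim _ _⟩
  | succ m ih =>
    obtain ⟨V, hV⟩ := ih (by omega)
    -- the projection to the orthogonal complement of the columns of `V`
    let E : Matrix (Fin n) (Fin n) F := 1 - V * (Vᴴ * b)
    have hVE : Vᴴ * b * E = 0 := by
      rw [Matrix.mul_sub, ← Matrix.mul_assoc _ V, hV]; simp
    have hEb : Eᴴ * b * E = b * E := by
      have : Eᴴ = 1 - b * V * Vᴴ := by simp [E, hb]
      rw [this, Matrix.sub_mul, Matrix.sub_mul, Matrix.one_mul, Matrix.mul_assoc _ Vᴴ,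
        Matrix.mul_assoc _ (Vᴴ * b), hVE]
      simp
    have hne : b * E ≠ 0 := by
      intro h
      have hE : E = 0 := by
        rw [← Matrix.one_mul E, ← (NS_inv hns).2, Matrix.mul_assoc, h, Matrix.mul_zero]
      have h1 : V * (Vᴴ * b) = 1 := (sub_eq_zero.1 hE).symm
      have h2 := Matrix.rank_mul_le_left V (Vᴴ * b)
      rw [h1, Matrix.rank_one] at h2
      have h3 := Matrix.rank_le_width V
      simp at h2
      omega
    obtain ⟨W, hW⟩ := herm_normalize hβ hnorm (M := b * E)
      (by rw [← hEb, congr_star hb]) hne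
    have e1 : Vᴴ * b * (E * W) = 0 := by rw [← Matrix.mul_assoc, hVE, Matrix.zero_mul]
    have e2 : (E * W)ᴴ * b * V = 0 := by
      have := congrArg conjTranspose e1
      rw [conjTranspose_mul _ (E * W), conjTranspose_mul Vᴴ, hb, conjTranspose_conjTranspose,
        conjTranspose_zero, ← Matrix.mul_assoc] at this
      exact this
    have e3 : (E * W)ᴴ * b * (E * W) = 1 := by
      rw [← hW, ← hEb, conjTranspose_mul]; simp only [Matrix.mul_assoc]
    refine ⟨(fromCols V (E * W)).submatrix id finSumFinEquiv.symm, ?_⟩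
    have e4 : (fromCols V (E * W))ᴴ * b * fromCols V (E * W) = 1 := by
      rw [conjTranspose_fromCols_eq_fromRows_conjTranspose, fromRows_mul,
        fromRows_mul_fromCols, hV, e1, e2, e3, fromBlocks_one]
    have e5 := congrArg (fun T => T.submatrix finSumFinEquiv.symm finSumFinEquiv.symm) e4
    simp only [submatrix_one_equiv] at e5
    rw [← e5]
    rfl

open Classical in
/-- The number of nilpotent Hermitian `n × n` matrices of nullity `k`. -/
noncomputable def nilCount (F : Type) [Field F] [StarRing F] [Fintype F] (n k : ℕ) : ℕ :=
  (Finset.univ.filter fun P : Matrix (Fin n) (Fin n) F =>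
      (Pᴴ = P ∧ nul P = k) ∧ IsNilpotent P).card

/-- All nonsingular Hermitian forms are congruent to the standard one, so each contributes
equally to the number of pairs. -/
lemma pairs_eq [Fintype F] (hβ : ∃ β : F, star β ≠ β)
    (hnorm : ∀ c : F, c ≠ 0 → star c = c → ∃ a, a * star a = c) (n k : ℕ) :
    pairs F n k = hc F n * nilCount F n k := by
  classical
  unfold pairs hc
  rw [← smul_eq_mul, ← Finset.sum_const]
  refine Finset.sum_congr rfl fun b hb => ?_
  obtain ⟨-, hb, hns⟩ := Finset.mem_filter.1 hb
  obtain ⟨V, hV⟩ := exists_frame hβ hnorm hb hns n le_rfl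
  have hWV : (Vᴴ * b) * V = 1 := hV
  have hVW : V * (Vᴴ * b) = 1 := mul_eq_one_comm.1 hWV
  set W := Vᴴ * b with hW
  have hbW : Wᴴ * W = b := by
    conv_lhs => rw [hW, ← Matrix.mul_assoc, ← conjTranspose_mul, hVW]
    simp
  have k1 : Vᴴ * Wᴴ = 1 := by rw [← conjTranspose_mul, hWV, conjTranspose_one]
  have k2 : Wᴴ * Vᴴ = 1 := by rw [← conjTranspose_mul, hVW, conjTranspose_one]
  have c1 : ∀ P : Matrix (Fin n) (Fin n) F, V * (W * P * Wᴴ) * Vᴴ = P := by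
    intro P
    calc _ = (V * W) * P * (Wᴴ * Vᴴ) := by simp only [Matrix.mul_assoc]
      _ = P := by rw [hVW, k2]; simp
  have c2 : ∀ P : Matrix (Fin n) (Fin n) F, W * (V * P * Vᴴ) * Wᴴ = P := by
    intro P
    calc _ = (W * V) * P * (Vᴴ * Wᴴ) := by simp only [Matrix.mul_assoc]
      _ = P := by rw [hWV, k1]; simp
  have key : ∀ P : Matrix (Fin n) (Fin n) F, ((Pᴴ = P ∧ nul P = k) ∧ IsNilpotent (P * b)) ↔
      (((W * P * Wᴴ)ᴴ = W * P * Wᴴ ∧ nul (W * P * Wᴴ) = k) ∧ IsNilpotent (W * P * Wᴴ)) := by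
    intro P
    have n1 := nul_congr (C := Wᴴ) (D := Vᴴ) k2 k1 P
    rw [conjTranspose_conjTranspose] at n1
    have n2 : IsNilpotent (W * P * Wᴴ) ↔ IsNilpotent (P * b) := by
      rw [Matrix.mul_assoc, nil_comm_iff, Matrix.mul_assoc, hbW]
    have n3 : (W * P * Wᴴ)ᴴ = W * Pᴴ * Wᴴ := by simp [Matrix.mul_assoc]
    rw [n1, n2, n3]
    constructor
    · rintro ⟨⟨h1, h2⟩, h3⟩
      exact ⟨⟨by rw [h1], h2⟩, h3⟩
    · rintro ⟨⟨h1, h2⟩, h3⟩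
      refine ⟨⟨?_, h2⟩, h3⟩
      rw [← c1 Pᴴ, h1, c1]
  unfold nilCount
  refine Finset.card_nbij' (fun P => W * P * Wᴴ) (fun P => V * P * Vᴴ) ?_ ?_ ?_ ?_
  · intro P h
    simp only [Finset.coe_filter, Finset.mem_univ, true_and, Set.mem_ofPred_eq] at h ⊢
    exact (key P).1 h
  · intro P h
    simp only [Finset.coe_filter, Finset.mem_univ, true_and, Set.mem_ofPred_eq] at h ⊢
    rw [key, c2]
    exact h
  · intro P _
    exact c1 P
  · intro P _
    exact c2 P

end H

/-! ### The Cayley transform -/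

section I
variable {F : Type} [Field F] [StarRing F]
variable {ι : Type} [Fintype ι] [DecidableEq ι]

lemma nul_unit_mul {U W : Matrix ι ι F} (h : W * U = 1) {δ : F} (hδ : δ ≠ 0) (A : Matrix ι ι F) :
    nul (δ • (U * A)) = nul A := by
  unfold nul
  suffices h : LinearMap.ker (δ • (U * A)).mulVecLin = LinearMap.ker A.mulVecLin by rw [h]
  ext v
  simp only [LinearMap.mem_ker, mulVecLin_apply, smul_mulVec, smul_eq_zero, hδ, false_or]
  constructor
  · intro h1
    rw [← Matrix.one_mul A, ← h, Matrix.mul_assoc, ← mulVec_mulVec, h1, mulVec_zero]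
  · intro h1
    rw [← mulVec_mulVec, h1, mulVec_zero]

/-- The Cayley correspondence: if `1 + α ν` and `1 - α Y` are mutually inverse, where
`star α = 1 - α` and `star δ = -δ`, then `1 + ν` is unitary exactly when `δ Y` is Hermitian. -/
lemma cayley_key {α δ : F} (hα0 : α ≠ 0) (hδ0 : δ ≠ 0) (hδ : star δ = -δ) (hα : star α = 1 - α)
    {ν Y : Matrix ι ι F} (h1 : (1 + α • ν) * (1 - α • Y) = 1) :
    ((1 + ν) * (1 + ν)ᴴ = 1 ↔ (δ • Y)ᴴ = δ • Y) ∧ (IsNilpotent ν ↔ IsNilpotent (δ • Y)) ∧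
      nul (δ • Y) = nul ν := by
  have h2 : (1 - α • Y) * (1 + α • ν) = 1 := mul_eq_one_comm.1 h1
  have hα1 : 1 - α ≠ 0 := by
    rw [← hα]; simpa using hα0
  have e1 : ν = (1 + α • ν) * Y := by
    rw [Matrix.mul_sub, Matrix.mul_one, Matrix.mul_smul, add_sub_assoc, add_eq_left,
      ← smul_sub, smul_eq_zero] at h1
    exact sub_eq_zero.1 (h1.resolve_left hα0)
  have e2 : ν = Y * (1 + α • ν) := by
    rw [Matrix.sub_mul, Matrix.one_mul, Matrix.smul_mul, add_sub_assoc, add_eq_left,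
      ← smul_sub, smul_eq_zero] at h2
    exact sub_eq_zero.1 (h2.resolve_left hα0)
  have e3 : Y = (1 - α • Y) * ν := by
    conv_rhs => rw [e1, ← Matrix.mul_assoc, h2, Matrix.one_mul]
  have e4 : Y = ν * (1 - α • Y) := by
    conv_rhs => rw [e2, Matrix.mul_assoc, h1, Matrix.mul_one]
  refine ⟨?_, ⟨fun h => ?_, fun h => ?_⟩, ?_⟩
  · set U := 1 + α • ν with hU
    set W := 1 - α • Y with hW
    have k1 : Uᴴ * Wᴴ = 1 := by rw [← conjTranspose_mul, h2, conjTranspose_one]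
    have k2 : Wᴴ * Uᴴ = 1 := by rw [← conjTranspose_mul, h1, conjTranspose_one]
    have g1 : U * Uᴴ - α • U - (1 - α) • Uᴴ = (α * (1 - α)) • ((1 + ν) * (1 + ν)ᴴ - 1) := by
      rw [hU]
      simp only [conjTranspose_add, conjTranspose_one, conjTranspose_smul, hα, Matrix.mul_add,
        Matrix.add_mul, Matrix.one_mul, Matrix.mul_one, Matrix.smul_mul, Matrix.mul_smul]
      module
    have g2 : (1 - α) • W + α • Wᴴ - 1 = -(α * (1 - α)) • (Y + Yᴴ) := by
      rw [hW]
      simp only [conjTranspose_sub, conjTranspose_one, conjTranspose_smul, hα]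
      module
    have g3 : W * (U * Uᴴ - α • U - (1 - α) • Uᴴ) * Wᴴ = -((1 - α) • W + α • Wᴴ - 1) := by
      simp only [Matrix.mul_sub, Matrix.sub_mul, Matrix.mul_smul, Matrix.smul_mul]
      rw [h2, ← Matrix.mul_assoc W U, h2, Matrix.one_mul, Matrix.one_mul, Matrix.mul_assoc W, k1,
        Matrix.mul_one]
      module
    have g4 : U * (W * (U * Uᴴ - α • U - (1 - α) • Uᴴ) * Wᴴ) * Uᴴ =
        U * Uᴴ - α • U - (1 - α) • Uᴴ := by
      generalize U * Uᴴ - α • U - (1 - α) • Uᴴ = Z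
      calc _ = (U * W) * Z * (Wᴴ * Uᴴ) := by simp only [Matrix.mul_assoc]
        _ = Z := by rw [h1, k2]; simp
    have hne : α * (1 - α) ≠ 0 := mul_ne_zero hα0 hα1
    have q1 : (1 + ν) * (1 + ν)ᴴ = 1 ↔ U * Uᴴ - α • U - (1 - α) • Uᴴ = 0 := by
      rw [g1, smul_eq_zero, or_iff_right hne, sub_eq_zero]
    have q2 : (1 - α) • W + α • Wᴴ - 1 = 0 ↔ Y + Yᴴ = 0 := by
      rw [g2, smul_eq_zero, or_iff_right (neg_ne_zero.2 hne)]
    have q3 : (δ • Y)ᴴ = δ • Y ↔ Y + Yᴴ = 0 := by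
      rw [conjTranspose_smul, hδ, neg_smul, neg_eq_iff_add_eq_zero, ← smul_add, smul_eq_zero,
        or_iff_right hδ0, add_comm]
    rw [q1, q3, ← q2]
    constructor
    · intro h
      rw [h, Matrix.mul_zero, Matrix.zero_mul] at g3
      exact neg_eq_zero.1 g3.symm
    · intro h
      rw [← g4, g3, h]
      simp
  -- `Y` and `ν` differ by a factor that commutes with both
  · have : Commute (1 - α • Y) ν := by
      unfold Commute SemiconjBy
      rw [← e3, ← e4]
    have h3 := this.isNilpotent_mul_left h
    rw [← e3] at h3
    exact h3.smul δ
  · have h3 : IsNilpotent Y := by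
      have := h.smul δ⁻¹
      rwa [smul_smul, inv_mul_cancel₀ hδ0, one_smul] at this
    have : Commute (1 + α • ν) Y := by
      unfold Commute SemiconjBy
      rw [← e1, ← e2]
    have h4 := this.isNilpotent_mul_left h3
    rwa [← e1] at h4
  · conv_lhs => rw [e3]
    exact nul_unit_mul h1 hδ0 ν

/-- The Cayley transform matches unipotent unitary matrices with nilpotent Hermitian ones. -/
lemma cayley_card [Fintype F] (hβ : ∃ β : F, star β ≠ β) (n k : ℕ) :
    Nat.card {A : Matrix (Fin n) (Fin n) F //
      A * Aᴴ = 1 ∧ IsNilpotent (A - 1) ∧ nul (A - 1) = k} = nilCount F n k := by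
  classical
  obtain ⟨α, δ, hα0, hδ0, hδ, hα⟩ := exists_trace_one hβ
  unfold nilCount
  rw [Nat.card_eq_fintype_card, Fintype.card_subtype]
  have hfwd : ∀ A : Matrix (Fin n) (Fin n) F, IsNilpotent (A - 1) →
      (1 + α • (A - 1)) * (1 + α • (A - 1))⁻¹ = 1 := by
    intro A h
    have := (h.smul α).isUnit_one_add
    exact Matrix.mul_nonsing_inv _ ((Matrix.isUnit_iff_isUnit_det _).1 this)
  have hbwd : ∀ X : Matrix (Fin n) (Fin n) F, IsNilpotent X →
      (1 - (α * δ⁻¹) • X)⁻¹ * (1 - (α * δ⁻¹) • X) = 1 := by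
    intro X h
    have := (h.smul (α * δ⁻¹)).isUnit_one_sub
    exact Matrix.nonsing_inv_mul _ ((Matrix.isUnit_iff_isUnit_det _).1 this)
  have keyf : ∀ A : Matrix (Fin n) (Fin n) F,
      1 - α • (α⁻¹ • (1 - (1 + α • (A - 1))⁻¹)) = (1 + α • (A - 1))⁻¹ := by
    intro A
    rw [smul_inv_smul₀ hα0, sub_sub_cancel]
  have keyb : ∀ X : Matrix (Fin n) (Fin n) F,
      1 + α • (α⁻¹ • ((1 - (α * δ⁻¹) • X)⁻¹ - 1)) = (1 - (α * δ⁻¹) • X)⁻¹ := by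
    intro A
    rw [smul_inv_smul₀ hα0, add_sub_cancel]
  have hX : ∀ X : Matrix (Fin n) (Fin n) F, 1 - α • (δ⁻¹ • X) = 1 - (α * δ⁻¹) • X := by
    intro X; rw [smul_smul]
  refine Finset.card_nbij' (fun A => δ • (α⁻¹ • (1 - (1 + α • (A - 1))⁻¹)))
    (fun X => 1 + α⁻¹ • ((1 - (α * δ⁻¹) • X)⁻¹ - 1)) ?_ ?_ ?_ ?_
  · intro A h
    simp only [Finset.coe_filter, Finset.mem_univ, true_and, Set.mem_ofPred_eq] at h ⊢
    obtain ⟨h1, h2, h3⟩ := h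
    obtain ⟨c1, c2, c3⟩ := cayley_key hα0 hδ0 hδ hα (ν := A - 1)
      (Y := α⁻¹ • (1 - (1 + α • (A - 1))⁻¹)) (by rw [keyf, hfwd A h2])
    rw [add_sub_cancel] at c1
    exact ⟨⟨c1.1 h1, c3.trans h3⟩, c2.1 h2⟩
  · intro X h
    simp only [Finset.coe_filter, Finset.mem_univ, true_and, Set.mem_ofPred_eq] at h ⊢
    obtain ⟨⟨h1, h2⟩, h3⟩ := h
    obtain ⟨c1, c2, c3⟩ := cayley_key hα0 hδ0 hδ hα (Y := δ⁻¹ • X)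
      (ν := α⁻¹ • ((1 - (α * δ⁻¹) • X)⁻¹ - 1)) (by rw [keyb, hX, hbwd X h3])
    rw [smul_inv_smul₀ hδ0] at c1 c2 c3
    rw [add_sub_cancel_left]
    exact ⟨c1.2 h1, c2.2 h3, c3.symm.trans h2⟩
  · intro A h
    simp only [Finset.coe_filter, Finset.mem_univ, true_and, Set.mem_ofPred_eq] at h
    have hd := (Matrix.isUnit_iff_isUnit_det _).1 (h.2.1.smul α).isUnit_one_add
    dsimp only
    rw [← hX, inv_smul_smul₀ hδ0, keyf, Matrix.nonsing_inv_nonsing_inv _ hd, add_sub_cancel_left,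
      inv_smul_smul₀ hα0, add_sub_cancel]
  · intro X h
    simp only [Finset.coe_filter, Finset.mem_univ, true_and, Set.mem_ofPred_eq] at h
    have hd := (Matrix.isUnit_iff_isUnit_det _).1 (h.2.smul (α * δ⁻¹)).isUnit_one_sub
    dsimp only
    rw [add_sub_cancel_left, keyb, Matrix.nonsing_inv_nonsing_inv _ hd, sub_sub_cancel, smul_smul,
      smul_smul]
    have : δ * (α⁻¹ * (α * δ⁻¹)) = 1 := by field_simp
    rw [mul_assoc] at *
    rw [this, one_smul]

lemma nil_iff {n : ℕ} (A : Matrix (Fin n) (Fin n) F) : IsNilpotent A ↔ A ^ n = 0 := by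
  constructor
  · intro h
    have h1 := (Matrix.isNilpotent_charpoly_sub_pow_of_isNilpotent h).eq_zero
    rw [sub_eq_zero, Fintype.card_fin] at h1
    have h2 := Matrix.aeval_self_charpoly A
    rw [h1] at h2
    simpa using h2
  · exact fun h => ⟨n, h⟩

/-- The closed form of the number of nilpotent Hermitian matrices of given nullity. -/
lemma nilCount_closed [Fintype F] {q : ℕ} (hF : Fintype.card F = q ^ 2)
    (hβ : ∃ β : F, star β ≠ β) (hq : 2 ≤ q)
    (hnorm : ∀ c : F, c ≠ 0 → star c = c → ∃ a, a * star a = c) (r k : ℕ) :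
    (nilCount F (r + (k + 1)) (k + 1) : ℚ) = (q : ℚ) ^ (r + (k + 1)) * poch (xq q) (r + (k + 1)) *
      q ^ (r ^ 2 + 2 * r * (k + 1)) * poch (xq q) (r + k) /
      (q ^ (2 * r + (k + 1)) * (poch (xq q) r * poch (xq q) k * poch (xq q) (k + 1))) := by
  have h1 := pairs_closed hF hβ hq r k
  have h2 := hc_closed hF hβ hq (r + (k + 1))
  rw [pairs_eq hβ hnorm] at h1
  push_cast at h1
  have hq0 : (q : ℚ) ≠ 0 := by positivity
  have m1 := poch_ne hq r
  have m2 := poch_ne hq k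
  have m3 := poch_ne hq (k + 1)
  have m4 := poch_ne hq (r + (k + 1))
  have n1 := ordR_ne hq (r + (k + 1))
  rw [eq_div_iff (by positivity)]
  have hh : (hc F (r + (k + 1)) : ℚ) ≠ 0 := by
    intro h
    rw [h, zero_mul] at h2
    exact n1 h2.symm
  rw [← h2] at h1
  refine mul_left_cancel₀ hh ?_
  linear_combination h1

lemma uOrderQ_eq {q : ℕ} (hq : 2 ≤ q) (m : ℕ) : uOrderQ q m = (q : ℚ) ^ (m ^ 2) * poch (xq q) m := by
  unfold uOrderQ poch
  simp only [← xq_pow hq]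
  rw [Finset.prod_mul_distrib, ← mul_assoc, Finset.prod_pow_eq_pow_sum, ← pow_add]
  congr 2
  have := Finset.sum_range_id_mul_two (m + 1)
  rw [Finset.sum_range_succ'] at this
  simp at this
  have h2 := Nat.triangle_succ m
  have h3 := Finset.sum_range_id_mul_two m
  have h4 := Finset.sum_range_id m
  rw [← h4]
  rcases m with - | m
  · simp
  · simp at h3 this ⊢
    nlinarith

lemma prod_Icc_eq (q k r : ℕ) : (∏ i ∈ Finset.Icc (k + 1) (k + r), (1 - 1 / (-(q : ℚ)) ^ i)) *
    poch (xq q) k = poch (xq q) (k + r) := by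
  have hx : ∀ i, 1 - 1 / (-(q : ℚ)) ^ i = 1 - xq q ^ i := by
    intro i
    unfold xq
    rw [← _root_.one_div_pow, one_div_neg_eq_neg_one_div, neg_div]
  simp only [hx]
  induction r with
  | zero => simp
  | succ r ih =>
    rw [← add_assoc, Finset.prod_Icc_succ_top (by omega), poch_succ, ← ih]
    ring

end I

/-- `x ↦ x ^ q` as a star structure on a field with `q ^ 2` elements. -/
@[reducible] def powStarRing (F : Type) [Field F] [Fintype F] (q : ℕ)
    (hF : Fintype.card F = q ^ 2) (hadd : ∀ x y : F, (x + y) ^ q = x ^ q + y ^ q) : StarRing F where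
  star x := x ^ q
  star_involutive x := by
    change (x ^ q) ^ q = x
    rw [← pow_mul, ← sq, ← hF, FiniteField.pow_card]
  star_mul x y := by
    change (x * y) ^ q = y ^ q * x ^ q
    rw [mul_pow, mul_comm]
  star_add x y := hadd x y

end HermCount

open HermCount in
/-- Lusztig: the number of unipotent elements of `U(n,q)` with a `k`-dimensional fixed space is
`(|U(n,q)|/|U(k,q)|) ∏_{r=k}^{n-1} (1 - (-q)^{-r}) / (q^{n-k} ∏_{r=1}^{n-k} (1 - (-q)^{-r}))`. -/
theorem statement14 (q : ℕ) (hq : IsPrimePow q) (n k : ℕ) (hk1 : 1 ≤ k) (hk2 : k ≤ n)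
    (F : Type) [Field F] [Fintype F] (hF : Fintype.card F = q ^ 2) :
    (Nat.card {A : Matrix (Fin n) (Fin n) F //
        A * (A.map (fun x => x ^ q))ᵀ = 1 ∧ (A - 1) ^ n = 0 ∧
        Module.finrank F (LinearMap.ker (Matrix.mulVecLin (A - 1))) = k} : ℚ) =
      uOrderQ q n / uOrderQ q k *
        (∏ r ∈ Finset.Icc k (n - 1), (1 - 1 / (-(q : ℚ)) ^ r)) /
        ((q : ℚ) ^ (n - k) * ∏ r ∈ Finset.Icc 1 (n - k), (1 - 1 / (-(q : ℚ)) ^ r)) := by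
  have hq2 : 2 ≤ q := hq.two_le
  have hadd : ∀ x y : F, (x + y) ^ q = x ^ q + y ^ q := by
    obtain ⟨p, e, hp, he, rfl⟩ := hq
    obtain ⟨p', hp'⟩ := CharP.exists F
    obtain ⟨m, hp'', hm⟩ := FiniteField.card F p'
    have : p' = p := by
      have h1 : p' ∣ (p ^ e) ^ 2 := by
        rw [← hF, hm]; exact dvd_pow_self _ m.ne_zero
      exact (Nat.prime_dvd_prime_iff_eq hp'' hp.nat_prime).1
        (hp''.dvd_of_dvd_pow (hp''.dvd_of_dvd_pow h1))
    subst this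
    have := Fact.mk hp''
    intro x y
    exact add_pow_char_pow x y _ _
  let _ : StarRing F := powStarRing F q hF hadd
  have hstar : ∀ x : F, star x = x ^ q := fun x => rfl
  -- a generator of `Fˣ` is moved by the involution, and its powers exhibit fixed scalars as norms
  obtain ⟨g, hg⟩ := IsCyclic.exists_generator (α := Fˣ)
  classical
  have hord : orderOf g = (q - 1) * (q + 1) := by
    rw [orderOf_eq_card_of_forall_mem_zpowers hg, Nat.card_eq_fintype_card, Fintype.card_units, hF]
    obtain ⟨m, rfl⟩ : ∃ m, q = m + 1 := ⟨q - 1, by omega⟩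
    rw [Nat.add_sub_cancel]
    have : (m + 1) ^ 2 = m * (m + 1 + 1) + 1 := by ring
    omega
  have hpow1 : ∀ m : ℕ, ((g ^ m : Fˣ) : F) ^ q = (g ^ m : Fˣ) → q + 1 ∣ m := by
    intro m h
    have h1 : (g ^ m) ^ q = g ^ m := Units.ext (by simpa using h)
    have h2 : g ^ (m * (q - 1)) = 1 := by
      have : (g ^ m) ^ (q - 1) * g ^ m = g ^ m := by
        rw [← pow_succ, Nat.sub_add_cancel (by omega), h1]
      rw [pow_mul]
      exact mul_eq_right.1 this
    have h3 := orderOf_dvd_of_pow_eq_one h2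
    rw [hord, mul_comm m] at h3
    exact Nat.dvd_of_mul_dvd_mul_left (by omega) h3
  have hβ : ∃ β : F, star β ≠ β := by
    refine ⟨g, fun h => ?_⟩
    have := hpow1 1 (by simpa [hstar] using h)
    have := Nat.le_of_dvd one_pos this
    omega
  have hnorm : ∀ c : F, c ≠ 0 → star c = c → ∃ a, a * star a = c := by
    intro c hc0 hc
    obtain ⟨m, hm⟩ := (mem_powers_iff_mem_zpowers.2 (hg (Units.mk0 c hc0)))
    have hm' : ((g ^ m : Fˣ) : F) = c := by
      have := congrArg Units.val hm
      simpa using this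
    obtain ⟨t, rfl⟩ := hpow1 m (by rw [hm', ← hstar, hc])
    refine ⟨(g ^ t : Fˣ), ?_⟩
    rw [hstar, ← hm', ← pow_succ', mul_comm, pow_mul]
    simp
  have hcard : Nat.card {A : Matrix (Fin n) (Fin n) F //
        A * (A.map (fun x => x ^ q))ᵀ = 1 ∧ (A - 1) ^ n = 0 ∧
        Module.finrank F (LinearMap.ker (Matrix.mulVecLin (A - 1))) = k} = nilCount F n k := by
    rw [← cayley_card hβ]
    refine Nat.card_congr (Equiv.subtypeEquivRight fun A => ?_)
    rw [nil_iff]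
    rfl
  rw [hcard]
  obtain ⟨k, rfl⟩ : ∃ k', k = k' + 1 := ⟨k - 1, by omega⟩
  obtain ⟨r, rfl⟩ : ∃ r, n = r + (k + 1) := ⟨n - (k + 1), by omega⟩
  rw [nilCount_closed hF hβ hq2 hnorm, uOrderQ_eq hq2, uOrderQ_eq hq2,
    show r + (k + 1) - 1 = k + r by omega, show r + (k + 1) - (k + 1) = r by omega]
  have p1 := prod_Icc_eq q k r
  have p2 := prod_Icc_eq q 0 r
  rw [poch_zero, mul_one, zero_add, zero_add] at p2
  have m1 := poch_ne hq2 r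
  have m2 := poch_ne hq2 k
  have m3 := poch_ne hq2 (k + 1)
  rw [← eq_div_iff m2] at p1
  rw [p1, p2, add_comm k r]
  have hq0 : (q : ℚ) ≠ 0 := by positivity
  field_simp
  have e : (q : ℚ) ^ (r + (k + 1)) * (q : ℚ) ^ (r ^ 2 + 2 * r * (k + 1)) * (q : ℚ) ^ ((k + 1) ^ 2) *
      (q : ℚ) ^ r = (q : ℚ) ^ (2 * r + (k + 1)) * (q : ℚ) ^ ((r + (k + 1)) ^ 2) := by
    simp only [← pow_add]
    congr 1
    ring
  linear_combination (poch (xq q) (r + (k + 1)) * poch (xq q) (r + k)) * e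
end

section
/- For every prime power q and every real number u with 0 < u < 1, the infinite product over all pairs (φ, r), where φ ranges over all monic irreducible polynomials over F_q other than the polynomial X and r ranges over all integers r ≥ 1, of the factors (1 − u^{deg φ} / q^{r·deg φ}), converges and equals 1 − u. -/
/-!
Taking logarithms, the claim becomes an identity between sums of nonnegative terms:
`-log (1 - u ^ d / q ^ (r d)) = ∑_{k ≥ 1} (u / q ^ r) ^ (k d) / k`, where `d = deg φ`. The triples
`(φ, r, k)` are regrouped according to `n = k d`. Since `1 / k = d / n`, the terms belonging to a
given `n` sum to

  `(u ^ n / n) * (∑_{φ ≠ X, deg φ ∣ n} deg φ) * ∑_{r ≥ 1} q ^ (-r n)`.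

The polynomial `X ^ (q ^ n) - X` is squarefree, and its monic irreducible factors are exactly those
of degree dividing `n`, so the sum of degrees is `q ^ n - 1` once `X` is removed
(`exists_finset_sum_natDegree`). The geometric series is `1 / (q ^ n - 1)`, so only `u ^ n / n`
remains, and `∑ u ^ n / n = -log (1 - u)`. As all terms are nonnegative, the regrouping is
legitimate and also yields convergence of the product.
-/

open Polynomial in
/-- Gauss's count of irreducible polynomials over a finite field, in the form obtained by comparing
degrees in the factorization of `X ^ (q ^ n) - X`; the `+ 1` accounts for the omitted factor `X`. -/
lemma exists_finset_sum_natDegree (F : Type) [Field F] [Fintype F] (n : ℕ) (hn : n ≠ 0) :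
    ∃ S : Finset F[X],
      (∀ φ, φ ∈ S ↔ φ.Monic ∧ Irreducible φ ∧ φ ≠ X ∧ φ.natDegree ∣ n) ∧
      ∑ φ ∈ S, φ.natDegree + 1 = Fintype.card F ^ n := by
  classical
  set q := Fintype.card F with hq
  have hq1 : 1 < q := Fintype.one_lt_card
  have hqn : 1 < q ^ n := Nat.one_lt_pow hn hq1
  set P : F[X] := X ^ q ^ n - X with hP
  have hP0 : P ≠ 0 := FiniteField.X_pow_card_pow_sub_X_ne_zero F hn hq1
  have hdeg : P.natDegree = q ^ n := FiniteField.X_pow_card_pow_sub_X_natDegree_eq F hn hq1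
  have hmonic : P.Monic := monic_X_pow_sub (by rw [degree_X]; exact_mod_cast hqn)
  have hsep : P.Separable := by
    obtain ⟨p, hp⟩ := CharP.exists F
    refine galois_poly_separable p _ (dvd_pow ?_ hn)
    rw [← CharP.cast_eq_zero_iff F p]
    exact FiniteField.cast_card_eq_zero F
  have hnodup : (UniqueFactorizationMonoid.normalizedFactors P).Nodup :=
    (UniqueFactorizationMonoid.squarefree_iff_nodup_normalizedFactors hP0).1 hsep.squarefree
  have hmem (φ : F[X]) : φ ∈ UniqueFactorizationMonoid.normalizedFactors P ↔
      Irreducible φ ∧ φ.Monic ∧ φ ∣ P := Polynomial.mem_normalizedFactors_iff hP0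
  have hsum : ∑ φ ∈ (UniqueFactorizationMonoid.normalizedFactors P).toFinset, φ.natDegree
      = q ^ n := by
    rw [Finset.sum_eq_multiset_sum, Multiset.toFinset_val, hnodup.dedup, ← natDegree_multiset_prod_of_monic, ← hdeg]
    · exact natDegree_eq_of_degree_eq (degree_eq_degree_of_associated
        (UniqueFactorizationMonoid.prod_normalizedFactors hP0))
    · exact fun φ h => ((hmem φ).1 h).2.1
  have hX : (X : F[X]) ∈ (UniqueFactorizationMonoid.normalizedFactors P).toFinset := by
    rw [Multiset.mem_toFinset, hmem]
    exact ⟨irreducible_X, monic_X,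
      dvd_sub (dvd_pow_self X (by lia)) dvd_rfl⟩
  refine ⟨(UniqueFactorizationMonoid.normalizedFactors P).toFinset.erase X, fun φ => ?_, ?_⟩
  · rw [Finset.mem_erase, Multiset.mem_toFinset, hmem]
    have key (hi : Irreducible φ) : φ.natDegree ∣ n ↔ φ ∣ P := by
      rw [hi.natDegree_dvd_iff_dvd_X_pow_card_pow_sub_X, Nat.card_eq_fintype_card]
    constructor
    · rintro ⟨h1, h2, h3, h4⟩
      exact ⟨h3, h2, h1, (key h2).2 h4⟩
    · rintro ⟨h1, h2, h3, h4⟩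
      exact ⟨h3, h2, h1, (key h2).1 h4⟩
  · rw [← hsum, ← Finset.sum_erase_add _ _ hX, natDegree_X]

/-- The terms of the triple sum with `k * deg φ = N`, where `1 / k` is written as `deg φ / N`
and `r` is shifted to start at `0`. -/
lemma hasSum_fiber {ι : Type} [Fintype ι] (d : ι → ℕ) (q N : ℕ) (u : ℝ) (hu : 0 ≤ u)
    (hN : N ≠ 0) (hq : 1 < q) (hd : ∑ i, d i + 1 = q ^ N) :
    HasSum (fun x : ι × ℕ => (d x.1 : ℝ) * ((u / (q : ℝ) ^ (x.2 + 1)) ^ N / N)) (u ^ N / N) := by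
  have hqN : (1 : ℝ) < (q : ℝ) ^ N := by exact_mod_cast Nat.one_lt_pow hN hq
  have hN' : (N : ℝ) ≠ 0 := by exact_mod_cast hN
  have h1 : HasSum (fun i => (d i : ℝ)) ((q : ℝ) ^ N - 1) := by
    convert hasSum_fintype (fun i => (d i : ℝ)) using 1
    rw [eq_comm, eq_sub_iff_add_eq]
    exact_mod_cast hd
  have h2 : HasSum (fun r : ℕ => (u / (q : ℝ) ^ (r + 1)) ^ N / N)
      (u ^ N / N / ((q : ℝ) ^ N - 1)) := by
    have hg := (hasSum_geometric_of_lt_one (r := ((q : ℝ) ^ N)⁻¹) (by positivity)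
      (inv_lt_one_of_one_lt₀ hqN)).mul_left (u ^ N / N * ((q : ℝ) ^ N)⁻¹)
    have h0 : (q : ℝ) ^ N ≠ 0 := by linarith
    have h1 : (q : ℝ) ^ N - 1 ≠ 0 := by linarith
    have hterm : (fun r : ℕ => (u / (q : ℝ) ^ (r + 1)) ^ N / N) =
        fun r => u ^ N / N * ((q : ℝ) ^ N)⁻¹ * ((q : ℝ) ^ N)⁻¹ ^ r := by
      ext r
      have : (q : ℝ) ≠ 0 := by positivity
      rw [mul_assoc, ← pow_succ', inv_pow, div_pow, ← pow_mul, ← pow_mul, mul_comm N]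
      ring
    have htot : u ^ N / N / ((q : ℝ) ^ N - 1) =
        u ^ N / N * ((q : ℝ) ^ N)⁻¹ * (1 - ((q : ℝ) ^ N)⁻¹)⁻¹ := by
      rw [mul_assoc, ← mul_inv, mul_sub, mul_one, mul_inv_cancel₀ h0, div_eq_mul_inv]
    rw [hterm, htot]
    exact hg
  have h3 := h1.mul h2 (h1.summable.mul_of_nonneg h2.summable (fun i => by positivity)
    (fun r => by positivity))
  have : (q : ℝ) ^ N - 1 ≠ 0 := by linarith
  rwa [mul_div_cancel₀ _ this] at h3

set_option maxHeartbeats 1000000 in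

/-- Lemma 1 of Fulman: `∏_{φ ≠ z} ∏_{r=1}^∞ (1 - u^{deg φ}/q^{r·deg φ}) = 1 - u`, the product
being over all monic irreducible polynomials `φ ≠ X` over `F_q` and all integers `r ≥ 1`. -/
theorem statement15 (q : ℕ) (hq : IsPrimePow q)
    (F : Type) [Field F] [Fintype F] (hF : Fintype.card F = q)
    (u : ℝ) (hu0 : 0 < u) (hu1 : u < 1) :
    Multipliable (fun p : {p : Polynomial F × ℕ //
        p.1.Monic ∧ Irreducible p.1 ∧ p.1 ≠ Polynomial.X ∧ 1 ≤ p.2} =>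
      (1 - u ^ p.1.1.natDegree / (q : ℝ) ^ (p.1.2 * p.1.1.natDegree))) ∧
    ∏' p : {p : Polynomial F × ℕ //
        p.1.Monic ∧ Irreducible p.1 ∧ p.1 ≠ Polynomial.X ∧ 1 ≤ p.2},
      (1 - u ^ p.1.1.natDegree / (q : ℝ) ^ (p.1.2 * p.1.1.natDegree)) = 1 - u := by
  classical
  have hq1 : 1 < q := hq.one_lt
  have hqR : (1 : ℝ) < q := by exact_mod_cast hq1
  have hex := fun n : ℕ => exists_finset_sum_natDegree F (n + 1) n.succ_ne_zero
  rw [hF] at hex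
  choose S hS hsum using hex
  set T := {p : Polynomial F × ℕ //
        p.1.Monic ∧ Irreducible p.1 ∧ p.1 ≠ Polynomial.X ∧ 1 ≤ p.2} with hT
  have hpos (p : T) : 0 < p.1.1.natDegree := p.2.2.1.natDegree_pos
  set x : T → ℝ := fun p => u ^ p.1.1.natDegree / (q : ℝ) ^ (p.1.2 * p.1.1.natDegree) with hx
  have hx0 (p : T) : 0 < x p := by positivity
  have hx1 (p : T) : x p < 1 := by
    refine (div_le_self (by positivity) (one_le_pow₀ hqR.le)).trans_lt ?_
    exact pow_lt_one₀ hu0.le hu1 (hpos p).ne'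
  -- `(n, φ, r)` with `deg φ ∣ n + 1` corresponds to the triple `(φ, r + 1, k)`, where
  -- `k * deg φ = n + 1`; the second component of the value is `k - 1`.
  let e : (Σ n : ℕ, (S n) × ℕ) → T × ℕ := fun a =>
    (⟨(a.2.1.1, a.2.2 + 1), ((hS _ _).1 a.2.1.2).1, ((hS _ _).1 a.2.1.2).2.1,
      ((hS _ _).1 a.2.1.2).2.2.1, Nat.le_add_left 1 _⟩, (a.1 + 1) / a.2.1.1.natDegree - 1)
  have hek (a) : ((e a).2 + 1) * a.2.1.1.natDegree = a.1 + 1 := by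
    have hdvd := ((hS _ _).1 a.2.1.2).2.2.2
    have hp : 0 < a.2.1.1.natDegree := ((hS _ _).1 a.2.1.2).2.1.natDegree_pos
    have := Nat.div_pos (Nat.le_of_dvd (Nat.succ_pos _) hdvd) hp
    simp only [e]
    rw [Nat.sub_add_cancel this, Nat.div_mul_cancel hdvd]
  have hinj : Function.Injective e := by
    intro a b hab
    have ha := hek a
    have hb := hek b
    have h1 : a.2.1.1 = b.2.1.1 := congrArg (fun t => t.1.1.1) hab
    have h2 : a.2.2 + 1 = b.2.2 + 1 := congrArg (fun t => t.1.1.2) hab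
    rw [hab, h1, hb] at ha
    obtain ⟨n, ⟨φ, hφ⟩, r⟩ := a
    obtain ⟨m, ⟨ψ, hψ⟩, s⟩ := b
    simp only [Nat.add_right_cancel_iff] at h1 h2 ha
    subst h1 h2 ha
    rfl
  have hsurj : Function.Surjective e := by
    rintro ⟨⟨⟨φ, r⟩, h1, h2, h3, h4⟩, k⟩
    have hp : 0 < φ.natDegree := h2.natDegree_pos
    have hN : (k + 1) * φ.natDegree - 1 + 1 = (k + 1) * φ.natDegree :=
      Nat.sub_add_cancel (Nat.mul_pos k.succ_pos hp)
    refine ⟨⟨(k + 1) * φ.natDegree - 1, ⟨φ, (hS _ _).2 ⟨h1, h2, h3, ?_⟩⟩, r - 1⟩, ?_⟩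
    · rw [hN]; exact dvd_mul_left _ _
    · refine Prod.ext (Subtype.ext (Prod.ext rfl (Nat.sub_add_cancel h4))) ?_
      simp only [e]
      rw [hN, Nat.mul_div_cancel _ hp, Nat.add_sub_cancel]
  set f : T × ℕ → ℝ := fun t => x t.1 ^ (t.2 + 1) / ((t.2 : ℝ) + 1) with hf
  have hf0 (t) : 0 ≤ f t := by have := hx0 t.1; positivity
  have hfe (a) : f (e a) = (a.2.1.1.natDegree : ℝ) *
      ((u / (q : ℝ) ^ (a.2.2 + 1)) ^ (a.1 + 1) / ((a.1 + 1 : ℕ) : ℝ)) := by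
    have hp : 0 < a.2.1.1.natDegree := ((hS _ _).1 a.2.1.2).2.1.natDegree_pos
    have hxe : x (e a).1 = (u / (q : ℝ) ^ (a.2.2 + 1)) ^ a.2.1.1.natDegree := by
      simp only [x, e]
      rw [div_pow, ← pow_mul]
    simp only [hf]
    rw [hxe, ← pow_mul, mul_comm a.2.1.1.natDegree, hek a, ← hek a]
    push_cast
    field_simp
  have hfib (n : ℕ) : HasSum (fun c : (S n) × ℕ => f (e ⟨n, c⟩)) (u ^ (n + 1) / ((n : ℝ) + 1)) := by
    simp only [hfe]
    have := hasSum_fiber (fun φ : S n => φ.1.natDegree) q (n + 1) u hu0.le n.succ_ne_zero hq1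
      (by rw [Finset.sum_coe_sort (S n) (fun φ => φ.natDegree)]; exact hsum n)
    simpa using this
  have hlog := Real.hasSum_pow_div_log_of_abs_lt_one (x := u) (by rwa [abs_of_pos hu0])
  have hsig : Summable (fun a => f (e a)) := by
    refine (summable_sigma_of_nonneg fun a => hf0 _).2 ⟨fun n => (hfib n).summable, ?_⟩
    simp only [(hfib _).tsum_eq]
    exact hlog.summable
  have hsig' : HasSum (fun a => f (e a)) (-Real.log (1 - u)) :=
    HasSum.sigma_of_hasSum hlog hfib hsig
  have hfT : HasSum f (-Real.log (1 - u)) :=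
    (Equiv.ofBijective e ⟨hinj, hsurj⟩).hasSum_iff.1 hsig'
  have hlogx : HasSum (fun p : T => -Real.log (1 - x p)) (-Real.log (1 - u)) :=
    hfT.prod_fiberwise fun p => Real.hasSum_pow_div_log_of_abs_lt_one
      (by rw [abs_of_pos (hx0 p)]; exact hx1 p)
  have hlogx' : HasSum (fun p : T => Real.log (1 - x p)) (Real.log (1 - u)) := by
    simpa using hlogx.neg
  have hprod := Real.hasProd_of_hasSum_log (fun p => sub_pos.2 (hx1 p)) hlogx'
  rw [Real.exp_log (sub_pos.2 hu1)] at hprod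
  exact ⟨hprod.multipliable, hprod.tprod_eq⟩
end

section
/- For every prime power q, letting F be the finite field with q² elements, and every real number u with 0 < u < 1: if S is the set of monic irreducible polynomials φ ∈ F[X] with φ ≠ X and φ̃ = φ, and R is any set of monic irreducible polynomials over F such that every ψ ∈ R satisfies ψ ≠ X and ψ̃ ≠ ψ, and such that for every monic irreducible φ ≠ X with φ̃ ≠ φ exactly one of φ, φ̃ belongs to R, then [∏_{φ∈S} ∏_{r=1}^∞ (1 + (−1)^r u^{deg φ}/q^{r·deg φ})] · [∏_{φ∈R} ∏_{r=1}^∞ (1 − u^{2·deg φ}/q^{2r·deg φ})] = 1 − u, all products converging. -/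
/-!
The identity is a zeta-function computation for the map `σ : x ↦ x^{-q}` on the units of the
algebraic closure `K` of `F`, whose square is the Frobenius map over `F`.

* Since `σ^N` is `x ↦ x^{(-q)^N}`, its fixed points are the roots of unity of order
  `q^N - (-1)^N`, which is prime to the characteristic, so there are exactly that many of them
  (`card_ptsOfPeriod_dualFrob`).
* If `x` is a root of an irreducible `φ`, then `σ x` is a root of `φ̃` (`minpoly_dualFrob`). Hence the
  cycles of `σ` correspond to `S ∪ R` (`exists_iterate_iff`): `φ ∈ S` gives a cycle of length `deg φ`,
  which is odd, and `φ ∈ R` gives a cycle of length `2 deg φ` (`minimalPeriod_dualFrob`).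
* Put `W_s = -u (-1/q)^s`. The factor of index `r` is `1 - W_r^{deg φ}` for `φ ∈ S`, by oddness of
  the degree, and `1 - W_r^{2 deg φ}` for `φ ∈ R`; so it is `1 - W_r^m` with `m` the length of the
  cycle. Counting fixed points, formally `∏ (1 - w^m) = (1 - q w) / (1 + w)`, the product being over
  all cycles. As `q W_{s+1} = -W_s`, the factor at `w = W_{s+1}` is `(1 + W_s) / (1 + W_{s+1})`, and
  the product over `s ≥ 0` telescopes to `1 + W_0 = 1 - u` (`hasSum_log_cycles`).

Rearrangements are justified on logarithms: the triple series of `W_{s+1}^n / n` over points `x`,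
exponents `n ≥ 1` with `σ^n x = x` and `s ≥ 0` converges absolutely for `0 < u < 1`.
-/

/-- The conjugate polynomial `φ̃` of a monic degree-`m` polynomial `φ` with `φ(0) ≠ 0` over the
field with `q²` elements: if `φ(X) = X^m + α_{m-1}X^{m-1} + ⋯ + α_1 X + α_0` then
`φ̃(X) = X^m + (α_1/α_0)^q X^{m-1} + ⋯ + (α_{m-1}/α_0)^q X + (1/α_0)^q`. -/
noncomputable def tilde (q : ℕ) {F : Type} [Field F] (φ : Polynomial F) : Polynomial F :=
  Polynomial.X ^ φ.natDegree +
    ∑ j ∈ Finset.range φ.natDegree,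
      Polynomial.C ((φ.coeff (φ.natDegree - j) / φ.coeff 0) ^ q) * Polynomial.X ^ j

open Function Polynomial

/-! ### The zeta-function computation -/

/-- The points `-u (-1/q)^s` at which the Euler product is evaluated. -/
noncomputable def evalPt (q : ℕ) (u : ℝ) (s : ℕ) : ℝ := -u * (-1 / (q : ℝ)) ^ s

lemma evalPt_zero (q : ℕ) (u : ℝ) : evalPt q u 0 = -u := by simp [evalPt]

lemma mul_evalPt_succ {q : ℕ} (hq : 2 ≤ q) (u : ℝ) (s : ℕ) :
    q * evalPt q u (s + 1) = -evalPt q u s := by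
  have : (q : ℝ) ≠ 0 := by positivity
  simp only [evalPt, pow_succ]
  field_simp

lemma abs_evalPt {q : ℕ} {u : ℝ} (hu : 0 < u) (s : ℕ) :
    |evalPt q u s| = u * (1 / (q : ℝ)) ^ s := by
  rw [evalPt, abs_mul, abs_neg, abs_of_pos hu, abs_pow, abs_div, abs_neg, abs_one, Nat.abs_cast]

lemma abs_evalPt_lt_one {q : ℕ} (hq : 2 ≤ q) {u : ℝ} (hu : 0 < u) (hu1 : u < 1) (s : ℕ) :
    |evalPt q u s| < 1 := by
  rw [abs_evalPt hu]
  have : (1 / (q : ℝ)) ^ s ≤ 1 := by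
    apply pow_le_one₀ (by positivity)
    rw [div_le_one (by positivity)]
    exact_mod_cast (by omega : 1 ≤ q)
  nlinarith

/-- The points of period dividing `N` of a map with `q ^ N - (-1) ^ N` of them contribute the
Taylor coefficients of `log ((1 + w) / (1 - q w))`. -/
lemma hasSum_fixed_points {q : ℕ} {w : ℝ} (h1 : |w| < 1) (h2 : |q * w| < 1) :
    HasSum (fun n : ℕ => ((q : ℝ) ^ (n + 1) - (-1) ^ (n + 1)) * (w ^ (n + 1) / (n + 1)))
      (Real.log (1 + w) - Real.log (1 - q * w)) := by
  have a := Real.hasSum_pow_div_log_of_abs_lt_one h2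
  have b := Real.hasSum_pow_div_log_of_abs_lt_one (x := -w) (by simpa using h1)
  have := a.sub b
  convert! this using 1
  · ext n
    rw [mul_pow, neg_pow w]
    ring
  · simp; ring

/-- The terms `w ^ n / n` over the multiples `n` of `m` sum to `-log (1 - w ^ m) / m`. -/
lemma hasSum_multiples {m : ℕ} (hm : 0 < m) {w : ℝ} (h1 : |w| < 1) :
    HasSum (fun n : ℕ => if m ∣ n + 1 then w ^ (n + 1) / ((n : ℝ) + 1) else 0)
      (-Real.log (1 - w ^ m) / m) := by
  have hinj : Injective (fun k : ℕ => m * (k + 1) - 1) := by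
    intro a b hab
    have ha : 0 < m * (a + 1) := by positivity
    have hb : 0 < m * (b + 1) := by positivity
    have : m * (a + 1) = m * (b + 1) := by simp only at hab; omega
    have := Nat.eq_of_mul_eq_mul_left hm this
    omega
  rw [← hinj.hasSum_iff]
  · have hw : |w ^ m| < 1 := by
      rw [abs_pow]; exact pow_lt_one₀ (abs_nonneg _) h1 hm.ne'
    have := (Real.hasSum_pow_div_log_of_abs_lt_one hw).div_const (m : ℝ)
    convert! this using 1
    ext k
    have hk : m * (k + 1) - 1 + 1 = m * (k + 1) :=
      Nat.sub_add_cancel (by have : 0 < m * (k + 1) := by positivity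
                             omega)
    have hk' : ((m * (k + 1) - 1 : ℕ) : ℝ) + 1 = m * (k + 1) := by exact_mod_cast hk
    simp only [Function.comp, hk, hk', dvd_mul_right, if_true, pow_mul, div_div]
    rw [mul_comm (m : ℝ)]
  · intro n hn
    rw [if_neg]
    rintro ⟨k, hk⟩
    apply hn
    refine ⟨k - 1, ?_⟩
    have : k ≠ 0 := by rintro rfl; simp at hk
    simp only [Nat.sub_add_cancel (Nat.pos_of_ne_zero this), ← hk]
    rfl

set_option maxHeartbeats 1000000 in
open Classical in
/-- The zeta-function computation. Let all points of `σ` be periodic, with `q ^ N - (-1) ^ N` points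
of period dividing `N`, and let `g` be the quotient map to the set `T` of cycles, where the cycle
`c` has length `M c`. Then the Euler products over the cycles at the points `evalPt q u (s + 1)`
multiply to `1 - u`: up to sign, both logarithms are the sum of `w ^ n / n`, `w = evalPt q u (s + 1)`,
over the triples of a point `x`, an exponent `n ≥ 1` with `σ^[n] x = x` and an `s`, summed over `x`
first on one side and over `n` first on the other. -/
theorem hasSum_log_cycles {X T : Type*} (σ : X → X) (q : ℕ) (hq : 2 ≤ q)
    (hfix : ∀ N, 0 < N → (Nat.card (ptsOfPeriod σ N) : ℝ) = (q : ℝ) ^ N - (-1) ^ N)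
    (M : T → ℕ) (hM : ∀ c, 0 < M c) (g : X → T) (hg : ∀ x, minimalPeriod σ x = M (g x))
    (hcard : ∀ c, Nat.card (g ⁻¹' {c}) = M c) (u : ℝ) (hu0 : 0 < u) (hu1 : u < 1) :
    HasSum (fun p : T × ℕ => Real.log (1 - evalPt q u (p.2 + 1) ^ M p.1)) (Real.log (1 - u)) := by
  have hq0 : (0 : ℝ) < q := by positivity
  have hq2 : (2 : ℝ) ≤ q := by exact_mod_cast hq
  have hlt := abs_evalPt_lt_one hq hu0 hu1
  have hc_pos : ∀ N, 0 < N → 0 < (q : ℝ) ^ N - (-1) ^ N := by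
    intro N hN
    have h1 : (1 : ℝ) < (q : ℝ) ^ N := one_lt_pow₀ (by linarith) hN.ne'
    have h2 : |(-1 : ℝ) ^ N| = 1 := by simp
    have := le_abs_self ((-1 : ℝ) ^ N)
    linarith
  have hc_le : ∀ N, (q : ℝ) ^ N - (-1) ^ N ≤ 2 * (q : ℝ) ^ N := by
    intro N
    have h1 : (1 : ℝ) ≤ (q : ℝ) ^ N := one_le_pow₀ (by linarith)
    have h2 : |(-1 : ℝ) ^ N| = 1 := by simp
    have := neg_abs_le ((-1 : ℝ) ^ N)
    linarith
  have hfin : ∀ N, 0 < N → Finite (ptsOfPeriod σ N) := by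
    intro N hN
    apply Nat.finite_of_card_ne_zero
    have := hc_pos N hN
    rw [← hfix N hN] at this
    exact_mod_cast this.ne'
  set W := evalPt q u with hW
  let G : (ℕ × ℕ) × X → ℝ := fun p =>
    if σ^[p.1.2 + 1] p.2 = p.2 then W (p.1.1 + 1) ^ (p.1.2 + 1) / ((p.1.2 : ℝ) + 1) else 0
  have hind : ∀ (N : ℕ), 0 < N → ∀ a : ℝ,
      HasSum (fun x : X => if σ^[N] x = x then a else 0) (((q : ℝ) ^ N - (-1) ^ N) * a) := by
    intro N hN a
    have := hfin N hN
    have hs : HasSum (fun _ : ptsOfPeriod σ N => a) (((q : ℝ) ^ N - (-1) ^ N) * a) := by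
      have := Fintype.ofFinite (ptsOfPeriod σ N)
      convert! hasSum_fintype (fun _ : ptsOfPeriod σ N => a) using 1
      rw [← hfix N hN]
      simp
    have := (hasSum_subtype_iff_indicator (s := ptsOfPeriod σ N) (f := fun _ : X => a)).1 hs
    exact this
  have hGsum : Summable G := by
    rw [← summable_norm_iff]
    rw [summable_prod_of_nonneg (fun p => norm_nonneg _)]
    have key : ∀ p : ℕ × ℕ, HasSum (fun x => ‖G (p, x)‖)
        (((q : ℝ) ^ (p.2 + 1) - (-1) ^ (p.2 + 1)) * ‖W (p.1 + 1) ^ (p.2 + 1) / ((p.2 : ℝ) + 1)‖) := by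
      intro p
      convert! hind (p.2 + 1) (Nat.succ_pos _) (‖W (p.1 + 1) ^ (p.2 + 1) / ((p.2 : ℝ) + 1)‖) using 1
      ext x
      simp only [G]
      split_ifs <;> simp
    refine ⟨fun p => (key p).summable, ?_⟩
    simp_rw [fun p => (key p).tsum_eq]
    -- `q ^ n * |W (s + 1)| ^ n = |W s| ^ n ≤ (u / 2 ^ s) ^ n`, as `q ≥ 2`
    have hdom : Summable (fun p : ℕ × ℕ => (1 / 2 : ℝ) ^ p.1 * (2 * u ^ p.2)) :=
      (summable_geometric_of_lt_one (by norm_num) (by norm_num)).mul_of_nonneg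
        ((summable_geometric_of_lt_one hu0.le hu1).mul_left 2) (fun _ => by positivity)
        (fun _ => by positivity)
    refine hdom.of_nonneg_of_le (fun p => mul_nonneg (hc_pos _ (Nat.succ_pos _)).le
      (norm_nonneg _)) ?_
    rintro ⟨s, n⟩
    simp only
    have e1 : ‖W (s + 1) ^ (n + 1) / ((n : ℝ) + 1)‖ ≤ |W (s + 1)| ^ (n + 1) := by
      rw [norm_div, norm_pow, Real.norm_eq_abs]
      apply div_le_self (by positivity)
      rw [Real.norm_eq_abs, abs_of_pos (by positivity)]
      linarith [(Nat.cast_nonneg n : (0 : ℝ) ≤ n)]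
    have e2 : (q : ℝ) * |W (s + 1)| = |W s| := by
      rw [← abs_neg (W s), hW, ← mul_evalPt_succ hq, abs_mul, abs_of_pos hq0]
    have e3 : |W s| ≤ u * (1 / 2) ^ s := by
      rw [hW, abs_evalPt hu0]
      gcongr
    have e4 : ((1 / 2 : ℝ) ^ s) ^ (n + 1) ≤ (1 / 2) ^ s :=
      pow_le_of_le_one (by positivity) (pow_le_one₀ (by norm_num) (by norm_num)) (by omega)
    calc _ ≤ 2 * (q : ℝ) ^ (n + 1) * |W (s + 1)| ^ (n + 1) := by
            gcongr
            exact hc_le _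
      _ = 2 * |W s| ^ (n + 1) := by rw [← e2]; ring
      _ ≤ 2 * (u * (1 / 2) ^ s) ^ (n + 1) := by gcongr
      _ = 2 * (u ^ (n + 1) * ((1 / 2) ^ s) ^ (n + 1)) := by rw [mul_pow]
      _ ≤ 2 * (u ^ n * (1 / 2) ^ s) := by
            gcongr ?_ * (?_ * ?_)
            · exact pow_le_pow_of_le_one hu0.le hu1.le (by omega)
      _ = _ := by ring
  have hGval : HasSum G (-Real.log (1 - u)) := by
    obtain ⟨V, h1⟩ := hGsum
    have h2 : HasSum (fun p : ℕ × ℕ => ((q : ℝ) ^ (p.2 + 1) - (-1) ^ (p.2 + 1)) *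
        (W (p.1 + 1) ^ (p.2 + 1) / ((p.2 : ℝ) + 1))) V :=
      h1.prod_fiberwise (fun p => hind (p.2 + 1) (Nat.succ_pos _) _)
    have h3 : HasSum (fun s : ℕ => Real.log (1 + evalPt q u (s + 1)) -
        Real.log (1 - q * evalPt q u (s + 1))) V :=
      h2.prod_fiberwise (fun s => hasSum_fixed_points (hlt (s + 1)) (by
        rw [mul_evalPt_succ hq, abs_neg]; exact hlt s))
    -- the series over `s` telescopes because `q * W (s + 1) = -W s`
    have h4 := h3.tendsto_sum_nat
    have h5 : ∀ k, ∑ s ∈ Finset.range k,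
        (Real.log (1 + evalPt q u (s + 1)) - Real.log (1 - q * evalPt q u (s + 1)))
        = Real.log (1 + W k) - Real.log (1 - u) := by
      intro k
      simp_rw [mul_evalPt_succ hq, sub_neg_eq_add]
      rw [Finset.sum_range_sub (fun s => Real.log (1 + evalPt q u s)), evalPt_zero]
      rfl
    simp_rw [h5] at h4
    have hW0 : Filter.Tendsto W Filter.atTop (nhds 0) := by
      have : Filter.Tendsto (fun s => (-1 / (q : ℝ)) ^ s) Filter.atTop (nhds 0) := by
        apply tendsto_pow_atTop_nhds_zero_of_abs_lt_one
        rw [abs_div, abs_neg, abs_one, abs_of_pos hq0, div_lt_one hq0]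
        linarith
      have h := this.const_mul (-u)
      rwa [mul_zero] at h
    have h6 : Filter.Tendsto (fun k => Real.log (1 + W k) - Real.log (1 - u)) Filter.atTop
        (nhds (Real.log (1 + 0) - Real.log (1 - u))) :=
      ((hW0.const_add 1).log (by norm_num)).sub_const _
    rw [tendsto_nhds_unique h4 h6] at h1
    simpa using h1
  let e : (X × ℕ) × ℕ ≃ (ℕ × ℕ) × X :=
    ⟨fun p => ((p.1.2, p.2), p.1.1), fun p => ((p.2, p.1.1), p.1.2), fun _ => rfl, fun _ => rfl⟩
  -- summing over `n` first, which runs through the multiples of the period of `x`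
  have hX := (e.hasSum_iff.2 hGval).prod_fiberwise
    (g := fun p => -Real.log (1 - W (p.2 + 1) ^ minimalPeriod σ p.1) / minimalPeriod σ p.1) (by
      rintro ⟨x, s⟩
      convert! hasSum_multiples (m := minimalPeriod σ x) (by rw [hg]; exact hM _) (hlt (s + 1))
        using 1
      ext n
      simp only [G, Function.comp, e, Equiv.coe_fn_mk]
      congr 1
      rw [← isPeriodicPt_iff_minimalPeriod_dvd]
      rfl)
  -- each cycle of length `m` contributes `m` equal terms `-log (1 - w ^ m) / m`
  have hT := (hX.tsum_fiberwise (Prod.map g (id : ℕ → ℕ))).neg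
  rw [neg_neg] at hT
  convert! hT using 1
  ext ⟨c, s⟩
  have hc : ∀ b : Prod.map g (id : ℕ → ℕ) ⁻¹' {(c, s)},
      -Real.log (1 - W (b.1.2 + 1) ^ minimalPeriod σ b.1.1) / minimalPeriod σ b.1.1
        = -Real.log (1 - W (s + 1) ^ M c) / M c := by
    rintro ⟨⟨x, t⟩, hb⟩
    simp only [Set.mem_preimage, Prod.map_apply, id, Set.mem_singleton_iff, Prod.mk.injEq] at hb
    obtain ⟨rfl, rfl⟩ := hb
    rw [hg]
  rw [tsum_congr hc, tsum_const]
  have : Nat.card (Prod.map g (id : ℕ → ℕ) ⁻¹' {(c, s)}) = M c := by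
    rw [← hcard c, ← Set.singleton_prod_singleton, Set.preimage_prod_map_prod, Nat.card_coe_set_eq,
      Set.ncard_prod]
    simp
  rw [this]
  have := hM c
  simp only [nsmul_eq_mul]
  field_simp

/-! ### The map `x ↦ x^{-q}` and its cycles -/

section Algebra

/-- The map `x ↦ x^{-q}` on the units of a field. Over a field with `q²` elements its square is the
Frobenius map. -/
def dualFrob (q : ℕ) (K : Type*) [Field K] (x : Kˣ) : Kˣ := (x ^ q)⁻¹

lemma dualFrob_iterate (q : ℕ) (K : Type*) [Field K] (n : ℕ) (x : Kˣ) :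
    (dualFrob q K)^[n] x = x ^ ((-(q : ℤ)) ^ n) := by
  induction n with
  | zero => simp
  | succ n ih =>
    rw [iterate_succ_apply', ih, dualFrob, pow_succ, zpow_mul, zpow_neg, zpow_natCast]

lemma dualFrob_iterate_two_mul (q : ℕ) (K : Type*) [Field K] (n : ℕ) (x : Kˣ) :
    ((dualFrob q K)^[2 * n] x : K) = (x : K) ^ (q ^ 2) ^ n := by
  rw [dualFrob_iterate, pow_mul, neg_sq]
  rw [show (((q : ℤ) ^ 2) ^ n) = (((q ^ 2) ^ n : ℕ) : ℤ) by push_cast; rfl, zpow_natCast,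
    Units.val_pow_eq_pow_val]

variable {F : Type} [Field F] [Fintype F] {q : ℕ} (hF : Fintype.card F = q ^ 2)
variable {K : Type} [Field K] [Algebra F K]

include hF in
lemma one_lt_of_card : 1 < q := by
  have := Fintype.one_lt_card (α := F)
  rw [hF] at this
  by_contra h
  interval_cases q <;> simp at this

include hF in
lemma natCast_eq_zero_of_card : (q : K) = 0 := by
  have h : ((Fintype.card F : ℕ) : F) = 0 := Nat.cast_card_eq_zero F
  rw [hF] at h
  have h2 : (q : F) = 0 := by simpa using h
  rw [← map_natCast (algebraMap F K), h2, map_zero]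

include hF in
lemma card_ptsOfPeriod_dualFrob [IsAlgClosed K] {N : ℕ} (hN : 0 < N) :
    (Nat.card (ptsOfPeriod (dualFrob q K) N) : ℝ) = (q : ℝ) ^ N - (-1) ^ N := by
  have hq := one_lt_of_card hF
  have hqK : (q : K) = 0 := natCast_eq_zero_of_card hF
  -- the points of period `N` are the roots of unity of order `q ^ N + 1` or `q ^ N - 1`
  have key : ∀ m : ℕ, m ≠ 0 → (m : K) ≠ 0 →
      (∀ x : Kˣ, (dualFrob q K)^[N] x = x ↔ x ^ m = 1) →
      Nat.card (ptsOfPeriod (dualFrob q K) N) = m := by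
    intro m hm0 hm h
    have : NeZero (m : K) := ⟨hm⟩
    have : NeZero m := ⟨hm0⟩
    rw [← HasEnoughRootsOfUnity.natCard_rootsOfUnity K m]
    apply Nat.card_congr
    exact Equiv.subtypeEquivRight h
  have hqN : 1 < q ^ N := Nat.one_lt_pow hN.ne' hq
  rcases Nat.even_or_odd N with he | ho
  · rw [key (q ^ N - 1) (by omega)]
    · rw [Nat.cast_sub hqN.le, he.neg_one_pow]; simp
    · rw [Nat.cast_sub hqN.le]; simp [hqK, hN.ne']
    · intro x
      rw [dualFrob_iterate, he.neg_pow, ← Nat.cast_pow, zpow_natCast]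
      conv_lhs => rw [← Nat.sub_add_cancel hqN.le, pow_succ]
      simp
  · rw [key (q ^ N + 1) (by omega)]
    · rw [ho.neg_one_pow]; simp
    · simp [hqK, hN.ne']
    · intro x
      rw [dualFrob_iterate, ho.neg_pow, ← Nat.cast_pow, zpow_neg, zpow_natCast, pow_succ,
        inv_eq_iff_mul_eq_one]

variable [IsAlgClosed K] [Algebra.IsAlgebraic F K]

omit [IsAlgClosed K] in
include hF in
lemma mem_periodicPts_dualFrob (x : Kˣ) : x ∈ periodicPts (dualFrob q K) := by
  have hq := one_lt_of_card hF
  have hx : IsIntegral F (x : K) := Algebra.IsIntegral.isIntegral _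
  have : FiniteDimensional F (IntermediateField.adjoin F {(x : K)}) :=
    IntermediateField.adjoin.finiteDimensional hx
  set E := IntermediateField.adjoin F {(x : K)} with hE
  have : Finite E := Module.finite_of_finite F
  have := Fintype.ofFinite E
  refine mk_mem_periodicPts (n := 2 * Module.finrank F E)
    (by have := Module.finrank_pos (R := F) (M := E); omega) ?_
  apply Units.ext
  rw [dualFrob_iterate_two_mul, ← hF, ← Nat.card_eq_fintype_card, ← Module.natCard_eq_pow_finrank,
    Nat.card_eq_fintype_card]
  have := FiniteField.pow_card (⟨x, IntermediateField.mem_adjoin_simple_self F _⟩ : E)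
  exact congrArg (algebraMap E K) this

include hF in
/-- The roots of an irreducible polynomial over a finite field form one Frobenius orbit. -/
lemma minpoly_eq_iff (x y : Kˣ) :
    minpoly F (y : K) = minpoly F (x : K) ↔ ∃ k, y = (dualFrob q K)^[2 * k] x := by
  constructor
  · intro h
    have hx : IsIntegral F (x : K) := Algebra.IsIntegral.isIntegral _
    have : FiniteDimensional F (IntermediateField.adjoin F {(x : K)}) :=
      IntermediateField.adjoin.finiteDimensional hx
    set E := IntermediateField.adjoin F {(x : K)} with hE
    have : Finite E := Module.finite_of_finite F
    have : IsAlgClosure F K := ⟨inferInstance, inferInstance⟩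
    have : Normal F K := inferInstance
    obtain ⟨s, hs⟩ := isConjRoot_iff_exists_algEquiv.1 (show IsConjRoot F (y : K) (x : K) from h)
    obtain ⟨k, hk⟩ := (FiniteField.bijective_frobeniusAlgEquivOfAlgebraic_pow F E).2
      (s.restrictNormal E)
    refine ⟨k, Units.ext ?_⟩
    rw [dualFrob_iterate_two_mul, ← hF]
    have h1 := s.restrictNormal_commutes E ⟨x, IntermediateField.mem_adjoin_simple_self F _⟩
    rw [← hk] at h1
    simp only [AlgEquiv.coe_pow, FiniteField.coe_frobeniusAlgEquivOfAlgebraic_iterate] at h1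
    rw [← hs]
    exact h1.symm
  · rintro ⟨k, rfl⟩
    rw [dualFrob_iterate_two_mul, ← hF]
    have := minpoly.algEquiv_eq (FiniteField.frobeniusAlgEquivOfAlgebraic F K ^ k) (x : K)
    rw [AlgEquiv.coe_pow, FiniteField.coe_frobeniusAlgEquivOfAlgebraic_iterate] at this
    exact this

lemma card_orbit {X : Type*} (f : X → X) (x : X) (hx : x ∈ periodicPts f) :
    Nat.card {y | ∃ k, y = f^[k] x} = minimalPeriod f x := by
  have hpos := minimalPeriod_pos_of_mem_periodicPts hx
  have : {y | ∃ k, y = f^[k] x} = (f^[·] x) '' Set.Iio (minimalPeriod f x) := by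
    ext y
    constructor
    · rintro ⟨k, rfl⟩
      exact ⟨k % minimalPeriod f x, Nat.mod_lt _ hpos, iterate_mod_minimalPeriod_eq⟩
    · rintro ⟨k, -, rfl⟩
      exact ⟨k, rfl⟩
  rw [this, Nat.card_image_of_injOn iterate_injOn_Iio_minimalPeriod]
  simp

include hF in
/-- The degree of an irreducible polynomial is the size of the Frobenius orbit of a root. -/
lemma natDegree_minpoly (x : Kˣ) :
    (minpoly F (x : K)).natDegree = minimalPeriod (dualFrob q K)^[2] x := by
  have hx : IsIntegral F (x : K) := Algebra.IsIntegral.isIntegral _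
  have hper : x ∈ periodicPts (dualFrob q K)^[2] := by
    obtain ⟨n, hn, h⟩ := mem_periodicPts.1 (mem_periodicPts_dualFrob hF x)
    exact mk_mem_periodicPts hn (h.iterate 2)
  rw [← card_orbit _ _ hper, ← card_rootSet_eq_natDegree (K := K) (p := minpoly F (x : K))
    (PerfectField.separable_of_irreducible (minpoly.irreducible hx))
    (IsAlgClosed.splits _), ← Nat.card_eq_fintype_card]
  symm
  refine Nat.card_congr (Equiv.ofBijective (fun y => ⟨(y.1 : K), ?_⟩) ⟨?_, ?_⟩)
  · obtain ⟨y, k, rfl⟩ := y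
    rw [mem_rootSet]
    refine ⟨minpoly.ne_zero hx, ?_⟩
    rw [← (minpoly_eq_iff hF x ((dualFrob q K)^[2] ^[k] x)).2 ⟨k, by rw [← iterate_mul]⟩]
    exact minpoly.aeval _ _
  · intro a b hab
    exact Subtype.ext (Units.ext (congrArg Subtype.val hab))
  · rintro ⟨y, hy⟩
    rw [mem_rootSet] at hy
    have h0 : y ≠ 0 := by
      rintro rfl
      have := hy.2
      rw [← coeff_zero_eq_aeval_zero', map_eq_zero] at this
      exact minpoly.coeff_zero_ne_zero hx x.ne_zero this
    have hm : minpoly F ((Units.mk0 y h0 : Kˣ) : K) = minpoly F (x : K) :=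
      (minpoly.eq_of_irreducible_of_monic (minpoly.irreducible hx) hy.2 (minpoly.monic hx)).symm
    obtain ⟨k, hk⟩ := (minpoly_eq_iff hF x _).1 hm
    refine ⟨⟨Units.mk0 y h0, k, by rw [hk, ← iterate_mul]⟩, rfl⟩

include hF in
lemma natDegree_minpoly_dualFrob (x : Kˣ) :
    (minpoly F (dualFrob q K x : K)).natDegree = (minpoly F (x : K)).natDegree := by
  rw [natDegree_minpoly hF, natDegree_minpoly hF,
    minimalPeriod_iterate_eq_div_gcd two_ne_zero, minimalPeriod_iterate_eq_div_gcd two_ne_zero,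
    minimalPeriod_apply (mem_periodicPts_dualFrob hF x)]

omit [Fintype F] in
lemma tilde_monic (φ : F[X]) : (tilde q φ).Monic ∧ (tilde q φ).natDegree = φ.natDegree := by
  have h : (∑ j ∈ Finset.range φ.natDegree,
      C ((φ.coeff (φ.natDegree - j) / φ.coeff 0) ^ q) * X ^ j).degree < (φ.natDegree : WithBot ℕ) := by
    refine (degree_sum_le _ _).trans_lt ?_
    rw [Finset.sup_lt_iff (WithBot.bot_lt_coe _)]
    intro j hj
    exact (degree_C_mul_X_pow_le _ _).trans_lt (by exact_mod_cast Finset.mem_range.1 hj)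
  refine ⟨monic_X_pow_add h, natDegree_eq_of_degree_eq_some ?_⟩
  rw [tilde, degree_add_eq_left_of_degree_lt (by simpa using h), degree_X_pow]

omit [IsAlgClosed K] [Algebra.IsAlgebraic F K] in
include hF in
lemma add_pow_sum (hq : IsPrimePow q) {ι : Type*} (s : Finset ι) (f : ι → K) :
    (∑ i ∈ s, f i) ^ q = ∑ i ∈ s, f i ^ q := by
  obtain ⟨p, k, hp, hk, rfl⟩ := hq
  have hp' := hp.nat_prime
  have : Fact p.Prime := ⟨hp'⟩
  have h0 : (p : K) = 0 := by
    have : ((p ^ k : ℕ) : K) = 0 := natCast_eq_zero_of_card hF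
    simpa [hk.ne'] using this
  have : CharP K p := (CharP.charP_iff_prime_eq_zero hp').2 h0
  exact sum_pow_char_pow p k s f

include hF in
/-- If `x` has minimal polynomial `φ` then `x^{-q}` has minimal polynomial `φ̃`: it is a root of `φ̃`
because `q`-th powers are additive, and both polynomials have the same degree. -/
lemma minpoly_dualFrob (hq : IsPrimePow q) (x : Kˣ) :
    minpoly F (dualFrob q K x : K) = tilde q (minpoly F (x : K)) := by
  have hx : IsIntegral F (x : K) := Algebra.IsIntegral.isIntegral _
  set φ := minpoly F (x : K) with hφ
  have hc : φ.coeff 0 ≠ 0 := minpoly.coeff_zero_ne_zero hx x.ne_zero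
  obtain ⟨hmon, hdeg⟩ := tilde_monic (q := q) φ
  refine (eq_of_monic_of_dvd_of_natDegree_le
    (minpoly.monic (Algebra.IsIntegral.isIntegral _)) hmon (minpoly.dvd F _ ?_)
    (by rw [hdeg, natDegree_minpoly_dualFrob hF])).symm
  have h1 : tilde q φ = ∑ j ∈ Finset.range (φ.natDegree + 1),
      C ((φ.coeff (φ.natDegree - j) / φ.coeff 0) ^ q) * X ^ j := by
    rw [Finset.sum_range_succ, tilde, add_comm]
    simp [div_self hc]
  have h2 : ∑ j ∈ Finset.range (φ.natDegree + 1),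
      algebraMap F K (φ.coeff (φ.natDegree - j)) * ((x : K)⁻¹) ^ j = 0 := by
    have h3 : aeval (x : K) φ = 0 := minpoly.aeval _ _
    rw [aeval_eq_sum_range, ← Finset.sum_range_reflect] at h3
    have h4 := congrArg (· * ((x : K)⁻¹) ^ φ.natDegree) h3
    simp only [zero_mul, Finset.sum_mul] at h4
    rw [← h4]
    refine Finset.sum_congr rfl fun j hj => ?_
    have hj' : j ≤ φ.natDegree := by have := Finset.mem_range.1 hj; omega
    rw [show φ.natDegree + 1 - 1 - j = φ.natDegree - j by omega, Algebra.smul_def, mul_assoc]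
    congr 1
    conv_rhs => rw [show φ.natDegree = (φ.natDegree - j) + j by omega, pow_add]
    rw [Nat.add_sub_cancel, ← mul_assoc, ← mul_pow, mul_inv_cancel₀ x.ne_zero, one_pow, one_mul]
  calc aeval (dualFrob q K x : K) (tilde q φ)
      = ((∑ j ∈ Finset.range (φ.natDegree + 1),
          algebraMap F K (φ.coeff (φ.natDegree - j)) * ((x : K)⁻¹) ^ j)
            / algebraMap F K (φ.coeff 0)) ^ q := by
        rw [h1, map_sum, Finset.sum_div, add_pow_sum hF hq]
        refine Finset.sum_congr rfl fun j _ => ?_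
        simp only [map_mul, aeval_C, map_pow, aeval_X, map_div₀, dualFrob, Units.val_inv_eq_inv_val,
          Units.val_pow_eq_pow_val]
        ring
    _ = 0 := by rw [h2, zero_div, zero_pow hq.pos.ne']

include hF in
/-- With `m` the period of `x` under `σ`, the element `σ x` is `σ^{2k} x` for some `k` exactly when
`m` is odd. -/
lemma tilde_minpoly_eq_iff (hq : IsPrimePow q) (x : Kˣ) :
    tilde q (minpoly F (x : K)) = minpoly F (x : K) ↔ Odd (minimalPeriod (dualFrob q K) x) := by
  have hpos := minimalPeriod_pos_of_mem_periodicPts (mem_periodicPts_dualFrob hF x)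
  rw [← minpoly_dualFrob hF hq, minpoly_eq_iff hF]
  constructor
  · rintro ⟨k, hk⟩
    -- `2 * m`, with `m` the period, is added so that the natural subtraction of `1` is not truncated
    have h1 : IsPeriodicPt (dualFrob q K) (2 * k + 2 * minimalPeriod (dualFrob q K) x - 1)
        (dualFrob q K x) := by
      rw [IsPeriodicPt, IsFixedPt, ← iterate_succ_apply,
        show (2 * k + 2 * minimalPeriod (dualFrob q K) x - 1).succ
          = 2 * k + minimalPeriod (dualFrob q K) x + minimalPeriod (dualFrob q K) x by omega,
        iterate_add_minimalPeriod_eq, iterate_add_minimalPeriod_eq, hk]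
    have h2 := h1.minimalPeriod_dvd
    rw [minimalPeriod_apply (mem_periodicPts_dualFrob hF x)] at h2
    exact Odd.of_dvd_nat ⟨k + minimalPeriod (dualFrob q K) x - 1, by omega⟩ h2
  · rintro ⟨k, hk⟩
    refine ⟨k + 1, ?_⟩
    rw [show 2 * (k + 1) = 1 + minimalPeriod (dualFrob q K) x by omega,
      iterate_add_minimalPeriod_eq]
    rfl

include hF in
/-- The cycle of `x` under `x ↦ x^{-q}` is the set of roots of its minimal polynomial `φ`, of odd
size, if `φ̃ = φ`, and the set of roots of `φ` and `φ̃` otherwise. -/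
lemma minimalPeriod_dualFrob (hq : IsPrimePow q) (x : Kˣ)
    [Decidable (tilde q (minpoly F (x : K)) = minpoly F (x : K))] :
    minimalPeriod (dualFrob q K) x =
      (if tilde q (minpoly F (x : K)) = minpoly F (x : K) then 1 else 2) *
        (minpoly F (x : K)).natDegree := by
  have hpos := minimalPeriod_pos_of_mem_periodicPts (mem_periodicPts_dualFrob hF x)
  have hiff := tilde_minpoly_eq_iff hF hq x
  rw [natDegree_minpoly hF, minimalPeriod_iterate_eq_div_gcd two_ne_zero]
  split_ifs with h
  · rw [hiff] at h
    rw [Nat.Coprime.gcd_eq_one (Nat.coprime_two_right.2 h)]; simp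
  · rw [hiff, Nat.not_odd_iff_even] at h
    rw [Nat.gcd_eq_right h.two_dvd, Nat.mul_div_cancel' h.two_dvd]

omit [Fintype F] in
lemma exists_minpoly_eq {φ : F[X]} (hm : φ.Monic) (hi : Irreducible φ) (hX : φ ≠ X) :
    ∃ x : Kˣ, minpoly F (x : K) = φ := by
  obtain ⟨y, hy⟩ := IsAlgClosed.exists_aeval_eq_zero K φ (degree_pos_of_irreducible hi).ne'
  have h0 : y ≠ 0 := by
    rintro rfl
    rw [← coeff_zero_eq_aeval_zero', map_eq_zero, ← X_dvd_iff] at hy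
    exact hX (eq_of_monic_of_associated hm monic_X
      (irreducible_X.associated_of_dvd hi hy).symm)
  exact ⟨Units.mk0 y h0, (minpoly.eq_of_irreducible_of_monic hi hy hm).symm⟩

omit [Fintype F] [IsAlgClosed K] in
lemma minpoly_spec (x : Kˣ) : (minpoly F (x : K)).Monic ∧ Irreducible (minpoly F (x : K)) ∧
    minpoly F (x : K) ≠ X := by
  have hx : IsIntegral F (x : K) := Algebra.IsIntegral.isIntegral _
  refine ⟨minpoly.monic hx, minpoly.irreducible hx, fun h => ?_⟩
  have := minpoly.coeff_zero_ne_zero hx x.ne_zero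
  simp [h] at this

include hF in
lemma minpoly_dualFrob_iterate (hq : IsPrimePow q) (x : Kˣ) (k : ℕ) :
    minpoly F ((dualFrob q K)^[k] x : K) = minpoly F (x : K) ∨
      minpoly F ((dualFrob q K)^[k] x : K) = tilde q (minpoly F (x : K)) := by
  rcases Nat.even_or_odd' k with ⟨j, rfl | rfl⟩
  · exact Or.inl ((minpoly_eq_iff hF _ _).2 ⟨j, rfl⟩)
  · right
    rw [iterate_succ_apply, ← minpoly_dualFrob hF hq]
    exact (minpoly_eq_iff hF _ _).2 ⟨j, rfl⟩

include hF in
lemma tilde_tilde_minpoly (hq : IsPrimePow q) (x : Kˣ) :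
    tilde q (tilde q (minpoly F (x : K))) = minpoly F (x : K) := by
  rw [← minpoly_dualFrob hF hq, ← minpoly_dualFrob hF hq]
  exact (minpoly_eq_iff hF _ _).2 ⟨1, rfl⟩

include hF in
lemma exists_iterate_iff (hq : IsPrimePow q) (x y : Kˣ) :
    (∃ k, y = (dualFrob q K)^[k] x) ↔ minpoly F (y : K) = minpoly F (x : K) ∨
      minpoly F (y : K) = tilde q (minpoly F (x : K)) := by
  constructor
  · rintro ⟨k, rfl⟩
    exact minpoly_dualFrob_iterate hF hq x k
  · rintro (h | h)
    · obtain ⟨k, hk⟩ := (minpoly_eq_iff hF _ _).1 h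
      exact ⟨_, hk⟩
    · rw [← minpoly_dualFrob hF hq] at h
      obtain ⟨k, hk⟩ := (minpoly_eq_iff hF _ _).1 h
      exact ⟨2 * k + 1, hk⟩

end Algebra

/-! ### The Euler product over `S ∪ R` -/

open Classical in
/-- The set `T` of self-conjugate irreducibles together with the representatives in `R` is in
bijection with the cycles of `x ↦ x^{-q}` on the units of the algebraic closure; hence the Euler
product over `T`. -/
lemma hasSum_log_T (q : ℕ) (hq : IsPrimePow q)
    (F : Type) [Field F] [Fintype F] (hF : Fintype.card F = q ^ 2)
    (K : Type) [Field K] [Algebra F K] [IsAlgClosure F K]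
    (u : ℝ) (hu0 : 0 < u) (hu1 : u < 1) (R : Set F[X])
    (hR : ∀ ψ ∈ R, ψ.Monic ∧ Irreducible ψ ∧ ψ ≠ X ∧ tilde q ψ ≠ ψ)
    (hR2 : ∀ φ : F[X], φ.Monic → Irreducible φ → φ ≠ X →
      tilde q φ ≠ φ → Xor' (φ ∈ R) (tilde q φ ∈ R)) :
    HasSum (fun p : {φ : F[X] // (φ.Monic ∧ Irreducible φ ∧ φ ≠ X ∧ tilde q φ = φ) ∨ φ ∈ R} × ℕ =>
      Real.log (1 - evalPt q u (p.2 + 1) ^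
        ((if tilde q p.1.1 = p.1.1 then 1 else 2) * p.1.1.natDegree))) (Real.log (1 - u)) := by
  have := IsAlgClosure.isAlgClosed (K := K) F
  have := IsAlgClosure.isAlgebraic (R := F) (K := K)
  set P : F[X] → Prop := fun φ => (φ.Monic ∧ Irreducible φ ∧ φ ≠ X ∧ tilde q φ = φ) ∨ φ ∈ R with hP
  have hPspec : ∀ φ, P φ → φ.Monic ∧ Irreducible φ ∧ φ ≠ X := by
    rintro φ (h | h)
    · exact ⟨h.1, h.2.1, h.2.2.1⟩
    · exact ⟨(hR φ h).1, (hR φ h).2.1, (hR φ h).2.2.1⟩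
  have hP_or : ∀ x : Kˣ, ¬ P (minpoly F (x : K)) → P (tilde q (minpoly F (x : K))) := by
    intro x hx
    obtain ⟨h1, h2, h3⟩ := minpoly_spec (F := F) x
    by_cases h : tilde q (minpoly F (x : K)) = minpoly F (x : K)
    · exact absurd (Or.inl ⟨h1, h2, h3, h⟩) hx
    · rcases hR2 _ h1 h2 h3 h with h4 | h4
      · exact absurd (Or.inr h4.1) hx
      · exact Or.inr h4.1
  have hP_tilde : ∀ x : Kˣ, P (minpoly F (x : K)) → P (tilde q (minpoly F (x : K))) →
      tilde q (minpoly F (x : K)) = minpoly F (x : K) := by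
    intro x h1 h2
    by_contra h
    obtain ⟨h3, h4, h5⟩ := minpoly_spec (F := F) x
    have hx : minpoly F (x : K) ∈ R := h1.resolve_left fun h6 => h h6.2.2.2
    have hx' : tilde q (minpoly F (x : K)) ∈ R :=
      h2.resolve_left fun h6 => h (h6.2.2.2.symm.trans (tilde_tilde_minpoly hF hq x))
    rcases hR2 _ h3 h4 h5 h with h6 | h6
    · exact h6.2 hx'
    · exact h6.2 hx
  -- `g` sends `x` to the one of `φ`, `φ̃` lying in `S ∪ R`, where `φ` is the minimal polynomial
  let g : Kˣ → {φ // P φ} := fun x =>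
    if h : P (minpoly F (x : K)) then ⟨_, h⟩ else ⟨_, hP_or x h⟩
  have hg_fib : ∀ x y : Kˣ, ∀ hx : P (minpoly F (x : K)),
      g y = ⟨_, hx⟩ ↔ ∃ k, y = (dualFrob q K)^[k] x := by
    intro x y hx
    rw [exists_iterate_iff hF hq]
    simp only [g]
    split_ifs with hy
    · rw [Subtype.mk.injEq]
      refine ⟨Or.inl, fun h => h.elim id fun h => ?_⟩
      rw [h] at hy
      rw [h, hP_tilde x hx hy]
    · rw [Subtype.mk.injEq]
      constructor
      · intro h
        right
        rw [← h, tilde_tilde_minpoly hF hq]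
      · rintro (h | h)
        · exact absurd (h ▸ hx) hy
        · rw [h, tilde_tilde_minpoly hF hq]
  have hq1 : 2 ≤ q := one_lt_of_card hF
  have hfix : ∀ N, 0 < N → (Nat.card (ptsOfPeriod (dualFrob q K) N) : ℝ) = (q : ℝ) ^ N - (-1) ^ N :=
    fun N hN => card_ptsOfPeriod_dualFrob hF hN
  clear_value g
  refine hasSum_log_cycles (T := {φ // P φ}) (dualFrob q K) q hq1 hfix
    (fun c => (if tilde q c.1 = c.1 then 1 else 2) * c.1.natDegree) ?_ g ?_ ?_ u hu0 hu1
  · intro c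
    have := (hPspec c.1 c.2).2.1.natDegree_pos
    split_ifs <;> simpa using this
  · intro y
    obtain ⟨x, hx⟩ := exists_minpoly_eq (K := K) (hPspec _ (g y).2).1 (hPspec _ (g y).2).2.1
      (hPspec _ (g y).2).2.2
    obtain ⟨k, rfl⟩ := (hg_fib x y (hx ▸ (g y).2)).1 (Subtype.ext hx.symm)
    rw [minimalPeriod_apply_iterate (mem_periodicPts_dualFrob hF x), ← hx,
      minimalPeriod_dualFrob hF hq]
  · rintro ⟨c, hc⟩
    obtain ⟨x, rfl⟩ := exists_minpoly_eq (K := K) (hPspec c hc).1 (hPspec c hc).2.1 (hPspec c hc).2.2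
    rw [← minimalPeriod_dualFrob hF hq, ← card_orbit _ _ (mem_periodicPts_dualFrob hF x)]
    congr! 2
    ext y
    exact hg_fib x y hc

/-- A self-conjugate irreducible polynomial has odd degree. -/
lemma odd_natDegree {q : ℕ} {F : Type} [Field F] [Fintype F] (hF : Fintype.card F = q ^ 2)
    (hq : IsPrimePow q) {φ : F[X]} (h1 : φ.Monic) (h2 : Irreducible φ) (h3 : φ ≠ X)
    (h4 : tilde q φ = φ) : Odd φ.natDegree := by
  classical
  obtain ⟨x, rfl⟩ := exists_minpoly_eq (K := AlgebraicClosure F) h1 h2 h3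
  have h := minimalPeriod_dualFrob hF hq x
  rw [if_pos h4, one_mul] at h
  rw [← h]
  exact (tilde_minpoly_eq_iff hF hq x).1 h4

/-- Lemma 2 of Fulman (unitary groups): with `S` the set of self-conjugate monic irreducibles
`φ ≠ X` over the field of `q²` elements and `R` a set of representatives of the conjugate pairs
`{φ, φ̃}` of non-self-conjugate monic irreducibles `φ ≠ X`,
`[∏_{φ∈S} ∏_{r≥1} (1 + (-1)^r u^{deg φ}/q^{r·deg φ})] ·
 [∏_{φ∈R} ∏_{r≥1} (1 - u^{2·deg φ}/q^{2r·deg φ})] = 1 - u`. -/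
theorem statement16 (q : ℕ) (hq : IsPrimePow q)
    (F : Type) [Field F] [Fintype F] (hF : Fintype.card F = q ^ 2)
    (u : ℝ) (hu0 : 0 < u) (hu1 : u < 1)
    (R : Set (Polynomial F))
    (hR : ∀ ψ ∈ R, ψ.Monic ∧ Irreducible ψ ∧ ψ ≠ Polynomial.X ∧ tilde q ψ ≠ ψ)
    (hR2 : ∀ φ : Polynomial F, φ.Monic → Irreducible φ → φ ≠ Polynomial.X →
      tilde q φ ≠ φ → Xor' (φ ∈ R) (tilde q φ ∈ R)) :
    Multipliable (fun p : {p : Polynomial F × ℕ //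
        (p.1.Monic ∧ Irreducible p.1 ∧ p.1 ≠ Polynomial.X ∧ tilde q p.1 = p.1) ∧ 1 ≤ p.2} =>
      (1 + (-1 : ℝ) ^ p.1.2 * u ^ p.1.1.natDegree / (q : ℝ) ^ (p.1.2 * p.1.1.natDegree))) ∧
    Multipliable (fun p : {p : Polynomial F × ℕ // p.1 ∈ R ∧ 1 ≤ p.2} =>
      (1 - u ^ (2 * p.1.1.natDegree) / (q : ℝ) ^ (2 * p.1.2 * p.1.1.natDegree))) ∧
    (∏' p : {p : Polynomial F × ℕ //
        (p.1.Monic ∧ Irreducible p.1 ∧ p.1 ≠ Polynomial.X ∧ tilde q p.1 = p.1) ∧ 1 ≤ p.2},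
      (1 + (-1 : ℝ) ^ p.1.2 * u ^ p.1.1.natDegree / (q : ℝ) ^ (p.1.2 * p.1.1.natDegree))) *
    (∏' p : {p : Polynomial F × ℕ // p.1 ∈ R ∧ 1 ≤ p.2},
      (1 - u ^ (2 * p.1.1.natDegree) / (q : ℝ) ^ (2 * p.1.2 * p.1.1.natDegree))) = 1 - u := by
  classical
  have hq1 := one_lt_of_card hF
  have hq0 : (q : ℝ) ≠ 0 := by positivity
  have hlt := abs_evalPt_lt_one hq1 hu0 hu1
  have hT := hasSum_log_T q hq F hF (AlgebraicClosure F) u hu0 hu1 R hR hR2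
  set A := {p : Polynomial F × ℕ //
        (p.1.Monic ∧ Irreducible p.1 ∧ p.1 ≠ Polynomial.X ∧ tilde q p.1 = p.1) ∧ 1 ≤ p.2} with hA
  set B := {p : Polynomial F × ℕ // p.1 ∈ R ∧ 1 ≤ p.2} with hB
  -- the factors are indexed by `r ≥ 1`, the points `evalPt q u (s + 1)` by `s = r - 1`
  let e : A ⊕ B → {φ : F[X] // (φ.Monic ∧ Irreducible φ ∧ φ ≠ X ∧ tilde q φ = φ) ∨ φ ∈ R} × ℕ :=
    Sum.elim (fun p => (⟨p.1.1, Or.inl p.2.1⟩, p.1.2 - 1))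
      (fun p => (⟨p.1.1, Or.inr p.2.1⟩, p.1.2 - 1))
  have he : Bijective e := by
    constructor
    · rintro (⟨⟨φ, r⟩, h, hr⟩ | ⟨⟨φ, r⟩, h, hr⟩) (⟨⟨φ', r'⟩, h', hr'⟩ | ⟨⟨φ', r'⟩, h', hr'⟩) heq
      all_goals
        simp only [e, Sum.elim_inl, Sum.elim_inr, Prod.mk.injEq, Subtype.mk.injEq] at heq
        obtain ⟨rfl, h2⟩ := heq
      · obtain rfl : r = r' := by simp only at hr hr'; omega
        rfl
      · exact absurd h.2.2.2 (hR _ h').2.2.2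
      · exact absurd h'.2.2.2 (hR _ h).2.2.2
      · obtain rfl : r = r' := by simp only at hr hr'; omega
        rfl
    · rintro ⟨⟨φ, h | h⟩, s⟩
      · exact ⟨Sum.inl ⟨(φ, s + 1), h, by simp⟩, rfl⟩
      · exact ⟨Sum.inr ⟨(φ, s + 1), h, by simp⟩, rfl⟩
  have hsum := (Equiv.ofBijective e he).hasSum_iff.2 hT
  have hsA := hsum.summable.comp_injective Sum.inl_injective
  have hsB := hsum.summable.comp_injective Sum.inr_injective
  have htot := hsum.unique (hsA.hasSum.sum hsB.hasSum)
  have hpos : ∀ s m : ℕ, m ≠ 0 → 0 < 1 - evalPt q u s ^ m := by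
    intro s m hm
    have h1 : |evalPt q u s ^ m| < 1 := by
      rw [abs_pow]
      exact pow_lt_one₀ (abs_nonneg _) (hlt s) hm
    linarith [(abs_lt.1 h1).2]
  have hfA : ∀ p : A, 0 < (1 + (-1 : ℝ) ^ p.1.2 * u ^ p.1.1.natDegree /
        (q : ℝ) ^ (p.1.2 * p.1.1.natDegree)) ∧
      Real.log (1 + (-1 : ℝ) ^ p.1.2 * u ^ p.1.1.natDegree /
        (q : ℝ) ^ (p.1.2 * p.1.1.natDegree)) =
      ((fun p : {φ : F[X] // (φ.Monic ∧ Irreducible φ ∧ φ ≠ X ∧ tilde q φ = φ) ∨ φ ∈ R} × ℕ =>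
        Real.log (1 - evalPt q u (p.2 + 1) ^
          ((if tilde q p.1.1 = p.1.1 then 1 else 2) * p.1.1.natDegree))) ∘
        (Equiv.ofBijective e he)) (Sum.inl p) := by
    rintro ⟨⟨φ, r⟩, ⟨h1, h2, h3, h4⟩, hr⟩
    simp only at hr
    have hodd : Odd φ.natDegree := odd_natDegree hF hq h1 h2 h3 h4
    have key : 1 + (-1 : ℝ) ^ r * u ^ φ.natDegree / (q : ℝ) ^ (r * φ.natDegree) =
        1 - evalPt q u r ^ φ.natDegree := by
      rw [evalPt, mul_pow, hodd.neg_pow, div_pow, div_pow, ← pow_mul (q : ℝ), ← pow_mul (-1 : ℝ),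
        mul_comm r, pow_mul (-1 : ℝ), hodd.neg_one_pow]
      ring
    have hr1 : r - 1 + 1 = r := by omega
    simp only [key, Function.comp, Equiv.ofBijective_apply, e, Sum.elim_inl, h4, if_true, one_mul, hr1]
    exact ⟨hpos r _ h2.natDegree_pos.ne', trivial⟩
  have hfB : ∀ p : B, 0 < (1 - u ^ (2 * p.1.1.natDegree) /
        (q : ℝ) ^ (2 * p.1.2 * p.1.1.natDegree)) ∧
      Real.log (1 - u ^ (2 * p.1.1.natDegree) / (q : ℝ) ^ (2 * p.1.2 * p.1.1.natDegree)) =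
      ((fun p : {φ : F[X] // (φ.Monic ∧ Irreducible φ ∧ φ ≠ X ∧ tilde q φ = φ) ∨ φ ∈ R} × ℕ =>
        Real.log (1 - evalPt q u (p.2 + 1) ^
          ((if tilde q p.1.1 = p.1.1 then 1 else 2) * p.1.1.natDegree))) ∘
        (Equiv.ofBijective e he)) (Sum.inr p) := by
    rintro ⟨⟨φ, r⟩, h, hr⟩
    simp only at hr h
    obtain ⟨h1, h2, h3, h4⟩ := hR φ h
    have key : u ^ (2 * φ.natDegree) / (q : ℝ) ^ (2 * r * φ.natDegree) =
        evalPt q u r ^ (2 * φ.natDegree) := by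
      rw [pow_mul (evalPt q u r), evalPt, mul_pow, neg_sq, ← pow_mul (-1 / (q : ℝ)), mul_comm r 2,
        pow_mul (-1 / (q : ℝ)), div_pow, neg_one_sq, mul_pow, ← pow_mul u, div_pow, one_pow,
        div_pow, one_pow, ← pow_mul, ← pow_mul, mul_one_div, mul_assoc]
    have hr1 : r - 1 + 1 = r := by omega
    simp only [key, Function.comp, Equiv.ofBijective_apply, e, Sum.elim_inr, h4, if_false, hr1]
    exact ⟨hpos r _ (by have := h2.natDegree_pos; omega), trivial⟩
  have hA1 := Real.hasProd_of_hasSum_log (fun p => (hfA p).1)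
    (by rw [funext fun p => (hfA p).2]; exact hsA.hasSum)
  have hB1 := Real.hasProd_of_hasSum_log (fun p => (hfB p).1)
    (by rw [funext fun p => (hfB p).2]; exact hsB.hasSum)
  refine ⟨hA1.multipliable, hB1.multipliable, ?_⟩
  rw [hA1.tprod_eq, hB1.tprod_eq, ← Real.exp_add]
  exact (congrArg Real.exp htot.symm).trans (Real.exp_log (by linarith))
end

section
/- For every prime power q, letting F be the finite field with q² elements: every monic irreducible polynomial φ ∈ F[X] with φ ≠ X satisfying φ̃ = φ has odd degree. -/
open Polynomial in
/-- If `θ` is a nonzero root of `φ` in a field `L` of (exponential) characteristic `p` and `q = p^k`,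
then `θ^{-q}` is a root of `φ̃`: up to a nonzero factor, `φ̃(θ^{-q})` is `φ(θ)^q`. -/
lemma aeval_tilde_inv_pow (p k : ℕ) {F L : Type} [Field F] [Field L] [Algebra F L] [ExpChar L p]
    (φ : F[X]) (h0 : φ.coeff 0 ≠ 0) (θ : L) (hθ : θ ≠ 0) (hr : aeval θ φ = 0) :
    aeval ((θ⁻¹) ^ (p ^ k)) (tilde (p ^ k) φ) = 0 := by
  have h1 : tilde (p ^ k) φ = ∑ j ∈ Finset.range (φ.natDegree + 1),
      C ((φ.coeff (φ.natDegree - j) / φ.coeff 0) ^ (p ^ k)) * X ^ j := by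
    rw [Finset.sum_range_succ, tilde, add_comm]
    simp [div_self h0]
  have h2 : ∑ j ∈ Finset.range (φ.natDegree + 1),
      algebraMap F L (φ.coeff (φ.natDegree - j) / φ.coeff 0) * θ⁻¹ ^ j
      = (algebraMap F L (φ.coeff 0))⁻¹ * θ⁻¹ ^ φ.natDegree * aeval θ φ := by
    rw [aeval_eq_sum_range, Finset.mul_sum, ← Finset.sum_range_reflect]
    refine Finset.sum_congr rfl fun j hj ↦ ?_
    have hj' : j ≤ φ.natDegree := by simpa [Nat.lt_succ_iff] using hj
    have e1 : φ.natDegree + 1 - 1 - j = φ.natDegree - j := by omega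
    have e2 : φ.natDegree - (φ.natDegree - j) = j := by omega
    have e3 : θ⁻¹ ^ φ.natDegree = θ⁻¹ ^ (φ.natDegree - j) * θ⁻¹ ^ j := by
      rw [← pow_add]; congr 1; omega
    have e4 : θ⁻¹ ^ j * θ ^ j = 1 := by rw [← mul_pow, inv_mul_cancel₀ hθ, one_pow]
    rw [e1, e2, e3, map_div₀, Algebra.smul_def, div_eq_mul_inv]
    linear_combination (-(algebraMap F L (φ.coeff j)) * (algebraMap F L (φ.coeff 0))⁻¹ *
      θ⁻¹ ^ (φ.natDegree - j)) * e4
  have h3 : aeval ((θ⁻¹) ^ (p ^ k)) (tilde (p ^ k) φ) = iterateFrobenius L p k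
      (∑ j ∈ Finset.range (φ.natDegree + 1),
        algebraMap F L (φ.coeff (φ.natDegree - j) / φ.coeff 0) * θ⁻¹ ^ j) := by
    rw [h1, map_sum, map_sum]
    refine Finset.sum_congr rfl fun j _ ↦ ?_
    rw [map_mul, aeval_C, map_pow, map_pow, aeval_X, iterateFrobenius_def, mul_pow, ← pow_mul,
      ← pow_mul, mul_comm j]
  rw [h3, h2, hr, mul_zero, map_zero]

/-- Every `F`-endomorphism `σ` of `L` is a power of the Frobenius, so the Frobenius can only be a
square `σ²` when `[L : F]` is odd. -/
lemma odd_finrank_of_sq_eq_frobenius (F L : Type) [Field F] [Fintype F] [Field L] [Finite L]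
    [Algebra F L] (σ : L →ₐ[F] L) (h : σ ^ 2 = FiniteField.frobeniusAlgHom F L) :
    Odd (Module.finrank F L) := by
  by_contra hodd
  obtain ⟨k, hk⟩ := (Nat.not_odd_iff_even.mp hodd).two_dvd
  have hpos : 0 < Module.finrank F L := Module.finrank_pos
  have hord := FiniteField.orderOf_frobeniusAlgHom F L
  obtain ⟨i, hi⟩ := (FiniteField.bijective_frobeniusAlgHom_pow F L).2 σ
  replace hi : FiniteField.frobeniusAlgHom F L ^ (i : ℕ) = σ := hi
  have h1 : σ ^ Module.finrank F L = 1 := by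
    have h2 := pow_orderOf_eq_one (FiniteField.frobeniusAlgHom F L)
    rw [hord] at h2
    rw [← hi, ← pow_mul, mul_comm, pow_mul, h2, one_pow]
  rw [hk, pow_mul, h] at h1
  have := Nat.le_of_dvd (by omega) (orderOf_dvd_of_pow_eq_one h1)
  omega

/-- Every monic irreducible polynomial `φ ≠ X` over the field with `q²` elements which is
self-conjugate (`φ̃ = φ`) has odd degree. -/
theorem statement17 (q : ℕ) (hq : IsPrimePow q)
    (F : Type) [Field F] [Fintype F] (hF : Fintype.card F = q ^ 2)
    (φ : Polynomial F) (hmo : φ.Monic) (hirr : Irreducible φ)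
    (hX : φ ≠ Polynomial.X) (hself : tilde q φ = φ) :
    Odd φ.natDegree := by
  have h0 : φ.coeff 0 ≠ 0 := fun h ↦ hX <|
    (Polynomial.eq_of_monic_of_associated Polynomial.monic_X hmo
      (Polynomial.irreducible_X.associated_of_dvd hirr (Polynomial.X_dvd_iff.mpr h))).symm
  have : Fact (Irreducible φ) := ⟨hirr⟩
  have : Module.Finite F (AdjoinRoot φ) := hmo.finite_adjoinRoot
  have : Finite (AdjoinRoot φ) := Module.finite_of_finite F
  obtain ⟨p, k, hp, hk, rfl⟩ := hq
  have : Fact p.Prime := ⟨hp.nat_prime⟩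
  have : CharP F p := charP_of_card_eq_prime_pow (f := k * 2) (by rw [hF, pow_mul])
  have : CharP (AdjoinRoot φ) p := charP_of_injective_algebraMap (algebraMap F _).injective p
  have hr : Polynomial.aeval (AdjoinRoot.root φ) φ = 0 := by simp
  have hθ : AdjoinRoot.root φ ≠ 0 := by
    intro h
    rw [h, Polynomial.aeval_def, Polynomial.eval₂_at_zero] at hr
    exact h0 ((map_eq_zero _).mp hr)
  have hroot := aeval_tilde_inv_pow p k φ h0 _ hθ hr
  rw [hself] at hroot
  let σ : AdjoinRoot φ →ₐ[F] AdjoinRoot φ :=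
    AdjoinRoot.liftAlgHom φ (Algebra.ofId F _) ((AdjoinRoot.root φ)⁻¹ ^ (p ^ k)) hroot
  have hσ : σ (AdjoinRoot.root φ) = (AdjoinRoot.root φ)⁻¹ ^ (p ^ k) := by simp [σ]
  have hsq : σ ^ 2 = FiniteField.frobeniusAlgHom F (AdjoinRoot φ) := by
    apply AdjoinRoot.algHom_ext
    rw [pow_two, AlgHom.mul_apply, hσ, map_pow, map_inv₀, hσ, FiniteField.coe_frobeniusAlgHom, hF]
    simp [← pow_mul, pow_two]
  have := odd_finrank_of_sq_eq_frobenius F (AdjoinRoot φ) σ hsq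
  rwa [(AdjoinRoot.powerBasis hirr.ne_zero).finrank, AdjoinRoot.powerBasis_dim] at this
end

section
/- For every real number q > 1 and every real number u: ∏_{r=1}^∞ (1 − u/q^r) = Σ_{i=0}^∞ (−u)^i / ∏_{j=1}^i (q^j − 1), where the infinite product converges and the series converges absolutely (the i = 0 term of the series is 1). -/
/-!
Write `F u = ∑ i, (-u)^i / P i` with `P i = ∏_{j=1}^i (q^j - 1)`. Since `P (i+1) = P i * (q^(i+1) - 1)`,
comparing coefficients gives the functional equation `F u = (1 - u/q) * F (u/q)`, and iterating it
`F u = ∏_{r=1}^n (1 - u/q^r) * F (u/q^n)`. As `n → ∞`, `u/q^n → 0` and `F (u/q^n) → F 0 = 1` by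
dominated convergence (the terms of `F u` dominate), so the partial products converge to `F u`.
-/

open Filter Topology

/-- The `i`-th term of Euler's series, `(-u)^i / ((q-1)(q^2-1)⋯(q^i-1))`. -/
noncomputable def eulerTerm (q u : ℝ) (i : ℕ) : ℝ :=
  (-u) ^ i / ∏ j ∈ Finset.range i, (q ^ (j + 1) - 1)

lemma eulerTerm_zero (q u : ℝ) : eulerTerm q u 0 = 1 := by simp [eulerTerm]

lemma eulerTerm_succ (q u : ℝ) (i : ℕ) :
    eulerTerm q u (i + 1) = -u / (q ^ (i + 1) - 1) * eulerTerm q u i := by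
  simp only [eulerTerm, Finset.prod_range_succ, pow_succ (-u)]
  rw [div_mul_div_comm]
  ring

lemma eulerTerm_div_pow (q u : ℝ) (n i : ℕ) :
    eulerTerm q (u / q ^ n) i = eulerTerm q u i / (q ^ n) ^ i := by
  simp only [eulerTerm, ← neg_div, div_pow]
  rw [div_right_comm]

lemma summable_eulerTerm {q : ℝ} (hq : 1 < q) (u : ℝ) : Summable (eulerTerm q u) := by
  -- The ratio of consecutive terms is `|u| / (q^(n+1) - 1)`, which is eventually at most `1/2`.
  have hlim : Tendsto (fun n : ℕ => q ^ (n + 1)) atTop atTop :=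
    (tendsto_pow_atTop_atTop_of_one_lt hq).comp (tendsto_add_atTop_nat 1)
  refine summable_of_ratio_norm_eventually_le (r := 1 / 2) (by norm_num) ?_
  filter_upwards [hlim.eventually_ge_atTop (2 * |u| + 2)] with n hn
  have hu := abs_nonneg u
  rw [eulerTerm_succ, norm_mul]
  refine mul_le_mul_of_nonneg_right ?_ (norm_nonneg _)
  rw [Real.norm_eq_abs, abs_div, abs_neg, abs_of_pos (by linarith : 0 < q ^ (n + 1) - 1),
    div_le_iff₀ (by linarith)]
  linarith

/-- The functional equation `F u = (1 - u/q) * F (u/q)`. -/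
lemma tsum_eulerTerm_functional {q : ℝ} (hq : 1 < q) (u : ℝ) :
    ∑' i, eulerTerm q u i = (1 - u / q) * ∑' i, eulerTerm q (u / q) i := by
  have hs := summable_eulerTerm hq (u / q)
  have key (i : ℕ) : eulerTerm q u (i + 1) =
      eulerTerm q (u / q) (i + 1) - u / q * eulerTerm q (u / q) i := by
    have h1 : q ^ (i + 1) - 1 ≠ 0 := (sub_pos.2 (one_lt_pow₀ hq i.succ_ne_zero)).ne'
    have h0 : q ≠ 0 := by positivity
    have hd := eulerTerm_div_pow q u 1 i
    rw [pow_one] at hd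
    rw [eulerTerm_succ, eulerTerm_succ, hd]
    field_simp
    ring
  rw [(summable_eulerTerm hq u).tsum_eq_zero_add, eulerTerm_zero, tsum_congr key,
    ((summable_nat_add_iff 1).2 hs).tsum_sub (hs.mul_left _), tsum_mul_left, sub_mul, one_mul]
  have h := hs.tsum_eq_zero_add
  rw [eulerTerm_zero] at h
  linarith

lemma tsum_eulerTerm_eq_prod_mul {q : ℝ} (hq : 1 < q) (u : ℝ) (n : ℕ) :
    ∑' i, eulerTerm q u i =
      (∏ r ∈ Finset.range n, (1 - u / q ^ (r + 1))) * ∑' i, eulerTerm q (u / q ^ n) i := by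
  induction n with
  | zero => simp
  | succ n ih =>
    rw [ih, tsum_eulerTerm_functional hq (u / q ^ n), Finset.prod_range_succ, div_div, ← pow_succ,
      mul_assoc]

lemma tendsto_tsum_eulerTerm {q : ℝ} (hq : 1 < q) (u : ℝ) :
    Tendsto (fun n : ℕ => ∑' i, eulerTerm q (u / q ^ n) i) atTop (𝓝 1) := by
  have hlim : Tendsto (fun n : ℕ => u / q ^ n) atTop (𝓝 0) :=
    tendsto_const_nhds.div_atTop (tendsto_pow_atTop_atTop_of_one_lt hq)
  have h0 : ∑' i, eulerTerm q 0 i = 1 := by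
    rw [tsum_eq_single 0, eulerTerm_zero]
    intro i hi
    simp [eulerTerm, hi]
  rw [← h0]
  refine tendsto_tsum_of_dominated_convergence (summable_eulerTerm hq u).norm (fun i => ?_)
    (Eventually.of_forall fun n i => ?_)
  · have hc : Continuous fun x => eulerTerm q x i := by
      unfold eulerTerm
      fun_prop
    exact (hc.tendsto 0).comp hlim
  · have h1 : 1 ≤ (q ^ n) ^ i := one_le_pow₀ (one_le_pow₀ hq.le)
    rw [eulerTerm_div_pow, norm_div, Real.norm_of_nonneg (by positivity : 0 ≤ (q ^ n) ^ i)]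
    exact div_le_self (norm_nonneg _) h1

lemma multipliable_one_sub_div_pow {q : ℝ} (hq : 1 < q) (u : ℝ) :
    Multipliable (fun r : ℕ => 1 - u / q ^ (r + 1)) := by
  have hg : Summable fun r : ℕ => q⁻¹ ^ r :=
    summable_geometric_of_lt_one (by positivity) (inv_lt_one_of_one_lt₀ hq)
  have hs : Summable fun r : ℕ => -(u / q ^ (r + 1)) := by
    simpa [div_eq_mul_inv] using (((summable_nat_add_iff 1).2 hg).mul_left u).neg
  simpa [sub_eq_add_neg] using multipliable_one_add_of_summable hs.norm

/-- The Euler/Goldman–Rota identity: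
`∏_{r=1}^∞ (1 - u/q^r) = Σ_{i=0}^∞ (-u)^i / ((q-1)(q²-1)⋯(q^i-1))` for real `q > 1` and any
real `u`; the product converges and the series converges absolutely. -/
theorem statement19 (q u : ℝ) (hq : 1 < q) :
    Multipliable (fun r : ℕ => 1 - u / q ^ (r + 1)) ∧
    Summable (fun i : ℕ => |(-u) ^ i / ∏ j ∈ Finset.range i, (q ^ (j + 1) - 1)|) ∧
    ∏' r : ℕ, (1 - u / q ^ (r + 1)) =
      ∑' i : ℕ, (-u) ^ i / ∏ j ∈ Finset.range i, (q ^ (j + 1) - 1) := by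
  have hm := multipliable_one_sub_div_pow hq u
  refine ⟨hm, (summable_eulerTerm hq u).abs, ?_⟩
  have h := hm.hasProd.tendsto_prod_nat.mul (tendsto_tsum_eulerTerm hq u)
  simp only [← tsum_eulerTerm_eq_prod_mul hq u, mul_one] at h
  exact tendsto_nhds_unique h tendsto_const_nhds
end
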